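/- arXiv:1508.04102 — 4 statements merged into one kernel-verified Lean document; each statement's English description precedes it below -/
import Mathlib

section
/- Consider the system of second-order ODEs in ℝⁿ given by ẍᵢ = fᵢ(t, xᵢ, ẋᵢ) + fᵢ^fr(t, xᵢ, ẋᵢ) + fᵢ^int(t, x₁, ẋ₁, …, xₙ, ẋₙ), i = 1,…,n. Assume: (1) each fᵢ and each fᵢ^int is bounded; (2) for each i there exists dᵢ > 0 such that sup{ fᵢ^fr(t, q, p)·p / p² : t ∈ [0,T], q ∈ [aᵢ, bᵢ], p² > dᵢ } < 0; (3) for every t₀ ∈ ℝ and every initial state (x⁰, v⁰) with x⁰ ∈ ∏ⱼ [aⱼ, bⱼ], with xᵢ⁰ ∈ {aᵢ, bᵢ} for at least one index i and with vᵢ⁰ = 0 for every index i for which xᵢ⁰ ∈ {aᵢ, bᵢ}, every solution x(·) of the system with x(t₀) = x⁰, ẋ(t₀) = v⁰ satisfies: there exists ε > 0 such that x(t) ∉ ∏ⱼ [aⱼ, bⱼ] for all t ∈ (t₀, t₀ + ε). Then there exists a solution x : ℝ → ℝⁿ of the system such that xᵢ(t + T) = xᵢ(t) and ẋᵢ(t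 + T) = ẋᵢ(t) for all t and all i, and xᵢ(t) ∈ (aᵢ, bᵢ) for all t ∈ ℝ and all i = 1,…,n. -/
open Set

/-- A pair of functions `(x, v)` is a solution of the system
`ẍᵢ = fᵢ(t, xᵢ, ẋᵢ) + fᵢ^fr(t, xᵢ, ẋᵢ) + fᵢ^int(t, x, ẋ)` on the set `I ⊆ ℝ`. -/
def IsSolution0 (n : ℕ) (f ffr : Fin n → ℝ → ℝ → ℝ → ℝ)
    (fint : Fin n → ℝ → (Fin n → ℝ) → (Fin n → ℝ) → ℝ)
    (x v : ℝ → Fin n → ℝ) (I : Set ℝ) : Prop :=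
  ∀ t ∈ I, ∀ i : Fin n,
    HasDerivAt (fun s => x s i) (v t i) t ∧
    HasDerivAt (fun s => v s i)
      (f i t (x t i) (v t i) + ffr i t (x t i) (v t i) + fint i t (x t) (v t)) t

section BrouwerPart
open MeasureTheory Metric

lemma fo_det_poly {E : Type*} [NormedAddCommGroup E] [NormedSpace ℝ E] [FiniteDimensional ℝ E]
    (B : E →L[ℝ] E) : ∃ p : Polynomial ℝ, p.natDegree ≤ Module.finrank ℝ E ∧
      ∀ t : ℝ, p.eval t = (1 + t • B : E →L[ℝ] E).det := by
  classical
  let b := Module.finBasis ℝ E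
  let N := LinearMap.toMatrix b b (B : E →ₗ[ℝ] E)
  refine ⟨((Polynomial.X : Polynomial ℝ) • N.map (Polynomial.C : ℝ →+* Polynomial ℝ) + (1 : Matrix (Fin (Module.finrank ℝ E)) (Fin (Module.finrank ℝ E)) ℝ).map (Polynomial.C : ℝ →+* Polynomial ℝ)).det, ?_, ?_⟩
  · simpa using Polynomial.natDegree_det_X_add_C_le N 1
  · intro t
    rw [← Polynomial.coe_evalRingHom, RingHom.map_det]
    rw [ContinuousLinearMap.det, ← LinearMap.det_toMatrix b]
    congr 1
    have : ((1 + t • B : E →L[ℝ] E) : E →ₗ[ℝ] E) = LinearMap.id + t • (B : E →ₗ[ℝ] E) := by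
      ext; simp
    have e2 : LinearMap.toMatrix b b (LinearMap.id + t • (B : E →ₗ[ℝ] E)) = 1 + t • N := by
      rw [map_add, map_smul, LinearMap.toMatrix_id]
    rw [this, e2]
    ext i j
    by_cases hij : i = j
    · simp [N, hij]; ring
    · simp [N, hij]; ring

lemma fo_lip_ext {E : Type*} [NormedAddCommGroup E] [NormedSpace ℝ E]
    (φ : E → E) (K : NNReal) (h : LipschitzOnWith K φ (closedBall 0 1))
    (h0 : ∀ x, 1 ≤ ‖x‖ → φ x = 0) : LipschitzWith K φ := by
  have cross : ∀ x y : E, ‖x‖ ≤ 1 → 1 ≤ ‖y‖ → dist (φ x) (φ y) ≤ K * dist x y := by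
    intro x y hx hy
    have hc : ContinuousOn (fun s : ℝ => ‖x + s • (y - x)‖) (Icc 0 1) := by fun_prop
    have := intermediate_value_Icc (zero_le_one) hc
    obtain ⟨s, hs, hs1⟩ := this (show (1 : ℝ) ∈ _ by simp [hx, hy])
    simp only at hs1
    have e1 := h.dist_le_mul x (by simpa using hx) (x + s • (y - x)) (by simpa using hs1.le)
    rw [h0 _ hs1.ge] at e1
    rw [h0 y hy]
    refine e1.trans ?_
    gcongr
    rw [dist_eq_norm, dist_eq_norm]
    have : x - (x + s • (y - x)) = s • (x - y) := by module
    rw [this, norm_smul, Real.norm_of_nonneg hs.1]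
    exact mul_le_of_le_one_left (norm_nonneg _) hs.2
  apply LipschitzWith.of_dist_le_mul
  intro x y
  rcases le_total ‖x‖ 1 with hx | hx <;> rcases le_total ‖y‖ 1 with hy | hy
  · exact h.dist_le_mul x (by simpa using hx) y (by simpa using hy)
  · exact cross x y hx hy
  · rw [dist_comm, dist_comm x]; exact cross y x hy hx
  · rw [h0 x hx, h0 y hy]; simp; positivity

lemma fo_image {E : Type*} [NormedAddCommGroup E] [NormedSpace ℝ E] [CompleteSpace E]
    (φ : E → E) (K : NNReal) (h : LipschitzWith K φ)
    (h0 : ∀ x, 1 ≤ ‖x‖ → φ x = 0) (t : ℝ) (ht : |t| * K < 1) :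
    Function.Injective (fun x => x + t • φ x) ∧
      (fun x => x + t • φ x) '' closedBall 0 1 = closedBall 0 1 := by
  have hinj : Function.Injective (fun x => x + t • φ x) := by
    intro x y hxy
    simp only at hxy
    by_contra hne
    have h1 := h.dist_le_mul x y
    have h2 : dist x y = |t| * dist (φ x) (φ y) := by
      rw [dist_eq_norm, dist_eq_norm, ← Real.norm_eq_abs, ← norm_smul, ← norm_neg]
      congr 1
      rw [smul_sub]
      have : x - y = t • φ y - t • φ x := by
        rw [sub_eq_sub_iff_add_eq_add]; rw [hxy]; abel
      rw [this]; abel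
    have h3 : 0 < dist x y := dist_pos.2 hne
    have : |t| * dist (φ x) (φ y) ≤ |t| * (K * dist x y) := by gcongr
    nlinarith
  have hsurj : Function.Surjective (fun x => x + t • φ x) := by
    intro y
    have hc : ContractingWith (Real.toNNReal |t| * K) (fun x => y - t • φ x) := by
      refine ⟨?_, LipschitzWith.of_dist_le_mul ?_⟩
      · rw [← NNReal.coe_lt_coe]; simpa using ht
      intro u v
      have h1 := h.dist_le_mul u v
      rw [dist_sub_left, dist_eq_norm, ← smul_sub, norm_smul, ← dist_eq_norm, Real.norm_eq_abs]
      calc |t| * dist (φ u) (φ v) ≤ |t| * (K * dist u v) := by gcongr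
        _ = _ := by
          rw [NNReal.coe_mul, Real.coe_toNNReal _ (abs_nonneg t), mul_assoc]
    refine ⟨hc.fixedPoint, ?_⟩
    have := hc.fixedPoint_isFixedPt
    rw [Function.IsFixedPt] at this
    simp only at this ⊢
    nth_rw 1 [← this]
    abel
  refine ⟨hinj, ?_⟩
  have hout : ∀ x, 1 ≤ ‖x‖ → x + t • φ x = x := by
    intro x hx; simp [h0 x hx]
  ext y
  constructor
  · rintro ⟨x, hx, rfl⟩
    by_contra hn
    simp only [mem_closedBall, dist_zero_right, not_le] at hn hx
    have := hinj (a₁ := x + t • φ x) (a₂ := x) (hout _ hn.le)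
    rw [this] at hn
    linarith
  · intro hy
    obtain ⟨x, hx⟩ := hsurj y
    refine ⟨x, ?_, hx⟩
    by_contra hn
    simp only [mem_closedBall, dist_zero_right, not_le] at hn hy
    simp only at hx
    rw [hout x hn.le] at hx
    rw [hx] at hn; linarith

lemma fo_no_retract {E : Type*} [NormedAddCommGroup E] [InnerProductSpace ℝ E]
    [FiniteDimensional ℝ E] [MeasurableSpace E] [BorelSpace E]
    (r : E → E) (U : Set E) (hU : IsOpen U) (hBU : closedBall 0 1 ⊆ U)
    (hr : ContDiffOn ℝ 1 r U) (hr1 : ∀ x ∈ U, ‖r x‖ = 1) (hr2 : ∀ x, ‖x‖ = 1 → r x = x) :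
    False := by
  classical
  let μ : Measure E := volume
  set S : Set E := closedBall 0 1 with hS
  have hScomp : IsCompact S := isCompact_closedBall 0 1
  let B : E → E →L[ℝ] E := fun x => fderiv ℝ r x - 1
  have hBc : ContinuousOn B S :=
    ((hr.continuousOn_fderiv_of_isOpen hU le_rfl).mono hBU).sub continuousOn_const
  let φ : E → E := fun x => if ‖x‖ ≤ 1 then r x - x else 0
  have hφ0 : ∀ x, 1 ≤ ‖x‖ → φ x = 0 := by
    intro x hx
    by_cases h : ‖x‖ ≤ 1
    · simp [φ, h, hr2 x (le_antisymm h hx)]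
    · simp [φ, h]
  have hloc : LocallyLipschitzOn S (fun x => r x - x) := by
    intro x hx
    have hd : ContDiffAt ℝ 1 (fun x => r x - x) x :=
      (hr.contDiffAt (hU.mem_nhds (hBU hx))).sub contDiffAt_id
    obtain ⟨K, t, ht, hK⟩ := hd.exists_lipschitzOnWith
    exact ⟨K, t, mem_nhdsWithin_of_mem_nhds ht, hK⟩
  obtain ⟨K, hK⟩ := hloc.exists_lipschitzOnWith_of_compact hScomp
  have hφS : ∀ x ∈ S, φ x = r x - x := by
    intro x hx
    have : ‖x‖ ≤ 1 := by simpa [hS] using hx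
    simp [φ, this]
  have hφL : LipschitzWith K φ := by
    apply fo_lip_ext φ K _ hφ0
    intro x hx y hy
    rw [hφS x hx, hφS y hy]; exact hK hx hy
  -- uniform smallness
  obtain ⟨C, hC⟩ := hScomp.exists_bound_of_continuousOn hBc
  have hdet1 : ∃ ε > 0, ∀ L : E →L[ℝ] E, ‖L‖ < ε → 0 < (1 + L).det := by
    have hcont : Continuous (fun L : E →L[ℝ] E => (1 + L).det) :=
      ContinuousLinearMap.continuous_det.comp (by fun_prop)
    have h0 : 0 < (1 + (0 : E →L[ℝ] E)).det := by simp [ContinuousLinearMap.det]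
    have := (hcont.tendsto 0).eventually (lt_mem_nhds h0)
    obtain ⟨ε, hε, h⟩ := Metric.eventually_nhds_iff.1 this
    exact ⟨ε, hε, fun L hL => h (by simpa using hL)⟩
  obtain ⟨ε, hε, hdet⟩ := hdet1
  have hC0 : 0 ≤ C := (norm_nonneg _).trans (hC 0 (by simp [hS]))
  obtain ⟨t0, ht0, ht0K, ht0C⟩ : ∃ t0 : ℝ, 0 < t0 ∧ t0 * K < 1 ∧ t0 * C < ε := by
    refine ⟨min (1 / (K + 1)) (ε / (C + 1)), by positivity, ?_, ?_⟩
    · calc min (1 / ((K : ℝ) + 1)) (ε / (C + 1)) * K ≤ 1 / ((K : ℝ) + 1) * K := by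
            gcongr; exact min_le_left _ _
        _ < 1 := by
            rw [div_mul_eq_mul_div, div_lt_one (by positivity)]; linarith
    · calc min (1 / ((K : ℝ) + 1)) (ε / (C + 1)) * C ≤ ε / (C + 1) * C := by
            gcongr; exact min_le_right _ _
        _ < ε := by
            rw [div_mul_eq_mul_div, div_lt_iff₀ (by positivity)]; nlinarith
  have hdcont : ∀ t : ℝ, ContinuousOn (fun x => (1 + t • B x).det) S := by
    intro t
    exact ContinuousLinearMap.continuous_det.comp_continuousOn
      (continuousOn_const.add (hBc.const_smul t))
  have hIntg : ∀ t : ℝ, IntegrableOn (fun x => (1 + t • B x).det) S μ := fun t =>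
    (hdcont t).integrableOn_compact hScomp
  have key : ∀ t : ℝ, 0 ≤ t → t ≤ t0 → ∫ x in S, (1 + t • B x).det ∂μ = (μ S).toReal := by
    intro t ht htt
    have htK : |t| * K < 1 := by
      rw [abs_of_nonneg ht]
      exact (mul_le_mul_of_nonneg_right htt K.coe_nonneg).trans_lt ht0K
    obtain ⟨hinj, himg⟩ := fo_image φ K hφL hφ0 t htK
    have hder : ∀ x ∈ S, HasFDerivWithinAt (fun x => x + t • φ x) (1 + t • B x) S x := by
      intro x hx
      have h1 : HasFDerivAt r (fderiv ℝ r x) x :=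
        ((hr.contDiffAt (hU.mem_nhds (hBU hx))).differentiableAt one_ne_zero).hasFDerivAt
      have h2 : HasFDerivAt (fun x => x + t • (r x - x)) (1 + t • B x) x :=
        (hasFDerivAt_id x).add ((h1.sub (hasFDerivAt_id x)).const_smul t)
      refine h2.hasFDerivWithinAt.congr ?_ ?_
      · intro y hy; simp only [hφS y hy]
      · simp only [hφS x hx]
    have hpos : ∀ x ∈ S, 0 < (1 + t • B x).det := by
      intro x hx
      apply hdet
      rw [norm_smul, Real.norm_of_nonneg ht]
      calc t * ‖B x‖ ≤ t0 * C := by gcongr; exact hC x hx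
        _ < ε := ht0C
    have hcv := lintegral_abs_det_fderiv_eq_addHaar_image μ hScomp.measurableSet hder hinj.injOn
    rw [himg] at hcv
    have hae : 0 ≤ᵐ[μ.restrict S] (fun x => (1 + t • B x).det) := by
      filter_upwards [ae_restrict_mem hScomp.measurableSet] with x hx using (hpos x hx).le
    have h3 := ofReal_integral_eq_lintegral_ofReal (hIntg t) hae
    have h4 : ∫⁻ x in S, ENNReal.ofReal |(1 + t • B x).det| ∂μ
        = ∫⁻ x in S, ENNReal.ofReal ((1 + t • B x).det) ∂μ := by
      apply setLIntegral_congr_fun hScomp.measurableSet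
      intro x hx
      simp only [abs_of_pos (hpos x hx)]
    rw [← h3, ] at h4
    rw [h4] at hcv
    rw [← hS, ] at hcv
    rw [← hcv, ENNReal.toReal_ofReal]
    exact setIntegral_nonneg hScomp.measurableSet (fun x hx => (hpos x hx).le)
  -- Lagrange interpolation
  let d := Module.finrank ℝ E
  let s : Finset ℕ := Finset.range (d + 1)
  let v : ℕ → ℝ := fun k => t0 / (k + 1)
  have hv : InjOn v s := by
    intro i _ j _ hij
    simp only [v] at hij
    have hi : ((i : ℝ) + 1) ≠ 0 := by positivity
    have hj : ((j : ℝ) + 1) ≠ 0 := by positivity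
    rw [div_eq_div_iff hi hj] at hij
    have := mul_left_cancel₀ ht0.ne' hij
    have : (i : ℝ) = j := by linarith
    exact_mod_cast this
  let c : ℕ → ℝ := fun k => (Lagrange.basis s v k).eval 1
  have hc1 : ∑ k ∈ s, c k = 1 := by
    have := congrArg (Polynomial.eval (1 : ℝ)) (Lagrange.sum_basis hv ⟨0, by simp [s]⟩)
    simpa [Polynomial.eval_finsetSum] using this
  have hpt : ∀ x, (1 + (1 : ℝ) • B x).det = ∑ k ∈ s, c k * (1 + v k • B x).det := by
    intro x
    obtain ⟨p, hp, hpe⟩ := fo_det_poly (B x)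
    have hdeg : p.degree < s.card := by
      refine p.degree_le_natDegree.trans_lt ?_
      simp only [s, Finset.card_range]
      exact_mod_cast Nat.lt_succ_of_le hp
    have h1 := congrArg (Polynomial.eval (1 : ℝ)) (Lagrange.eq_interpolate hv hdeg)
    rw [Lagrange.interpolate_apply, Polynomial.eval_finsetSum] at h1
    rw [← hpe, h1]
    apply Finset.sum_congr rfl
    intro k _
    simp only [Polynomial.eval_mul, Polynomial.eval_C, hpe, c]
    ring
  have hzero : ∀ x ∈ S, (1 + (1 : ℝ) • B x).det = 0 := by
    intro x hx
    have hxU := hBU hx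
    have e : (1 + (1 : ℝ) • B x) = fderiv ℝ r x := by simp [B]
    rw [e]
    by_contra hne
    have h1 : HasFDerivAt r (fderiv ℝ r x) x :=
      ((hr.contDiffAt (hU.mem_nhds hxU)).differentiableAt one_ne_zero).hasFDerivAt
    have h2 : HasFDerivAt (fun y => inner ℝ (r y) (r y)) (0 : E →L[ℝ] ℝ) x := by
      refine (hasFDerivAt_const (1 : ℝ) x).congr_of_eventuallyEq ?_
      filter_upwards [hU.mem_nhds hxU] with y hy
      rw [real_inner_self_eq_norm_sq, hr1 y hy]; norm_num
    have h3 := h2.unique (h1.inner ℝ h1)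
    have hunit : IsUnit (LinearMap.det (fderiv ℝ r x : E →ₗ[ℝ] E)) := isUnit_iff_ne_zero.2 hne
    have hunit2 := (LinearMap.isUnit_iff_isUnit_det _).2 hunit
    obtain ⟨w, hw⟩ := ((Module.End.isUnit_iff _).1 hunit2).surjective (r x)
    have hw' : fderiv ℝ r x w = r x := hw
    have h4 := congrArg (fun l : E →L[ℝ] ℝ => l w) h3
    simp [fderivInnerCLM_apply, hw', hr1 x hxU] at h4
    norm_num at h4
  have h5 : ∫ x in S, (1 + (1 : ℝ) • B x).det ∂μ = (μ S).toReal := by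
    simp_rw [hpt]
    rw [integral_finsetSum _ (fun k _ => (hIntg (v k)).const_mul (c k))]
    simp_rw [integral_const_mul]
    have : ∀ k ∈ s, c k * ∫ x in S, (1 + v k • B x).det ∂μ = c k * (μ S).toReal := by
      intro k _
      rw [key (v k) (by positivity)]
      simp only [v]
      exact div_le_self ht0.le (by linarith [(Nat.cast_nonneg k : (0 : ℝ) ≤ k)])
    rw [Finset.sum_congr rfl this, ← Finset.sum_mul, hc1, one_mul]
  rw [setIntegral_congr_fun hScomp.measurableSet hzero] at h5
  simp only [integral_zero] at h5
  have hpos : 0 < (μ S).toReal :=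
    ENNReal.toReal_pos (measure_closedBall_pos μ 0 one_pos).ne' hScomp.measure_lt_top.ne
  linarith

end BrouwerPart

section BrouwerPart2
open MeasureTheory Metric

lemma fo_no_smooth {E : Type*} [NormedAddCommGroup E] [InnerProductSpace ℝ E]
    [FiniteDimensional ℝ E] [MeasurableSpace E] [BorelSpace E]
    (g : E → E) (hg : ContDiff ℝ 1 g) (hg1 : ∀ x, ‖g x‖ ≤ 1)
    (hne : ∀ x, ‖x‖ ≤ 1 → g x ≠ x) : False := by
  let u : E → E := fun x => x - g x
  let p : E → ℝ := fun x => inner ℝ x (u x)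
  let q : E → ℝ := fun x => ‖u x‖ ^ 2
  let D : E → ℝ := fun x => p x ^ 2 + q x * (1 - ‖x‖ ^ 2)
  let U : Set E := {x | 0 < D x} ∩ {x | 0 < q x}
  have hu : ContDiff ℝ 1 u := contDiff_id.sub hg
  have hp : ContDiff ℝ 1 p := contDiff_id.inner ℝ hu
  have hq : ContDiff ℝ 1 q := hu.norm_sq ℝ
  have hD : ContDiff ℝ 1 D := (hp.pow 2).add (hq.mul (contDiff_const.sub (contDiff_id.norm_sq ℝ)))
  let s : E → ℝ := fun x => (-p x + √(D x)) / q x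
  have hq0 : ∀ x, ‖x‖ ≤ 1 → 0 < q x := by
    intro x hx
    have : u x ≠ 0 := sub_ne_zero.2 (hne x hx).symm
    simp only [q]; positivity
  have hp0 : ∀ x, ‖x‖ = 1 → 0 < p x := by
    intro x hx
    have h1 : p x = 1 - inner ℝ x (g x) := by
      simp only [p, u, inner_sub_right, real_inner_self_eq_norm_sq, hx]; norm_num
    have h2 : q x = 1 - 2 * inner ℝ x (g x) + ‖g x‖ ^ 2 := by
      simp only [q, u, norm_sub_sq_real, hx]; norm_num
    have h3 := hq0 x hx.le
    have h4 := hg1 x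
    have h5 := norm_nonneg (g x)
    nlinarith
  refine fo_no_retract (fun x => x + s x • u x) U ?_ ?_ ?_ ?_ ?_
  · exact (isOpen_lt continuous_const hD.continuous).inter
      (isOpen_lt continuous_const hq.continuous)
  · intro x hx
    have hx : ‖x‖ ≤ 1 := by simpa using hx
    refine ⟨?_, hq0 x hx⟩
    rcases hx.lt_or_eq with h | h
    · have : 0 < 1 - ‖x‖ ^ 2 := by nlinarith [norm_nonneg x]
      have := mul_pos (hq0 x hx) this
      simp only [mem_ofPred_eq, D]; nlinarith [sq_nonneg (p x)]
    · have := hp0 x h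
      simp only [mem_ofPred_eq, D, h]; nlinarith
  · refine contDiffOn_id.add (ContDiffOn.smul ?_ hu.contDiffOn)
    refine ContDiffOn.div ((hp.contDiffOn.neg).add ?_) hq.contDiffOn (fun x hx => hx.2.ne')
    exact hD.contDiffOn.sqrt (fun x hx => hx.1.ne')
  · rintro x ⟨h1, h2⟩
    have h1 : 0 < D x := h1
    have h2 : 0 < q x := h2
    have h3 : ‖x + s x • u x‖ ^ 2 = 1 := by
      rw [norm_add_sq_real, inner_smul_right, norm_smul, mul_pow, Real.norm_eq_abs, sq_abs]
      change ‖x‖ ^ 2 + 2 * (s x * p x) + s x ^ 2 * q x = 1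
      have h4 := Real.sq_sqrt h1.le
      have h5 : s x * q x = -p x + √(D x) := by simp only [s]; field_simp
      have h6 : (s x * q x + p x) ^ 2 = D x := by rw [h5]; linear_combination h4
      simp only [D] at h6
      have : q x * (‖x‖ ^ 2 + 2 * (s x * p x) + s x ^ 2 * q x) = q x * 1 := by linarith
      exact mul_left_cancel₀ h2.ne' this
    have := norm_nonneg (x + s x • u x)
    nlinarith
  · intro x hx
    have h1 := hp0 x hx
    have : D x = p x ^ 2 := by simp [D, hx]
    have : s x = 0 := by simp [s, this, Real.sqrt_sq h1.le]
    simp [this]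

lemma fo_brouwer_ball {E : Type*} [NormedAddCommGroup E] [InnerProductSpace ℝ E]
    [FiniteDimensional ℝ E] [MeasurableSpace E] [BorelSpace E]
    (f : E → E) (hf : Continuous f) (hf1 : ∀ x, ‖f x‖ ≤ 1) : ∃ x, f x = x := by
  by_contra! hne
  obtain ⟨x0, hx0, hmin⟩ := (isCompact_closedBall (0 : E) 1).exists_isMinOn ⟨0, by simp⟩
    (hf.sub continuous_id).norm.continuousOn
  set δ := ‖f x0 - x0‖ with hδ
  have hδ0 : 0 < δ := norm_pos_iff.2 (sub_ne_zero.2 (hne x0))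
  obtain ⟨g, hg, hga, -⟩ := hf.exists_contDiff_approx (ε := fun _ => δ / 4) 1 continuous_const
    (fun _ => by positivity)
  have hgn : ∀ x, ‖g x‖ ≤ 1 + δ / 4 := by
    intro x
    have h1 := (hga x).le
    rw [dist_eq_norm] at h1
    calc ‖g x‖ = ‖f x + (g x - f x)‖ := by congr 1; abel
      _ ≤ _ := (norm_add_le _ _).trans (add_le_add (hf1 x) h1)
  have hc : 0 < 1 + δ / 4 := by positivity
  refine fo_no_smooth (fun x => (1 + δ / 4)⁻¹ • g x) (hg.const_smul _) ?_ ?_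
  · intro x
    rw [norm_smul, norm_inv, Real.norm_of_nonneg hc.le]
    rw [inv_mul_le_iff₀ hc]; simpa using hgn x
  · intro x hx heq
    have h1 : g x = (1 + δ / 4) • x := by
      have := congrArg (fun z => (1 + δ / 4) • z) heq
      simpa only [smul_smul, mul_inv_cancel₀ hc.ne', one_smul] using this
    have h2 : δ ≤ ‖f x - x‖ := hmin (by simpa using hx)
    have h3 := hga x
    rw [dist_eq_norm] at h3
    have h4 : f x - x = (δ / 4) • x - (g x - f x) := by rw [h1]; module
    have h5 : ‖f x - x‖ ≤ δ / 4 * 1 + δ / 4 := by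
      rw [h4]
      refine (norm_sub_le _ _).trans (add_le_add ?_ h3.le)
      rw [norm_smul, Real.norm_of_nonneg (by positivity)]
      gcongr
    linarith

lemma fo_brouwer_bdd {ι : Type*} [Fintype ι] (g : (ι → ℝ) → (ι → ℝ)) (hg : Continuous g)
    (R : ℝ) (hR : ∀ x i, |g x i| ≤ R) : ∃ x, g x = x := by
  classical
  let E := EuclideanSpace ℝ ι
  have hb : ∃ R' : ℝ, 0 < R' ∧ ∀ x, ‖(WithLp.toLp 2 (g x) : E)‖ ≤ R' := by
    refine ⟨√(∑ _i : ι, R ^ 2) + 1, by positivity, fun x => ?_⟩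
    rw [EuclideanSpace.norm_eq]
    refine le_trans (Real.sqrt_le_sqrt ?_) (le_add_of_nonneg_right zero_le_one)
    apply Finset.sum_le_sum
    intro i _
    exact pow_le_pow_left₀ (norm_nonneg _) (hR x i) 2
  obtain ⟨R', hR', hb⟩ := hb
  obtain ⟨x, hx⟩ := fo_brouwer_ball (fun x : E => R'⁻¹ • (WithLp.toLp 2 (g (WithLp.ofLp (R' • x))) : E))
    (by fun_prop) (by
      intro x
      rw [norm_smul, norm_inv, Real.norm_of_nonneg hR'.le, inv_mul_le_iff₀ hR', mul_one]
      exact hb _)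
  refine ⟨WithLp.ofLp (R' • x), ?_⟩
  have := congrArg (fun z => WithLp.ofLp (R' • z)) hx
  simp only [smul_smul, mul_inv_cancel₀ hR'.ne', one_smul] at this
  exact this

/-- Poincaré–Miranda theorem on a box (clamped version). -/
lemma fo_miranda {ι : Type*} [Fintype ι] (l u : ι → ℝ) (hlu : ∀ i, l i ≤ u i)
    (G : (ι → ℝ) → (ι → ℝ)) (hG : ContinuousOn G (Icc l u))
    (hu : ∀ x ∈ Icc l u, ∀ i, x i = u i → 0 ≤ G x i)
    (hl : ∀ x ∈ Icc l u, ∀ i, x i = l i → G x i ≤ 0) :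
    ∃ x ∈ Icc l u, ∀ i, G x i = 0 := by
  let c : (ι → ℝ) → (ι → ℝ) := fun x i => max (l i) (min (u i) (x i))
  have hc : Continuous c := by fun_prop
  have hcm : ∀ x, c x ∈ Icc l u := fun x =>
    ⟨fun i => le_max_left _ _, fun i => max_le (hlu i) (min_le_left _ _)⟩
  have hGc : Continuous (fun x => G (c x)) :=
    hG.comp_continuous hc hcm
  obtain ⟨x, hx⟩ := fo_brouwer_bdd (fun x => c (c x - G (c x))) (hc.comp (hc.sub hGc))
    (∑ i, (|l i| + |u i|)) (by
      intro x i
      have h1 := (hcm (c x - G (c x))).1 i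
      have h2 := (hcm (c x - G (c x))).2 i
      have h3 : |l i| + |u i| ≤ ∑ i, (|l i| + |u i|) :=
        Finset.single_le_sum (f := fun i => |l i| + |u i|) (fun i _ => by positivity)
          (Finset.mem_univ i)
      have := abs_le_max_abs_abs h1 h2
      refine this.trans (le_trans (max_le ?_ ?_) h3)
      · linarith [abs_nonneg (u i)]
      · linarith [abs_nonneg (l i)])
  have hxm : x ∈ Icc l u := hx ▸ hcm _
  have hcx : c x = x := by
    funext i
    simp only [c]
    rw [min_eq_right (hxm.2 i), max_eq_right (hxm.1 i)]
  simp only [hcx] at hx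
  refine ⟨x, hxm, fun i => ?_⟩
  have h := congrFun hx i
  simp only [c, Pi.sub_apply] at h
  have h1 := hxm.1 i
  have h2 := hxm.2 i
  have h3 := hu x hxm i
  have h4 := hl x hxm i
  rcases lt_trichotomy (G x i) 0 with h0 | h0 | h0
  · exfalso
    by_cases e : x i = u i
    · linarith [h3 e]
    · have e := lt_of_le_of_ne h2 e
      have := lt_min e (show x i < x i - G x i by linarith)
      have := lt_of_lt_of_le this (le_max_right (l i) _)
      linarith
  · exact h0
  · exfalso
    by_cases e : x i = l i
    · linarith [h4 e]
    · have e := lt_of_le_of_ne h1 (Ne.symm e)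
      have := max_lt e (lt_of_le_of_lt (min_le_right (u i) (x i - G x i)) (by linarith))
      linarith

end BrouwerPart2

section OdePart
open Filter Topology

/-- Clamp a real number to `[lo, hi]`. -/
noncomputable def foCl (lo hi x : ℝ) : ℝ := max lo (min hi x)

lemma foCl_lip (lo hi : ℝ) : LipschitzWith 1 (foCl lo hi) :=
  (LipschitzWith.id.const_min hi).const_max lo

lemma foCl_mem {lo hi : ℝ} (h : lo ≤ hi) (x : ℝ) : foCl lo hi x ∈ Icc lo hi :=
  ⟨le_max_left _ _, max_le h (min_le_left _ _)⟩

lemma foCl_of_mem {lo hi x : ℝ} (h : x ∈ Icc lo hi) : foCl lo hi x = x := by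
  rw [foCl, min_eq_right h.2, max_eq_right h.1]

lemma foCl_of_ge {lo hi x : ℝ} (h : lo ≤ hi) (hx : hi ≤ x) : foCl lo hi x = hi := by
  rw [foCl, min_eq_left hx, max_eq_right h]

lemma foCl_of_le {lo hi x : ℝ} (h : lo ≤ hi) (hx : x ≤ lo) : foCl lo hi x = lo := by
  rw [foCl, min_eq_right (hx.trans h), max_eq_left hx]

lemma foCl_neg (V x : ℝ) (hV : 0 ≤ V) : foCl (-V) V (-x) = -foCl (-V) V x := by
  rcases le_total x (-V) with h | h
  · rw [foCl_of_le (by linarith) h, foCl_of_ge (by linarith) (by linarith)]; ring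
  rcases le_total V x with h' | h'
  · rw [foCl_of_ge (by linarith) h', foCl_of_le (by linarith) (by linarith)]
  · rw [foCl_of_mem ⟨h, h'⟩, foCl_of_mem ⟨by linarith, by linarith⟩]

lemma foCl_pos {V x : ℝ} (hV : 0 < V) (hx : 0 < x) : 0 < foCl (-V) V x :=
  lt_of_lt_of_le (lt_min hV hx) (le_max_right _ _)

lemma foCl_eq_zero {V x : ℝ} (hV : 0 < V) (hx : foCl (-V) V x = 0) : x = 0 := by
  rcases lt_trichotomy x 0 with h | h | h
  · have := foCl_pos hV (show 0 < -x by linarith)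
    rw [foCl_neg _ _ hV.le, hx] at this; simp at this
  · exact h
  · have := foCl_pos hV h
    rw [hx] at this; simp at this

lemma fo_second (x g : ℝ → ℝ) (t0 : ℝ) (hx : ∀ᶠ t in 𝓝 t0, HasDerivAt x (g t) t)
    (hg : ∀ᶠ t in 𝓝[>] t0, 0 < g t) : ∀ᶠ t in 𝓝[>] t0, x t0 < x t := by
  obtain ⟨e, he, h1⟩ := Metric.eventually_nhds_iff.1 hx
  obtain ⟨u, hu, h2⟩ := (mem_nhdsGT_iff_exists_Ioo_subset).1 hg
  have hu : t0 < u := hu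
  have : Ioo t0 (min u (t0 + e)) ∈ 𝓝[>] t0 := Ioo_mem_nhdsGT (lt_min hu (by linarith))
  filter_upwards [this] with t ht
  have ht1 : t < u := ht.2.trans_le (min_le_left _ _)
  have ht2 : t < t0 + e := ht.2.trans_le (min_le_right _ _)
  have hd : ∀ s ∈ Icc t0 t, HasDerivAt x (g s) s := by
    intro s hs
    apply h1
    rw [Real.dist_eq, abs_lt]; constructor <;> linarith [hs.1, hs.2]
  have := strictMonoOn_of_hasDerivWithinAt_pos (convex_Icc t0 t) (f := x) (f' := g)
    (fun s hs => (hd s hs).continuousAt.continuousWithinAt)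
    (fun s hs => (hd s (interior_subset hs)).hasDerivWithinAt)
    (fun s hs => by
      rw [interior_Icc] at hs
      exact h2 ⟨hs.1, hs.2.trans ht1⟩)
  exact this (left_mem_Icc.2 ht.1.le) (right_mem_Icc.2 ht.1.le) ht.1

lemma fo_pos_right (v : ℝ → ℝ) (t0 w : ℝ) (hv : HasDerivAt v w t0) (h0 : v t0 = 0) (hw : 0 < w) :
    ∀ᶠ t in 𝓝[>] t0, 0 < v t := by
  have h1 := (hasDerivAt_iff_tendsto_slope.1 hv).eventually (lt_mem_nhds hw)
  have h2 : 𝓝[>] t0 ≤ 𝓝[≠] t0 := nhdsWithin_mono _ (fun t ht => ne_of_gt ht)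
  filter_upwards [h2 h1, self_mem_nhdsWithin] with t ht1 ht2
  have ht2 : t0 < t := ht2
  rw [slope_def_field, h0, sub_zero] at ht1
  have := sub_pos.2 ht2
  exact (div_pos_iff_of_pos_right this).1 ht1

lemma fo_nomax (x v : ℝ → ℝ) (V : ℝ) (hV : 0 < V) (hx : ∀ t, HasDerivAt x (foCl (-V) V (v t)) t)
    (t0 : ℝ) (hmax : ∀ t, x t ≤ x t0) (w : ℝ) (hv : HasDerivAt v w t0) (hw : v t0 = 0 → 0 < w) :
    False := by
  have h0 : foCl (-V) V (v t0) = 0 :=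
    IsLocalMax.hasDerivAt_eq_zero (Filter.Eventually.of_forall hmax) (hx t0)
  have h1 := foCl_eq_zero hV h0
  have h2 := fo_second x _ t0 (Filter.Eventually.of_forall hx)
    ((fo_pos_right v t0 w hv h1 (hw h1)).mono (fun t ht => foCl_pos hV ht))
  obtain ⟨t, ht⟩ := h2.exists
  linarith [hmax t]

lemma fo_exists_max (g : ℝ → ℝ) (hg : Continuous g) (T : ℝ) (hT : 0 < T)
    (hp : ∀ t, g (t + T) = g t) : ∃ t0, ∀ t, g t ≤ g t0 := by
  obtain ⟨t0, -, h⟩ := isCompact_Icc.exists_isMaxOn (nonempty_Icc.2 hT.le) hg.continuousOn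
  refine ⟨t0, fun t => ?_⟩
  obtain ⟨s, hs, he⟩ := Function.Periodic.exists_mem_Ico₀ (f := g) hp hT t
  rw [he]
  exact h (Ico_subset_Icc_self hs)

lemma fo_per_ext {Z : Type*} [NormedAddCommGroup Z] [NormedSpace ℝ Z] (H : ℝ → Z → Z) (T : ℝ)
    (hT : 0 < T) (hH : ∀ t z, H (t + T) z = H t z) (y : ℝ → Z)
    (hy : ∀ t ∈ Icc 0 T, HasDerivWithinAt y (H t (y t)) (Icc 0 T) t) (hyT : y T = y 0) :
    ∃ z : ℝ → Z, (∀ t, HasDerivAt z (H t (z t)) t) ∧ ∀ t, z (t + T) = z t := by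
  let z : ℝ → Z := fun t => y (t - ⌊t / T⌋ * T)
  have hHk : ∀ (k : ℤ) t w, H (t - k * T) w = H t w := by
    intro k t w
    have hp : Function.Periodic (fun t => H t w) T := fun t => hH t w
    exact hp.sub_int_mul_eq k
  have hzk : ∀ (k : ℤ), ∀ t ∈ Icc (k * T) ((k + 1) * T), z t = y (t - k * T) := by
    intro k t ht
    rcases ht.2.lt_or_eq with h | h
    · have : ⌊t / T⌋ = k := by
        rw [Int.floor_eq_iff, le_div_iff₀ hT, div_lt_iff₀ hT]; exact ⟨ht.1, h⟩
      simp only [z, this]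
    · have : ⌊t / T⌋ = k + 1 := by
        rw [h, mul_div_assoc, div_self hT.ne', mul_one]
        exact_mod_cast Int.floor_intCast (k + 1)
      simp only [z, this]
      rw [h]
      have e1 : (k + 1) * T - ((k + 1 : ℤ) : ℝ) * T = 0 := by push_cast; ring
      have e2 : (k + 1) * T - (k : ℝ) * T = T := by ring
      rw [e1, e2, hyT]
  have hdk : ∀ (k : ℤ), ∀ t ∈ Icc (k * T) ((k + 1) * T),
      HasDerivWithinAt z (H t (z t)) (Icc (k * T) ((k + 1) * T)) t := by
    intro k t ht
    have hm : ∀ s ∈ Icc (k * T) ((k + 1) * T), s - k * T ∈ Icc 0 T := by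
      intro s hs; constructor <;> linarith [hs.1, hs.2]
    have h1 := hy (t - k * T) (hm t ht)
    rw [hHk, ← hzk k t ht] at h1
    have h2 : HasDerivWithinAt (fun s : ℝ => s - k * T) 1 (Icc (k * T) ((k + 1) * T)) t :=
      (hasDerivWithinAt_id t _).sub_const _
    have h3 := HasDerivWithinAt.scomp t h1 h2 hm
    rw [one_smul] at h3
    exact h3.congr (fun s hs => hzk k s hs) (hzk k t ht)
  refine ⟨z, fun t => ?_, fun t => ?_⟩
  · set k := ⌊t / T⌋ with hk
    have h1 : k * T ≤ t := by
      rw [← le_div_iff₀ hT]; exact Int.floor_le _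
    have h2 : t < (k + 1) * T := by
      rw [← div_lt_iff₀ hT]; exact Int.lt_floor_add_one _
    have d1 := hdk k t ⟨h1, h2.le⟩
    rcases h1.lt_or_eq with h | h
    · exact d1.hasDerivAt (Icc_mem_nhds h h2)
    · have d2 := hdk (k - 1) t ⟨by push_cast; linarith, by push_cast; linarith⟩
      have d3 := d2.union d1
      refine d3.hasDerivAt ?_
      have e : (((k - 1 : ℤ) : ℝ) + 1) * T = k * T := by push_cast; ring
      rw [e, Icc_union_Icc_eq_Icc (by push_cast; linarith) (by linarith)]
      exact Icc_mem_nhds (by push_cast; linarith) h2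
  · simp only [z]
    have : (t + T) / T = t / T + 1 := by field_simp
    rw [this, Int.floor_add_one]
    congr 1
    push_cast; ring

lemma fo_flow {Z : Type*} [NormedAddCommGroup Z] [NormedSpace ℝ Z] [CompleteSpace Z]
    (H : ℝ → Z → Z) (T : ℝ) (hT : 0 < T) (K L : NNReal) (hK : ∀ t, LipschitzWith K (H t))
    (hc : ∀ z, Continuous (fun t => H t z)) (hL : ∀ t z, ‖H t z‖ ≤ L) (R : NNReal) :
    ∃ α : Z → ℝ → Z, (∀ z ∈ Metric.closedBall 0 (R : ℝ), α z 0 = z ∧ ∀ t ∈ Icc 0 T,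
      HasDerivWithinAt (α z) (H t (α z t)) (Icc 0 T) t) ∧
      ContinuousOn (fun z => α z T) (Metric.closedBall 0 (R : ℝ)) := by
  have hpl : IsPicardLindelof H (⟨0, left_mem_Icc.2 hT.le⟩ : Icc 0 T) (0 : Z)
      (R + L * T.toNNReal) R L K := by
    refine ⟨fun t _ => (hK t).lipschitzOnWith, fun z _ => (hc z).continuousOn,
      fun t _ z _ => hL t z, ?_⟩
    simp [hT.le]
  obtain ⟨α, h1, h2⟩ := hpl.exists_forall_mem_closedBall_eq_hasDerivWithinAt_continuousOn
  refine ⟨fun z t => α (z, t), fun z hz => h1 z hz, ?_⟩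
  exact h2.comp (f := fun z => (z, T)) (by fun_prop) (fun z hz => ⟨hz, right_mem_Icc.2 hT.le⟩)

end OdePart

section PeriodicPart
open Filter Topology

lemma foCl_abs_sub (lo hi x y : ℝ) : |foCl lo hi x - foCl lo hi y| ≤ |x - y| := by
  have := (foCl_lip lo hi).dist_le_mul x y
  simpa [Real.dist_eq] using this

lemma fo_face_up (x v p : ℝ → ℝ) (T a b C M : ℝ) (hT : 0 < T) (hab : a < b) (hC : 0 ≤ C)
    (hM : 0 < M)
    (K V : ℝ) (hK : K = C + M + 1) (hV : V = M + C + K + 1)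
    (hx : ∀ t ∈ Icc 0 T, HasDerivWithinAt x (foCl (-V) V (v t)) (Icc 0 T) t)
    (hv : ∀ t ∈ Icc 0 T, HasDerivWithinAt v (p t + foCl (-K) K (x t - foCl a b (x t))
      - (foCl (-V) V (v t) - foCl (-M) M (v t))) (Icc 0 T) t)
    (hp : ∀ t, |p t| ≤ C) (h0 : x 0 = b + (K + V * T)) : x 0 + v 0 ≤ x T + v T := by
  have hV0 : 0 < V := by linarith
  have hxc : ContinuousOn x (Icc 0 T) := fun t ht => (hx t ht).continuousWithinAt
  have hvc : ContinuousOn v (Icc 0 T) := fun t ht => (hv t ht).continuousWithinAt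
  have m1 : MonotoneOn (fun t => x t + V * t) (Icc 0 T) := by
    apply monotoneOn_of_hasDerivWithinAt_nonneg (convex_Icc 0 T)
      (f' := fun t => foCl (-V) V (v t) + V * 1)
    · fun_prop
    · intro t ht
      exact ((hx t (interior_subset ht)).mono interior_subset).add
        ((hasDerivWithinAt_id t _).const_mul V)
    · intro t ht
      have := (foCl_mem (show -V ≤ V by linarith) (v t)).1
      linarith
  have hge : ∀ t ∈ Icc 0 T, b + K ≤ x t := by
    intro t ht
    have := m1 (left_mem_Icc.2 hT.le) ht ht.1
    simp only at this
    have h2 : V * t ≤ V * T := mul_le_mul_of_nonneg_left ht.2 hV0.le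
    linarith
  have m2 : MonotoneOn (fun t => x t + v t) (Icc 0 T) := by
    apply monotoneOn_of_hasDerivWithinAt_nonneg (convex_Icc 0 T)
      (f' := fun t => foCl (-V) V (v t) + (p t + foCl (-K) K (x t - foCl a b (x t))
      - (foCl (-V) V (v t) - foCl (-M) M (v t))))
    · exact hxc.add hvc
    · intro t ht
      exact ((hx t (interior_subset ht)).mono interior_subset).add
        ((hv t (interior_subset ht)).mono interior_subset)
    · intro t ht
      have h1 := hge t (interior_subset ht)
      have h2 := (foCl_mem (show -M ≤ M by linarith) (v t)).1
      have h3 := abs_le.1 (hp t)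
      rw [foCl_of_ge hab.le (by linarith : b ≤ x t), foCl_of_ge (by linarith) (by linarith : K ≤ x t - b)]
      linarith
  exact m2 (left_mem_Icc.2 hT.le) (right_mem_Icc.2 hT.le) hT.le

lemma fo_face_dn (x v p : ℝ → ℝ) (T a b C M : ℝ) (hT : 0 < T) (hab : a < b) (hC : 0 ≤ C)
    (hM : 0 < M)
    (K V : ℝ) (hK : K = C + M + 1) (hV : V = M + C + K + 1)
    (hx : ∀ t ∈ Icc 0 T, HasDerivWithinAt x (foCl (-V) V (v t)) (Icc 0 T) t)
    (hv : ∀ t ∈ Icc 0 T, HasDerivWithinAt v (p t + foCl (-K) K (x t - foCl a b (x t))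
      - (foCl (-V) V (v t) - foCl (-M) M (v t))) (Icc 0 T) t)
    (hp : ∀ t, |p t| ≤ C) (h0 : x 0 = a - (K + V * T)) : x T + v T ≤ x 0 + v 0 := by
  have hV0 : 0 < V := by linarith
  have hxc : ContinuousOn x (Icc 0 T) := fun t ht => (hx t ht).continuousWithinAt
  have hvc : ContinuousOn v (Icc 0 T) := fun t ht => (hv t ht).continuousWithinAt
  have m1 : AntitoneOn (fun t => x t - V * t) (Icc 0 T) := by
    apply antitoneOn_of_hasDerivWithinAt_nonpos (convex_Icc 0 T)
      (f' := fun t => foCl (-V) V (v t) - V * 1)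
    · fun_prop
    · intro t ht
      exact ((hx t (interior_subset ht)).mono interior_subset).sub
        ((hasDerivWithinAt_id t _).const_mul V)
    · intro t ht
      have := (foCl_mem (show -V ≤ V by linarith) (v t)).2
      linarith
  have hge : ∀ t ∈ Icc 0 T, x t ≤ a - K := by
    intro t ht
    have := m1 (left_mem_Icc.2 hT.le) ht ht.1
    simp only at this
    have h2 : V * t ≤ V * T := mul_le_mul_of_nonneg_left ht.2 hV0.le
    linarith
  have m2 : AntitoneOn (fun t => x t + v t) (Icc 0 T) := by
    apply antitoneOn_of_hasDerivWithinAt_nonpos (convex_Icc 0 T)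
      (f' := fun t => foCl (-V) V (v t) + (p t + foCl (-K) K (x t - foCl a b (x t))
      - (foCl (-V) V (v t) - foCl (-M) M (v t))))
    · exact hxc.add hvc
    · intro t ht
      exact ((hx t (interior_subset ht)).mono interior_subset).add
        ((hv t (interior_subset ht)).mono interior_subset)
    · intro t ht
      have h1 := hge t (interior_subset ht)
      have h2 := (foCl_mem (show -M ≤ M by linarith) (v t)).2
      have h3 := abs_le.1 (hp t)
      rw [foCl_of_le hab.le (by linarith : x t ≤ a), foCl_of_le (by linarith) (by linarith : x t - a ≤ -K)]
      linarith
  exact m2 (left_mem_Icc.2 hT.le) (right_mem_Icc.2 hT.le) hT.le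

lemma fo_barrier (v w : ℝ → ℝ) (T V : ℝ) (hT : 0 < T)
    (hv : ∀ t ∈ Icc 0 T, HasDerivWithinAt v (w t) (Icc 0 T) t)
    (h0 : v 0 ≤ V) (hw : ∀ t ∈ Icc 0 T, v t = V → w t < 0) : v T ≤ V := by
  refine image_le_of_deriv_right_lt_deriv_boundary' (a := 0) (b := T) (f := v) (f' := w)
    (B := fun _ => V) (B' := fun _ => 0)
    (fun t ht => (hv t ht).continuousWithinAt) ?_ h0 continuousOn_const
    (fun t ht => hasDerivWithinAt_const _ _ _) ?_ (right_mem_Icc.2 hT.le)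
  · intro t ht
    have := (hv t ⟨ht.1, ht.2.le⟩).mono (Icc_subset_Icc_left ht.1)
    exact this.mono_of_mem_nhdsWithin (Icc_mem_nhdsGE ht.2)
  · intro t ht h
    exact hw t ⟨ht.1, ht.2.le⟩ h

lemma fo_vup (v p q : ℝ → ℝ) (T C M : ℝ) (hT : 0 < T) (hC : 0 ≤ C)
    (hM : 0 < M) (K V : ℝ) (hK : K = C + M + 1) (hV : V = M + C + K + 1)
    (hv : ∀ t ∈ Icc 0 T, HasDerivWithinAt v (p t + foCl (-K) K (q t)
      - (foCl (-V) V (v t) - foCl (-M) M (v t))) (Icc 0 T) t)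
    (hp : ∀ t, |p t| ≤ C) (h0 : v 0 = V) : v T ≤ V := by
  refine fo_barrier v _ T V hT hv h0.le ?_
  intro t ht h
  have h2 := (foCl_mem (show -K ≤ K by linarith) (q t)).2
  have h3 := abs_le.1 (hp t)
  rw [h, foCl_of_ge (by linarith) le_rfl, foCl_of_ge (by linarith) (by linarith : M ≤ V)]
  linarith

lemma fo_vdn (v p q : ℝ → ℝ) (T C M : ℝ) (hT : 0 < T) (hC : 0 ≤ C)
    (hM : 0 < M) (K V : ℝ) (hK : K = C + M + 1) (hV : V = M + C + K + 1)
    (hv : ∀ t ∈ Icc 0 T, HasDerivWithinAt v (p t + foCl (-K) K (q t)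
      - (foCl (-V) V (v t) - foCl (-M) M (v t))) (Icc 0 T) t)
    (hp : ∀ t, |p t| ≤ C) (h0 : v 0 = -V) : -V ≤ v T := by
  have := fo_barrier (fun t => - v t) _ T V hT (fun t ht => (hv t ht).neg) (by simp [h0]) ?_
  · linarith
  intro t ht h
  have h' : v t = -V := by linarith
  have h2 := (foCl_mem (show -K ≤ K by linarith) (q t)).1
  have h3 := abs_le.1 (hp t)
  rw [h', foCl_of_le (by linarith) le_rfl, foCl_of_le (by linarith) (by linarith : -V ≤ -M)]
  linarith

/-- The modified vector field. -/
noncomputable def foH {n : ℕ} (a b : Fin n → ℝ) (K V M : ℝ)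
    (Fc : Fin n → ℝ → (Fin n ⊕ Fin n → ℝ) → ℝ) (t : ℝ) (z : Fin n ⊕ Fin n → ℝ) :
    Fin n ⊕ Fin n → ℝ :=
  Sum.elim (fun i => foCl (-V) V (z (Sum.inr i)))
    (fun i => Fc i t z + foCl (-K) K (z (Sum.inl i) - foCl (a i) (b i) (z (Sum.inl i)))
      - (foCl (-V) V (z (Sum.inr i)) - foCl (-M) M (z (Sum.inr i))))

lemma fo_periodic {n : ℕ} (T : ℝ) (hT : 0 < T) (a b : Fin n → ℝ) (hab : ∀ i, a i < b i)
    (C M : ℝ) (hC : 0 ≤ C) (hM : 0 < M)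
    (K V : ℝ) (hK : K = C + M + 1) (hV : V = M + C + K + 1)
    (Fc : Fin n → ℝ → (Fin n ⊕ Fin n → ℝ) → ℝ)
    (hb : ∀ i t z, |Fc i t z| ≤ C) (L : NNReal)
    (hL : ∀ i t z w, |Fc i t z - Fc i t w| ≤ L * dist z w)
    (hcont : ∀ i z, Continuous (fun t => Fc i t z))
    (hper : ∀ i t z, Fc i (t + T) z = Fc i t z) :
    ∃ z : ℝ → (Fin n ⊕ Fin n → ℝ), (∀ t, HasDerivAt z (foH a b K V M Fc t (z t)) t) ∧
      ∀ t, z (t + T) = z t := by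
  have hV0 : 0 < V := by linarith
  have hK0 : 0 < K := by linarith
  set H := foH a b K V M Fc with hH
  have hHl : ∀ t z i, H t z (Sum.inl i) = foCl (-V) V (z (Sum.inr i)) := fun t z i => rfl
  have hHr : ∀ t z i, H t z (Sum.inr i) = Fc i t z + foCl (-K) K (z (Sum.inl i) - foCl (a i) (b i) (z (Sum.inl i)))
      - (foCl (-V) V (z (Sum.inr i)) - foCl (-M) M (z (Sum.inr i))) := fun t z i => rfl
  have hHper : ∀ t z, H (t + T) z = H t z := by
    intro t z; funext k; rcases k with i | i
    · simp only [hHl]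
    · simp only [hHr, hper]
  have hLip : ∀ t, LipschitzWith (L + 4) (H t) := by
    intro t
    refine LipschitzWith.of_dist_le_mul fun z w => ?_
    have hd : ∀ k, |z k - w k| ≤ dist z w := fun k => by
      have := dist_le_pi_dist z w k
      rwa [Real.dist_eq] at this
    have hLn : 0 ≤ (L : ℝ) * dist z w := by positivity
    refine (dist_pi_le_iff (by positivity)).2 fun k => ?_
    push_cast
    rw [Real.dist_eq]
    have hdn : 0 ≤ dist z w := dist_nonneg
    rcases k with i | i
    · rw [hHl, hHl]
      have := (foCl_abs_sub (-V) V (z (Sum.inr i)) (w (Sum.inr i))).trans (hd _)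
      nlinarith
    · rw [hHr, hHr]
      have h1 := abs_le.1 ((foCl_abs_sub (-V) V (z (Sum.inr i)) (w (Sum.inr i))).trans (hd _))
      have h2 := abs_le.1 ((foCl_abs_sub (-M) M (z (Sum.inr i)) (w (Sum.inr i))).trans (hd _))
      have h3 := abs_le.1 ((foCl_abs_sub (a i) (b i) (z (Sum.inl i)) (w (Sum.inl i))).trans (hd _))
      have h4 := (foCl_abs_sub (-K) K (z (Sum.inl i) - foCl (a i) (b i) (z (Sum.inl i)))
        (w (Sum.inl i) - foCl (a i) (b i) (w (Sum.inl i))))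
      have h5 := abs_le.1 (hd (Sum.inl i))
      have h6 := abs_le.1 (hL i t z w)
      have h4' := abs_le.1 (h4.trans (abs_le.2 (⟨by linarith, by linarith⟩ :
        -(2 * dist z w) ≤ _ ∧ _ ≤ 2 * dist z w)))
      rw [abs_le]; constructor <;> linarith [h1.1, h1.2, h2.1, h2.2, h4'.1, h4'.2, h6.1, h6.2]
  have hHc : ∀ z, Continuous (fun t => H t z) := by
    intro z
    refine continuous_pi fun k => ?_
    rcases k with i | i
    · simp only [hHl]; fun_prop
    · simp only [hHr]; have := hcont i z; fun_prop
  have hHb : ∀ t z, ‖H t z‖ ≤ ((⟨C + K + V + M + V, by linarith⟩ : NNReal) : ℝ) := by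
    intro t z
    change _ ≤ C + K + V + M + V
    refine (pi_norm_le_iff_of_nonneg (by linarith)).2 fun k => ?_
    rw [Real.norm_eq_abs]
    rcases k with i | i
    · rw [hHl]
      have h1 := foCl_mem (show -V ≤ V by linarith) (z (Sum.inr i))
      rw [abs_le]; constructor <;> linarith [h1.1, h1.2]
    · rw [hHr]
      have h1 := foCl_mem (show -V ≤ V by linarith) (z (Sum.inr i))
      have h2 := foCl_mem (show -M ≤ M by linarith) (z (Sum.inr i))
      have h3 := foCl_mem (show -K ≤ K by linarith) (z (Sum.inl i) - foCl (a i) (b i) (z (Sum.inl i)))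
      have h4 := abs_le.1 (hb i t z)
      rw [abs_le]; constructor <;> linarith [h1.1, h1.2, h2.1, h2.2, h3.1, h3.2, h4.1, h4.2]
  set l : Fin n ⊕ Fin n → ℝ := Sum.elim (fun i => a i - (K + V * T)) (fun _ => -V) with hl
  set u : Fin n ⊕ Fin n → ℝ := Sum.elim (fun i => b i + (K + V * T)) (fun _ => V) with hu
  have hVT : 0 < V * T := mul_pos hV0 hT
  obtain ⟨R, hR⟩ := (isCompact_Icc (a := l) (b := u)).isBounded.subset_closedBall 0
  obtain ⟨α, hα, hαc⟩ := fo_flow H T hT (L + 4) _ hLip hHc hHb (Real.toNNReal R)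
  have hR' : Icc l u ⊆ Metric.closedBall 0 (Real.toNNReal R : ℝ) :=
    hR.trans (Metric.closedBall_subset_closedBall (Real.le_coe_toNNReal R))
  have hxd : ∀ z ∈ Icc l u, ∀ i, ∀ t ∈ Icc 0 T, HasDerivWithinAt (fun s => α z s (Sum.inl i))
      (foCl (-V) V (α z t (Sum.inr i))) (Icc 0 T) t := fun z hz i t ht =>
    hasDerivWithinAt_pi.1 ((hα z (hR' hz)).2 t ht) (Sum.inl i)
  have hvd : ∀ z ∈ Icc l u, ∀ i, ∀ t ∈ Icc 0 T, HasDerivWithinAt (fun s => α z s (Sum.inr i))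
      (Fc i t (α z t) + foCl (-K) K (α z t (Sum.inl i) - foCl (a i) (b i) (α z t (Sum.inl i)))
      - (foCl (-V) V (α z t (Sum.inr i)) - foCl (-M) M (α z t (Sum.inr i)))) (Icc 0 T) t :=
    fun z hz i t ht => hasDerivWithinAt_pi.1 ((hα z (hR' hz)).2 t ht) (Sum.inr i)
  have h00 : ∀ z ∈ Icc l u, α z 0 = z := fun z hz => (hα z (hR' hz)).1
  set G : (Fin n ⊕ Fin n → ℝ) → (Fin n ⊕ Fin n → ℝ) := fun z => Sum.elim
    (fun i => α z T (Sum.inl i) + α z T (Sum.inr i) - (z (Sum.inl i) + z (Sum.inr i)))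
    (fun i => z (Sum.inr i) - α z T (Sum.inr i)) with hG
  have hαk : ∀ k, ContinuousOn (fun z => α z T k) (Icc l u) := fun k =>
    continuousOn_pi.1 (hαc.mono hR') k
  obtain ⟨z, hz, hGz⟩ := fo_miranda l u
    (by
      rintro (i | i)
      · simp only [hl, hu, Sum.elim_inl]; linarith [hab i]
      · simp only [hl, hu, Sum.elim_inr]; linarith) G
    (by
      refine continuousOn_pi.2 ?_
      rintro (i | i)
      · have h1 := hαk (Sum.inl i)
        have h2 := hαk (Sum.inr i)
        simp only [hG, Sum.elim_inl]
        fun_prop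
      · have h2 := hαk (Sum.inr i)
        simp only [hG, Sum.elim_inr]
        fun_prop)
    (by
      rintro z hz (i | i) hi
      · simp only [hu, Sum.elim_inl] at hi
        have := fo_face_up _ _ _ T (a i) (b i) C M hT (hab i) hC hM K V hK hV (hxd z hz i)
          (hvd z hz i) (fun t => hb i t _) (by simp only [h00 z hz]; exact hi)
        simp only [h00 z hz] at this
        simp only [hG, Sum.elim_inl]; linarith
      · simp only [hu, Sum.elim_inr] at hi
        have := fo_vup _ _ _ T C M hT hC hM K V hK hV
          (hvd z hz i) (fun t => hb i t _) (by simp only [h00 z hz]; exact hi)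
        simp only [hG, Sum.elim_inr]; linarith)
    (by
      rintro z hz (i | i) hi
      · simp only [hl, Sum.elim_inl] at hi
        have := fo_face_dn _ _ _ T (a i) (b i) C M hT (hab i) hC hM K V hK hV (hxd z hz i)
          (hvd z hz i) (fun t => hb i t _) (by simp only [h00 z hz]; exact hi)
        simp only [h00 z hz] at this
        simp only [hG, Sum.elim_inl]; linarith
      · simp only [hl, Sum.elim_inr] at hi
        have := fo_vdn _ _ _ T C M hT hC hM K V hK hV
          (hvd z hz i) (fun t => hb i t _) (by simp only [h00 z hz]; exact hi)
        simp only [hG, Sum.elim_inr]; linarith)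
  refine fo_per_ext H T hT hHper (α z) (hα z (hR' hz)).2 ?_
  rw [h00 z hz]
  have hr : ∀ i, α z T (Sum.inr i) = z (Sum.inr i) := fun i => by
    have := hGz (Sum.inr i)
    simp only [hG, Sum.elim_inr] at this; linarith
  funext k
  rcases k with i | i
  · have := hGz (Sum.inl i)
    simp only [hG, Sum.elim_inl, hr] at this; linarith
  · exact hr i

end PeriodicPart

section SignPart
open Filter Topology

lemma fo_fst {E G : Type*} [NormedAddCommGroup E] [NormedSpace ℝ E] [NormedAddCommGroup G]
    [NormedSpace ℝ G] {w : ℝ → E × G} {d : E × G} {t : ℝ} (h : HasDerivAt w d t) :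
    HasDerivAt (fun s => (w s).1) d.1 t := by
  have := (ContinuousLinearMap.fst ℝ E G).hasFDerivAt.comp_hasDerivAt t h
  exact this

lemma fo_snd {E G : Type*} [NormedAddCommGroup E] [NormedSpace ℝ E] [NormedAddCommGroup G]
    [NormedSpace ℝ G] {w : ℝ → E × G} {d : E × G} {t : ℝ} (h : HasDerivAt w d t) :
    HasDerivAt (fun s => (w s).2) d.2 t := by
  have := (ContinuousLinearMap.snd ℝ E G).hasFDerivAt.comp_hasDerivAt t h
  exact this

lemma fo_local {n : ℕ} (F : Fin n → ℝ → (Fin n → ℝ) → (Fin n → ℝ) → ℝ)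
    (hF : ∀ i, ContDiff ℝ 1 (fun u : ℝ × (Fin n → ℝ) × (Fin n → ℝ) => F i u.1 u.2.1 u.2.2))
    (t0 : ℝ) (x0 v0 : Fin n → ℝ) :
    ∃ x v : ℝ → Fin n → ℝ, x t0 = x0 ∧ v t0 = v0 ∧ ∃ e > 0, ∀ t ∈ Ioo (t0 - e) (t0 + e), ∀ i,
      HasDerivAt (fun s => x s i) (v t i) t ∧ HasDerivAt (fun s => v s i) (F i t (x t) (v t)) t := by
  let X : ℝ × (Fin n → ℝ) × (Fin n → ℝ) → ℝ × (Fin n → ℝ) × (Fin n → ℝ) :=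
    fun u => (1, u.2.2, fun i => F i u.1 u.2.1 u.2.2)
  have hX : ContDiff ℝ 1 X := by
    refine contDiff_const.prodMk (ContDiff.prodMk (by fun_prop) (contDiff_pi.2 fun i => hF i))
  obtain ⟨w, hw0, e, he, hw⟩ :=
    (hX.contDiffAt (x := (t0, x0, v0))).exists_forall_mem_closedBall_exists_eq_forall_mem_Ioo_hasDerivAt₀ t0
  have h1 : ∀ t ∈ Ioo (t0 - e) (t0 + e), HasDerivAt (fun s => (w s).1) 1 t := fun t ht =>
    fo_fst (hw t ht)
  have h2 : ∀ t ∈ Ioo (t0 - e) (t0 + e), HasDerivAt (fun s => (w s).2) (X (w t)).2 t := fun t ht =>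
    fo_snd (hw t ht)
  have h3 : ∀ t ∈ Ioo (t0 - e) (t0 + e), HasDerivAt (fun s => (w s).2.1) (w t).2.2 t :=
    fun t ht => fo_fst (h2 t ht)
  have h4 : ∀ t ∈ Ioo (t0 - e) (t0 + e), HasDerivAt (fun s => (w s).2.2)
      (fun i => F i (w t).1 (w t).2.1 (w t).2.2) t :=
    fun t ht => fo_snd (h2 t ht)
  have hmem : t0 ∈ Ioo (t0 - e) (t0 + e) := ⟨by linarith, by linarith⟩
  have hτ : ∀ t ∈ Ioo (t0 - e) (t0 + e), (w t).1 = t := by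
    intro t ht
    have hd : ∀ s ∈ Ioo (t0 - e) (t0 + e), HasDerivAt (fun s => (w s).1 - s) 0 s := fun s hs => by
      have := (h1 s hs).sub (hasDerivAt_id s)
      rw [sub_self] at this
      exact this
    have := isOpen_Ioo.is_const_of_deriv_eq_zero (isPreconnected_Ioo)
      (fun s hs => (hd s hs).differentiableAt.differentiableWithinAt)
      (fun s hs => (hd s hs).deriv) ht hmem
    simp only [hw0] at this
    linarith
  refine ⟨fun t => (w t).2.1, fun t => (w t).2.2, by simp [hw0], by simp [hw0], e, he, ?_⟩
  intro t ht i
  refine ⟨hasDerivAt_pi.1 (h3 t ht) i, ?_⟩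
  have := hasDerivAt_pi.1 (h4 t ht) i
  rwa [hτ t ht] at this

lemma fo_sign_aux {n : ℕ} (F : Fin n → ℝ → (Fin n → ℝ) → (Fin n → ℝ) → ℝ)
    (hF : ∀ i, ContDiff ℝ 1 (fun u : ℝ × (Fin n → ℝ) × (Fin n → ℝ) => F i u.1 u.2.1 u.2.2))
    (a b : Fin n → ℝ) (hab : ∀ i, a i < b i)
    (hexit : ∀ t₀ : ℝ, ∀ x0 v0 : Fin n → ℝ,
      (∀ j, x0 j ∈ Icc (a j) (b j)) →
      (∃ i, x0 i = a i ∨ x0 i = b i) →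
      (∀ i, (x0 i = a i ∨ x0 i = b i) → v0 i = 0) →
      ∀ (I : Set ℝ) (x v : ℝ → Fin n → ℝ), IsOpen I → t₀ ∈ I →
        (∀ t ∈ I, ∀ i, HasDerivAt (fun s => x s i) (v t i) t ∧
          HasDerivAt (fun s => v s i) (F i t (x t) (v t)) t) → x t₀ = x0 → v t₀ = v0 →
        ∃ ε > (0 : ℝ), ∀ t ∈ Ioo t₀ (t₀ + ε), t ∈ I →
          ¬ (∀ j, x t j ∈ Icc (a j) (b j)))
    (t0 : ℝ) (x0 v0 : Fin n → ℝ) (i : Fin n) (hx0 : ∀ j, j ≠ i → x0 j ∈ Ioo (a j) (b j))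
    (hv0 : v0 i = 0)
    (h : (x0 i = b i ∧ F i t0 x0 v0 < 0) ∨ (x0 i = a i ∧ 0 < F i t0 x0 v0)) : False := by
  obtain ⟨x, v, hx, hv, e, he, hs⟩ := fo_local F hF t0 x0 v0
  have hmem : t0 ∈ Ioo (t0 - e) (t0 + e) := ⟨by linarith, by linarith⟩
  have hi : x0 i = a i ∨ x0 i = b i := h.elim (fun h => Or.inr h.1) (fun h => Or.inl h.1)
  obtain ⟨e', he', hout⟩ := hexit t0 x0 v0
    (by
      intro j
      by_cases hj : j = i
      · subst hj
        rcases hi with hi | hi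
        · rw [hi]; exact left_mem_Icc.2 (hab j).le
        · rw [hi]; exact right_mem_Icc.2 (hab j).le
      · exact Ioo_subset_Icc_self (hx0 j hj))
    ⟨i, hi⟩
    (by
      intro j hj
      by_cases hji : j = i
      · rw [hji, hv0]
      · have := hx0 j hji
        rcases hj with hj | hj
        · linarith [this.1]
        · linarith [this.2])
    _ x v isOpen_Ioo hmem hs hx hv
  have hnear : ∀ᶠ t in 𝓝 t0, t ∈ Ioo (t0 - e) (t0 + e) := Ioo_mem_nhds hmem.1 hmem.2
  have hcj : ∀ j, ContinuousAt (fun s => x s j) t0 := fun j => (hs t0 hmem j).1.continuousAt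
  have hin : ∀ᶠ t in 𝓝[>] t0, ∀ j, x t j ∈ Icc (a j) (b j) := by
    rw [eventually_all]
    intro j
    by_cases hj : j = i
    · subst hj
      have hvd := (hs t0 hmem j).2
      rw [hx, hv] at hvd
      rcases h with ⟨hb, hF0⟩ | ⟨ha, hF0⟩
      · have h1 := fo_pos_right (fun s => - v s j) t0 _ hvd.neg (by simp [hv, hv0]) (by linarith)
        have h2 := fo_second (fun s => - x s j) (fun s => - v s j) t0
          (hnear.mono fun t ht => (hs t ht j).1.neg) h1
        have h3 : ∀ᶠ t in 𝓝 t0, a j < x t j :=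
          (hcj j).eventually (lt_mem_nhds (by simp only [hx, hb]; exact hab j))
        filter_upwards [h2, h3.filter_mono nhdsWithin_le_nhds] with t h2 h3
        rw [hx, hb] at h2
        exact ⟨h3.le, by linarith⟩
      · have h1 := fo_pos_right (fun s => v s j) t0 _ hvd (by simp [hv, hv0]) (by linarith)
        have h2 := fo_second (fun s => x s j) (fun s => v s j) t0
          (hnear.mono fun t ht => (hs t ht j).1) h1
        have h3 : ∀ᶠ t in 𝓝 t0, x t j < b j :=
          (hcj j).eventually (gt_mem_nhds (by simp only [hx, ha]; exact hab j))
        filter_upwards [h2, h3.filter_mono nhdsWithin_le_nhds] with t h2 h3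
        rw [hx, ha] at h2
        exact ⟨h2.le, h3.le⟩
    · have : ∀ᶠ t in 𝓝 t0, x t j ∈ Icc (a j) (b j) :=
        (hcj j).eventually (Icc_mem_nhds (by simp only [hx]; exact (hx0 j hj).1) (by simp only [hx]; exact (hx0 j hj).2))
      exact this.filter_mono nhdsWithin_le_nhds
  have hIoo : ∀ᶠ t in 𝓝[>] t0, t ∈ Ioo t0 (t0 + e') := Ioo_mem_nhdsGT (by linarith)
  obtain ⟨t, h1, h2, h3⟩ := (hin.and (hIoo.and (hnear.filter_mono nhdsWithin_le_nhds))).exists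
  exact hout t h2 h3 h1

lemma fo_sign {n : ℕ} (F : Fin n → ℝ → (Fin n → ℝ) → (Fin n → ℝ) → ℝ)
    (hF : ∀ i, ContDiff ℝ 1 (fun u : ℝ × (Fin n → ℝ) × (Fin n → ℝ) => F i u.1 u.2.1 u.2.2))
    (a b : Fin n → ℝ) (hab : ∀ i, a i < b i)
    (hexit : ∀ t₀ : ℝ, ∀ x0 v0 : Fin n → ℝ,
      (∀ j, x0 j ∈ Icc (a j) (b j)) →
      (∃ i, x0 i = a i ∨ x0 i = b i) →
      (∀ i, (x0 i = a i ∨ x0 i = b i) → v0 i = 0) →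
      ∀ (I : Set ℝ) (x v : ℝ → Fin n → ℝ), IsOpen I → t₀ ∈ I →
        (∀ t ∈ I, ∀ i, HasDerivAt (fun s => x s i) (v t i) t ∧
          HasDerivAt (fun s => v s i) (F i t (x t) (v t)) t) → x t₀ = x0 → v t₀ = v0 →
        ∃ ε > (0 : ℝ), ∀ t ∈ Ioo t₀ (t₀ + ε), t ∈ I →
          ¬ (∀ j, x t j ∈ Icc (a j) (b j)))
    (t0 : ℝ) (x0 v0 : Fin n → ℝ) (i : Fin n) (hx0 : ∀ j, x0 j ∈ Icc (a j) (b j))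
    (hv0 : v0 i = 0) :
    (x0 i = b i → 0 ≤ F i t0 x0 v0) ∧ (x0 i = a i → F i t0 x0 v0 ≤ 0) := by
  let y : ℝ → Fin n → ℝ := fun s j => if j = i then x0 i else x0 j + s * ((a j + b j) / 2 - x0 j)
  have hyi : ∀ s, y s i = x0 i := fun s => by simp [y]
  have hy0 : y 0 = x0 := by
    funext j; by_cases hj : j = i
    · subst hj; simp [y]
    · simp [y, hj]
  have hyc : Continuous y := by
    refine continuous_pi fun j => ?_
    by_cases hj : j = i
    · simp only [y, hj, if_true]; fun_prop
    · simp only [y, hj, if_false]; fun_prop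
  have hyin : ∀ s ∈ Ioo (0 : ℝ) 1, ∀ j, j ≠ i → y s j ∈ Ioo (a j) (b j) := by
    intro s hs j hj
    simp only [y, hj, if_false]
    have h1 := hx0 j
    have h2 := hab j
    have h3 := mul_nonneg (sub_nonneg.2 hs.2.le) (sub_nonneg.2 h1.1)
    have h4 := mul_nonneg (sub_nonneg.2 hs.2.le) (sub_nonneg.2 h1.2)
    have h5 := mul_pos hs.1 (sub_pos.2 h2)
    constructor <;> nlinarith
  have hFc : Continuous (fun s => F i t0 (y s) v0) :=
    (hF i).continuous.comp (continuous_const.prodMk (hyc.prodMk continuous_const))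
  have hs1 : ∀ᶠ s in 𝓝[>] (0 : ℝ), s ∈ Ioo (0 : ℝ) 1 := Ioo_mem_nhdsGT one_pos
  constructor
  · intro hb
    by_contra hneg
    push Not at hneg
    have h1 : ∀ᶠ s in 𝓝 (0 : ℝ), F i t0 (y s) v0 < 0 :=
      hFc.continuousAt.eventually (gt_mem_nhds (by simp only [hy0]; exact hneg))
    obtain ⟨s, h2, h3⟩ := (hs1.and (h1.filter_mono nhdsWithin_le_nhds)).exists
    exact fo_sign_aux F hF a b hab hexit t0 (y s) v0 i (hyin s h2) hv0
      (Or.inl ⟨by rw [hyi, hb], h3⟩)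
  · intro hb
    by_contra hneg
    push Not at hneg
    have h1 : ∀ᶠ s in 𝓝 (0 : ℝ), 0 < F i t0 (y s) v0 :=
      hFc.continuousAt.eventually (lt_mem_nhds (by simp only [hy0]; exact hneg))
    obtain ⟨s, h2, h3⟩ := (hs1.and (h1.filter_mono nhdsWithin_le_nhds)).exists
    exact fo_sign_aux F hF a b hab hexit t0 (y s) v0 i (hyin s h2) hv0
      (Or.inr ⟨by rw [hyi, hb], h3⟩)

end SignPart

section MainPart
open Filter Topology

/-- Clamped state variables. -/
noncomputable def foX {n : ℕ} (a b : Fin n → ℝ) (z : Fin n ⊕ Fin n → ℝ) : Fin n → ℝ :=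
  fun j => foCl (a j) (b j) (z (Sum.inl j))

/-- Clamped velocities. -/
noncomputable def foV {n : ℕ} (M : ℝ) (z : Fin n ⊕ Fin n → ℝ) : Fin n → ℝ :=
  fun j => foCl (-M) M (z (Sum.inr j))

lemma foX_mem {n : ℕ} (a b : Fin n → ℝ) (hab : ∀ i, a i < b i) (z : Fin n ⊕ Fin n → ℝ) :
    foX a b z ∈ Icc a b :=
  ⟨fun j => (foCl_mem (hab j).le _).1, fun j => (foCl_mem (hab j).le _).2⟩

lemma foV_mem {n : ℕ} (M : ℝ) (hM : 0 < M) (z : Fin n ⊕ Fin n → ℝ) :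
    foV M z ∈ Icc (fun _ => -M : Fin n → ℝ) (fun _ => M) :=
  ⟨fun _ => (foCl_mem (by linarith) _).1, fun _ => (foCl_mem (by linarith) _).2⟩

lemma foX_dist {n : ℕ} (a b : Fin n → ℝ) (z w : Fin n ⊕ Fin n → ℝ) :
    dist (foX a b z) (foX a b w) ≤ dist z w := by
  refine (dist_pi_le_iff dist_nonneg).2 fun j => ?_
  refine le_trans ?_ (dist_le_pi_dist z w (Sum.inl j))
  simpa [Real.dist_eq, foX] using foCl_abs_sub (a j) (b j) _ _

lemma foV_dist {n : ℕ} (M : ℝ) (z w : Fin n ⊕ Fin n → ℝ) :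
    dist (foV M z) (foV M w) ≤ dist z w := by
  refine (dist_pi_le_iff dist_nonneg).2 fun j => ?_
  refine le_trans ?_ (dist_le_pi_dist z w (Sum.inr j))
  simpa [Real.dist_eq, foV] using foCl_abs_sub (-M) M _ _

lemma fo_consts {n : ℕ} (F : ℝ → (Fin n → ℝ) → (Fin n → ℝ) → ℝ) (T : ℝ) (hT : 0 < T)
    (hF : ContDiff ℝ 1 (fun u : ℝ × (Fin n → ℝ) × (Fin n → ℝ) => F u.1 u.2.1 u.2.2))
    (hper : ∀ t x v, F (t + T) x v = F t x v)
    (a b : Fin n → ℝ) (hab : ∀ i, a i < b i) (M : ℝ) (hM : 0 < M) :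
    ∃ C : ℝ, ∃ L : NNReal, (∀ t z, |F t (foX a b z) (foV M z)| ≤ C) ∧
      ∀ t z w, |F t (foX a b z) (foV M z) - F t (foX a b w) (foV M w)| ≤ L * dist z w := by
  set S : Set (ℝ × (Fin n → ℝ) × (Fin n → ℝ)) :=
    Icc 0 T ×ˢ (Icc a b ×ˢ Icc (fun _ => -M) (fun _ => M)) with hS
  have hSc : IsCompact S := isCompact_Icc.prod (isCompact_Icc.prod isCompact_Icc)
  obtain ⟨C, hC⟩ := hSc.exists_bound_of_continuousOn hF.continuous.continuousOn
  obtain ⟨L, hL⟩ := LocallyLipschitzOn.exists_lipschitzOnWith_of_compact hSc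
    (hF.locallyLipschitz.locallyLipschitzOn)
  have hP : Function.Periodic F T := fun t => by funext x v; exact hper t x v
  have hmem : ∀ t ∈ Icc 0 T, ∀ z, (t, foX a b z, foV M z) ∈ S := fun t ht z =>
    ⟨ht, foX_mem a b hab z, foV_mem M hM z⟩
  refine ⟨C, L, ?_, ?_⟩
  · intro t z
    obtain ⟨s, hs, hts⟩ := hP.exists_mem_Ico₀ hT t
    rw [hts]
    exact hC _ (hmem s ⟨hs.1, hs.2.le⟩ z)
  · intro t z w
    obtain ⟨s, hs, hts⟩ := hP.exists_mem_Ico₀ hT t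
    rw [hts]
    have := hL.dist_le_mul _ (hmem s ⟨hs.1, hs.2.le⟩ z) _ (hmem s ⟨hs.1, hs.2.le⟩ w)
    rw [Real.dist_eq] at this
    refine this.trans (mul_le_mul_of_nonneg_left ?_ L.2)
    rw [Prod.dist_eq, Prod.dist_eq]
    refine max_le (by simp) (max_le (foX_dist a b z w) (foV_dist M z w))

lemma fo_main {n : ℕ} (F : Fin n → ℝ → (Fin n → ℝ) → (Fin n → ℝ) → ℝ)
    (hF : ∀ i, ContDiff ℝ 1 (fun u : ℝ × (Fin n → ℝ) × (Fin n → ℝ) => F i u.1 u.2.1 u.2.2))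
    (T : ℝ) (hT : 0 < T) (hper : ∀ i t x v, F i (t + T) x v = F i t x v)
    (a b : Fin n → ℝ) (hab : ∀ i, a i < b i)
    (M : ℝ) (hM : 0 < M)
    (hMup : ∀ i t x v, x ∈ Icc a b → v i = M → F i t x v < 0)
    (hMdn : ∀ i t x v, x ∈ Icc a b → v i = -M → 0 < F i t x v)
    (hexit : ∀ t₀ : ℝ, ∀ x0 v0 : Fin n → ℝ,
      (∀ j, x0 j ∈ Icc (a j) (b j)) →
      (∃ i, x0 i = a i ∨ x0 i = b i) →
      (∀ i, (x0 i = a i ∨ x0 i = b i) → v0 i = 0) →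
      ∀ (I : Set ℝ) (x v : ℝ → Fin n → ℝ), IsOpen I → t₀ ∈ I →
        (∀ t ∈ I, ∀ i, HasDerivAt (fun s => x s i) (v t i) t ∧
          HasDerivAt (fun s => v s i) (F i t (x t) (v t)) t) → x t₀ = x0 → v t₀ = v0 →
        ∃ ε > (0 : ℝ), ∀ t ∈ Ioo t₀ (t₀ + ε), t ∈ I →
          ¬ (∀ j, x t j ∈ Icc (a j) (b j))) :
    ∃ x v : ℝ → Fin n → ℝ,
      (∀ t ∈ univ, ∀ i, HasDerivAt (fun s => x s i) (v t i) t ∧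
          HasDerivAt (fun s => v s i) (F i t (x t) (v t)) t) ∧
      (∀ t i, x (t + T) i = x t i) ∧
      (∀ t i, v (t + T) i = v t i) ∧
      (∀ t i, x t i ∈ Ioo (a i) (b i)) := by
  have hsign := fo_sign F hF a b hab hexit
  choose C0 L0 hC0 hL0 using fun i => fo_consts (F i) T hT (hF i) (hper i) a b hab M hM
  set C : ℝ := ∑ i, |C0 i| with hCdef
  set L : NNReal := ∑ i, L0 i with hLdef
  have hC : 0 ≤ C := Finset.sum_nonneg fun i _ => abs_nonneg _
  have hC0C : ∀ i, C0 i ≤ C := fun i => (le_abs_self _).trans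
    (Finset.single_le_sum (f := fun i => |C0 i|) (fun i _ => abs_nonneg _) (Finset.mem_univ i))
  have hL0L : ∀ i, L0 i ≤ L := fun i =>
    Finset.single_le_sum (f := L0) (fun i _ => zero_le) (Finset.mem_univ i)
  set K : ℝ := C + M + 1 with hK
  set V : ℝ := M + C + K + 1 with hV
  have hK0 : 0 < K := by linarith
  have hV0 : 0 < V := by linarith
  set Fc : Fin n → ℝ → (Fin n ⊕ Fin n → ℝ) → ℝ := fun i t z => F i t (foX a b z) (foV M z) with hFc
  obtain ⟨z, hz, hzp⟩ := fo_periodic T hT a b hab C M hC hM K V hK hV Fc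
    (fun i t z => (hC0 i t z).trans (hC0C i)) L
    (fun i t z w => (hL0 i t z w).trans
      (mul_le_mul_of_nonneg_right (NNReal.coe_le_coe.2 (hL0L i)) dist_nonneg))
    (fun i z => (hF i).continuous.comp
      (continuous_id.prodMk (continuous_const (y := (foX a b z, foV M z)))))
    (fun i t z => hper i t _ _)
  have hx : ∀ i t, HasDerivAt (fun s => z s (Sum.inl i)) (foCl (-V) V (z t (Sum.inr i))) t :=
    fun i t => hasDerivAt_pi.1 (hz t) (Sum.inl i)
  have hv : ∀ i t, HasDerivAt (fun s => z s (Sum.inr i))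
      (F i t (foX a b (z t)) (foV M (z t)) +
        foCl (-K) K (z t (Sum.inl i) - foCl (a i) (b i) (z t (Sum.inl i)))
        - (foCl (-V) V (z t (Sum.inr i)) - foCl (-M) M (z t (Sum.inr i)))) t :=
    fun i t => hasDerivAt_pi.1 (hz t) (Sum.inr i)
  have hXm : ∀ t j, foX a b (z t) j ∈ Icc (a j) (b j) := fun t j => foCl_mem (hab j).le _
  have hc : ∀ k, Continuous (fun s => z s k) := fun k => by
    have : Continuous z := continuous_iff_continuousAt.2 fun t => (hz t).continuousAt
    exact (continuous_apply k).comp this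
  have hcl0 : ∀ W : ℝ, 0 < W → foCl (-W) W 0 = 0 := fun W hW =>
    foCl_of_mem ⟨by linarith, by linarith⟩
  -- positions stay in the closed box
  have hxb : ∀ i t, z t (Sum.inl i) ≤ b i := by
    intro i
    obtain ⟨t0, ht0⟩ := fo_exists_max (fun s => z s (Sum.inl i)) (hc _) T hT
      (fun t => by simp only [hzp])
    by_contra hcon
    push Not at hcon
    obtain ⟨t1, ht1⟩ := hcon
    have hgt : b i < z t0 (Sum.inl i) := ht1.trans_le (ht0 t1)
    refine fo_nomax _ _ V hV0 (hx i) t0 ht0 _ (hv i t0) ?_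
    intro h0
    have h1 := (hsign t0 (foX a b (z t0)) (foV M (z t0)) i (hXm t0)
      (by simp only [foV, h0]; exact hcl0 M hM)).1 (foCl_of_ge (hab i).le hgt.le)
    rw [h0, hcl0 M hM, hcl0 V hV0, foCl_of_ge (hab i).le hgt.le]
    have := foCl_pos hK0 (sub_pos.2 hgt)
    linarith
  have hxa : ∀ i t, a i ≤ z t (Sum.inl i) := by
    intro i
    obtain ⟨t0, ht0⟩ := fo_exists_max (fun s => - z s (Sum.inl i)) (hc _).neg T hT
      (fun t => by simp only [hzp])
    by_contra hcon
    push Not at hcon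
    obtain ⟨t1, ht1⟩ := hcon
    have hgt : z t0 (Sum.inl i) < a i := by
      have := ht0 t1
      linarith
    refine fo_nomax (fun s => - z s (Sum.inl i)) (fun s => - z s (Sum.inr i)) V hV0
      (fun t => by rw [foCl_neg _ _ hV0.le]; exact (hx i t).neg) t0 ht0 _ (hv i t0).neg ?_
    intro h0
    have h0 : z t0 (Sum.inr i) = 0 := by simpa using h0
    have h1 := (hsign t0 (foX a b (z t0)) (foV M (z t0)) i (hXm t0)
      (by simp only [foV, h0]; exact hcl0 M hM)).2 (foCl_of_le (hab i).le hgt.le)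
    rw [h0, hcl0 M hM, hcl0 V hV0, foCl_of_le (hab i).le hgt.le]
    have := foCl_pos hK0 (sub_pos.2 hgt)
    rw [← neg_sub, foCl_neg _ _ hK0.le] at this
    linarith
  have hXe : ∀ t, foX a b (z t) = fun j => z t (Sum.inl j) := fun t => by
    funext j; exact foCl_of_mem ⟨hxa j t, hxb j t⟩
  have hv' : ∀ i t, HasDerivAt (fun s => z s (Sum.inr i))
      (F i t (foX a b (z t)) (foV M (z t))
        - (foCl (-V) V (z t (Sum.inr i)) - foCl (-M) M (z t (Sum.inr i)))) t := by
    intro i t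
    have := hv i t
    rw [foCl_of_mem (⟨hxa i t, hxb i t⟩ : z t (Sum.inl i) ∈ Icc (a i) (b i)), sub_self,
      hcl0 K hK0, add_zero] at this
    exact this
  have hvM : ∀ i t, z t (Sum.inr i) ≤ M := by
    intro i
    obtain ⟨t0, ht0⟩ := fo_exists_max (fun s => z s (Sum.inr i)) (hc _) T hT
      (fun t => by simp only [hzp])
    by_contra hcon
    push Not at hcon
    obtain ⟨t1, ht1⟩ := hcon
    have hgt : M < z t0 (Sum.inr i) := ht1.trans_le (ht0 t1)
    have hd := IsLocalMax.hasDerivAt_eq_zero (Eventually.of_forall ht0) (hv' i t0)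
    have hm : foCl (-M) M (z t0 (Sum.inr i)) = M := foCl_of_ge (by linarith) hgt.le
    have h1 := hMup i t0 _ (foV M (z t0)) (foX_mem a b hab (z t0)) hm
    have h2 : M ≤ foCl (-V) V (z t0 (Sum.inr i)) :=
      (le_min (by linarith) hgt.le).trans (le_max_right _ _)
    linarith
  have hvm : ∀ i t, -M ≤ z t (Sum.inr i) := by
    intro i
    obtain ⟨t0, ht0⟩ := fo_exists_max (fun s => - z s (Sum.inr i)) (hc _).neg T hT
      (fun t => by simp only [hzp])
    by_contra hcon
    push Not at hcon
    obtain ⟨t1, ht1⟩ := hcon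
    have hgt : z t0 (Sum.inr i) < -M := by
      have := ht0 t1
      linarith
    have hd := IsLocalMax.hasDerivAt_eq_zero (Eventually.of_forall ht0) (hv' i t0).neg
    have hm : foCl (-M) M (z t0 (Sum.inr i)) = -M := foCl_of_le (by linarith) hgt.le
    have h1 := hMdn i t0 _ (foV M (z t0)) (foX_mem a b hab (z t0)) hm
    have h2 : foCl (-V) V (z t0 (Sum.inr i)) ≤ -M :=
      max_le (by linarith) ((min_le_right _ _).trans hgt.le)
    linarith
  have hclM : ∀ i t, foCl (-M) M (z t (Sum.inr i)) = z t (Sum.inr i) := fun i t =>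
    foCl_of_mem ⟨hvm i t, hvM i t⟩
  have hclV : ∀ i t, foCl (-V) V (z t (Sum.inr i)) = z t (Sum.inr i) := fun i t =>
    foCl_of_mem ⟨by linarith [hvm i t], by linarith [hvM i t]⟩
  have hVe : ∀ t, foV M (z t) = fun j => z t (Sum.inr j) := fun t => by
    funext j; exact hclM j t
  have hsol : ∀ t ∈ univ, ∀ i,
      HasDerivAt (fun s => (fun s j => z s (Sum.inl j) : ℝ → Fin n → ℝ) s i)
        ((fun s j => z s (Sum.inr j) : ℝ → Fin n → ℝ) t i) t ∧
      HasDerivAt (fun s => (fun s j => z s (Sum.inr j) : ℝ → Fin n → ℝ) s i)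
        (F i t ((fun s j => z s (Sum.inl j) : ℝ → Fin n → ℝ) t)
          ((fun s j => z s (Sum.inr j) : ℝ → Fin n → ℝ) t)) t := by
    intro t _ i
    refine ⟨?_, ?_⟩
    · have := hx i t
      rwa [hclV] at this
    · have := hv' i t
      rwa [hclV, hclM, sub_self, sub_zero, hXe, hVe] at this
  refine ⟨fun s j => z s (Sum.inl j), fun s j => z s (Sum.inr j), hsol,
    fun t i => by simp only [hzp], fun t i => by simp only [hzp], ?_⟩
  intro t0 i
  by_contra hcon
  have hbd : z t0 (Sum.inl i) = a i ∨ z t0 (Sum.inl i) = b i := by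
    by_contra hno
    push Not at hno
    exact hcon ⟨lt_of_le_of_ne (hxa i t0) (Ne.symm hno.1), lt_of_le_of_ne (hxb i t0) hno.2⟩
  obtain ⟨e, he, hout⟩ := hexit t0 (fun j => z t0 (Sum.inl j)) (fun j => z t0 (Sum.inr j))
    (fun j => ⟨hxa j t0, hxb j t0⟩) ⟨i, hbd⟩
    (by
      intro j hj
      have hd := (hsol t0 (mem_univ _) j).1
      rcases hj with hj | hj
      · exact IsLocalMin.hasDerivAt_eq_zero
          (Eventually.of_forall fun s => by simp only [hj]; exact hxa j s) hd
      · exact IsLocalMax.hasDerivAt_eq_zero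
          (Eventually.of_forall fun s => by simp only [hj]; exact hxb j s) hd)
    univ _ _ isOpen_univ (mem_univ _) hsol rfl rfl
  exact hout (t0 + e / 2) ⟨by linarith, by linarith⟩ (mem_univ _)
    (fun j => ⟨hxa j _, hxb j _⟩)

lemma fo_chooseM {n : ℕ} (T : ℝ) (hT : 0 < T)
    (a b : Fin n → ℝ) (ffr : Fin n → ℝ → ℝ → ℝ → ℝ)
    (hffr_per : ∀ i t q p, ffr i (t + T) q p = ffr i t q p) (C1 : Fin n → ℝ)
    (hfr : ∀ i, ∃ d > (0 : ℝ), ∃ c < (0 : ℝ), ∀ t ∈ Icc (0 : ℝ) T,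
      ∀ q ∈ Icc (a i) (b i), ∀ p : ℝ, d < p ^ 2 → ffr i t q p * p / p ^ 2 ≤ c) :
    ∃ M > 0, ∀ i t, ∀ q ∈ Icc (a i) (b i),
      ffr i t q M < - C1 i ∧ C1 i < ffr i t q (-M) := by
  choose d hd c hc h using hfr
  have h1 : ∀ᶠ M : ℝ in atTop, 0 < M ∧ ∀ i, d i < M ^ 2 ∧ C1 i + c i * M < 0 := by
    refine (eventually_gt_atTop 0).and (eventually_all.2 fun i => ?_)
    refine ((tendsto_pow_atTop two_ne_zero).eventually_gt_atTop (d i)).and ?_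
    have : Tendsto (fun M : ℝ => c i * M) atTop atBot :=
      tendsto_id.const_mul_atTop_of_neg (hc i)
    filter_upwards [this.eventually_lt_atBot (- C1 i)] with M hM
    linarith
  obtain ⟨M, hM, hMi⟩ := h1.exists
  refine ⟨M, hM, ?_⟩
  intro i t q hq
  have hP : Function.Periodic (ffr i) T := fun t => by funext x v; exact hffr_per i t x v
  obtain ⟨s, hs, hts⟩ := hP.exists_mem_Ico₀ hT t
  rw [hts]
  have hM2 : 0 < M ^ 2 := by positivity
  have e1 := h i s ⟨hs.1, hs.2.le⟩ q hq M (hMi i).1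
  have e2 := h i s ⟨hs.1, hs.2.le⟩ q hq (-M) (by rw [neg_sq]; exact (hMi i).1)
  rw [neg_sq] at e2
  rw [div_le_iff₀ hM2] at e1 e2
  have e3 : ffr i s q M ≤ c i * M := by
    refine le_of_mul_le_mul_right ?_ hM
    linarith [e1]
  have e4 : - ffr i s q (-M) ≤ c i * M := by
    refine le_of_mul_le_mul_right ?_ hM
    linarith [e2]
  constructor <;> linarith [(hMi i).2]

end MainPart

theorem forced_oscillations_interval_blocks
    (n : ℕ) (hn : 1 ≤ n) (T : ℝ) (hT : 0 < T)
    (a b : Fin n → ℝ) (hab : ∀ i, a i < b i)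
    (f ffr : Fin n → ℝ → ℝ → ℝ → ℝ)
    (fint : Fin n → ℝ → (Fin n → ℝ) → (Fin n → ℝ) → ℝ)
    (hf_smooth : ∀ i, ContDiff ℝ (⊤ : ℕ∞) (fun u : ℝ × ℝ × ℝ => f i u.1 u.2.1 u.2.2))
    (hffr_smooth : ∀ i, ContDiff ℝ (⊤ : ℕ∞) (fun u : ℝ × ℝ × ℝ => ffr i u.1 u.2.1 u.2.2))
    (hfint_smooth : ∀ i, ContDiff ℝ (⊤ : ℕ∞)
      (fun u : ℝ × (Fin n → ℝ) × (Fin n → ℝ) => fint i u.1 u.2.1 u.2.2))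
    (hf_per : ∀ i t q p, f i (t + T) q p = f i t q p)
    (hffr_per : ∀ i t q p, ffr i (t + T) q p = ffr i t q p)
    (hfint_per : ∀ i t q p, fint i (t + T) q p = fint i t q p)
    -- (1) boundedness of the external and interaction forces
    (hf_bdd : ∀ i, ∃ C : ℝ, ∀ t q p, |f i t q p| ≤ C)
    (hfint_bdd : ∀ i, ∃ C : ℝ, ∀ t q p, |fint i t q p| ≤ C)
    -- (2) friction condition (H1):
    -- sup { ffrᵢ(t,q,p)·p/p² : t ∈ [0,T], q ∈ [aᵢ,bᵢ], p² > dᵢ } < 0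
    (hfr : ∀ i, ∃ d > (0 : ℝ), ∃ c < (0 : ℝ), ∀ t ∈ Icc (0 : ℝ) T,
      ∀ q ∈ Icc (a i) (b i), ∀ p : ℝ, d < p ^ 2 → ffr i t q p * p / p ^ 2 ≤ c)
    -- (3) solutions starting on the boundary of the box (tangentially) leave it immediately
    (hexit : ∀ t₀ : ℝ, ∀ x0 v0 : Fin n → ℝ,
      (∀ j, x0 j ∈ Icc (a j) (b j)) →
      (∃ i, x0 i = a i ∨ x0 i = b i) →
      (∀ i, (x0 i = a i ∨ x0 i = b i) → v0 i = 0) →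
      ∀ (I : Set ℝ) (x v : ℝ → Fin n → ℝ), IsOpen I → t₀ ∈ I →
        IsSolution0 n f ffr fint x v I → x t₀ = x0 → v t₀ = v0 →
        ∃ ε > (0 : ℝ), ∀ t ∈ Ioo t₀ (t₀ + ε), t ∈ I →
          ¬ (∀ j, x t j ∈ Icc (a j) (b j))) :
    -- conclusion: a T-periodic solution staying strictly inside the box
    ∃ x v : ℝ → Fin n → ℝ,
      IsSolution0 n f ffr fint x v univ ∧
      (∀ t i, x (t + T) i = x t i) ∧
      (∀ t i, v (t + T) i = v t i) ∧
      (∀ t i, x t i ∈ Ioo (a i) (b i)) := by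
  choose Cf hCf using hf_bdd
  choose Ci hCi using hfint_bdd
  obtain ⟨M, hM, hMi⟩ := fo_chooseM T hT a b ffr hffr_per (fun i => Cf i + Ci i) hfr
  have h1 : (1 : WithTop ℕ∞) ≤ ((⊤ : ℕ∞) : WithTop ℕ∞) := by exact_mod_cast le_top
  refine fo_main (fun i t x v => f i t (x i) (v i) + ffr i t (x i) (v i) + fint i t x v)
    ?_ T hT ?_ a b hab M hM ?_ ?_ hexit
  · intro i
    have hp : ContDiff ℝ 1 (fun u : ℝ × (Fin n → ℝ) × (Fin n → ℝ) =>
        ((u.1, u.2.1 i, u.2.2 i) : ℝ × ℝ × ℝ)) := by fun_prop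
    exact ((((hf_smooth i).of_le h1).comp hp).add (((hffr_smooth i).of_le h1).comp hp)).add
      ((hfint_smooth i).of_le h1)
  · intro i t x v
    simp only [hf_per, hffr_per, hfint_per]
  · intro i t x v hx hv
    have e1 := (hMi i t (x i) ⟨hx.1 i, hx.2 i⟩).1
    have e2 := abs_le.1 (hCf i t (x i) (v i))
    have e3 := abs_le.1 (hCi i t x v)
    rw [hv] at e2 ⊢
    linarith [e2.2, e3.2]
  · intro i t x v hx hv
    have e1 := (hMi i t (x i) ⟨hx.1 i, hx.2 i⟩).2
    have e2 := abs_le.1 (hCf i t (x i) (v i))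
    have e3 := abs_le.1 (hCi i t x v)
    rw [hv] at e2 ⊢
    linarith [e2.1, e3.1]
end

section
/- Consider the system of second-order ODEs for points q₁,…,qₙ, where qᵢ takes values in ℝ², given by q̈ᵢ = fᵢ(t, qᵢ, q̇ᵢ) + fᵢ^fr(t, qᵢ, q̇ᵢ) + fᵢ^int(t, q₁, q̇₁, …, qₙ, q̇ₙ), i = 1,…,n. Assume: (1) each fᵢ and each fᵢ^int is bounded; (2) for each i there exists dᵢ > 0 such that sup{ ⟨fᵢ^fr(t, q, p), p⟩ / ⟨p, p⟩ : t ∈ [0,T], |q| ≤ Rᵢ, ⟨p, p⟩ > dᵢ } < 0, where ⟨·,·⟩ is the Euclidean inner product on ℝ²; (3) for every t₀ ∈ ℝ and every initial state (q⁰, p⁰) with |qⱼ⁰| ≤ Rⱼ for all j, with |qᵢ⁰| = Rᵢ for at least one index i and with ⟨qᵢ⁰, pᵢ⁰⟩ = 0 for every index i for which |qᵢ⁰| = Rᵢ, every solution q(·) with q(t₀) = q⁰, q̇(t₀) = p⁰ satisfies: there exists ε > 0 such that for every t ∈ (t₀, t₀ + ε) one has |qⱼ(t)| > Rⱼ for some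 j. Then there exists a solution q : ℝ → (ℝ²)ⁿ such that qᵢ(t + T) = qᵢ(t) and q̇ᵢ(t + T) = q̇ᵢ(t) for all t and all i, and |qᵢ(t)| < Rᵢ for all t ∈ ℝ and all i = 1,…,n. -/
open Set
open scoped RealInnerProductSpace

/-- A pair of functions `(q, p)` is a solution of the system
`q̈ᵢ = fᵢ(t, qᵢ, q̇ᵢ) + fᵢ^fr(t, qᵢ, q̇ᵢ) + fᵢ^int(t, q, q̇)` (qᵢ ∈ ℝ²) on the set `I ⊆ ℝ`. -/
def IsSolution1 (n : ℕ)
    (f ffr : Fin n → ℝ → EuclideanSpace ℝ (Fin 2) → EuclideanSpace ℝ (Fin 2) →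
      EuclideanSpace ℝ (Fin 2))
    (fint : Fin n → ℝ → (Fin n → EuclideanSpace ℝ (Fin 2)) →
      (Fin n → EuclideanSpace ℝ (Fin 2)) → EuclideanSpace ℝ (Fin 2))
    (q p : ℝ → Fin n → EuclideanSpace ℝ (Fin 2)) (I : Set ℝ) : Prop :=
  ∀ t ∈ I, ∀ i : Fin n,
    HasDerivAt (fun s => q s i) (p t i) t ∧
    HasDerivAt (fun s => p s i)
      (f i t (q t i) (p t i) + ffr i t (q t i) (p t i) + fint i t (q t) (p t)) t

section
open Set MeasureTheory Metric

lemma det_lagrange {H : Type*} [NormedAddCommGroup H] [NormedSpace ℝ H] [FiniteDimensional ℝ H]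
    (δ : ℝ) (hδ : 0 < δ) : ∃ (N : ℕ) (t : ℕ → ℝ) (c : ℕ → ℝ), (∀ i, 0 < t i ∧ (i < N → t i < δ)) ∧
      (∑ i ∈ Finset.range N, c i = 1) ∧
      ∀ A : H →L[ℝ] H, (1 + A).det = ∑ i ∈ Finset.range N, c i * (1 + t i • A).det := by
  classical
  set m := Module.finrank ℝ H with hm
  set t : ℕ → ℝ := fun i => δ * ((i + 1) / (m + 2)) with ht
  have hinj : Set.InjOn t (Finset.range (m+1)) := by
    intro i _ j _ hij
    simp only [ht] at hij
    have : ((i:ℝ) + 1) = j + 1 := by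
      have h2 : ((m:ℝ) + 2) ≠ 0 := by positivity
      field_simp at hij
      exact hij
    exact_mod_cast add_right_cancel this
  refine ⟨m+1, t, fun i => (Lagrange.basis (Finset.range (m+1)) t i).eval 1, ?_, ?_, ?_⟩
  · intro i
    refine ⟨by simp only [ht]; positivity, fun hi => ?_⟩
    simp only [ht]
    have : ((i:ℝ) + 1) / (m + 2) < 1 := by
      rw [div_lt_one (by positivity)]
      have : (i:ℝ) < m + 1 := by exact_mod_cast hi
      linarith
    nlinarith
  · rw [← Polynomial.eval_finsetSum, Lagrange.sum_basis hinj (by simp)]; simp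
  · intro A
    set b := Module.finBasis ℝ H
    set M := LinearMap.toMatrix b b (A : H →ₗ[ℝ] H) with hM
    set Q : Polynomial ℝ := Matrix.det ((Polynomial.X : Polynomial ℝ) • M.map Polynomial.C + (1 : Matrix _ _ ℝ).map Polynomial.C) with hQ
    have hev : ∀ s : ℝ, Q.eval s = (1 + s • A).det := by
      intro s
      rw [hQ, ← Polynomial.coe_evalRingHom, RingHom.map_det]
      rw [ContinuousLinearMap.det, ← LinearMap.det_toMatrix b]
      congr 1
      ext i j
      simp [hM, Matrix.one_apply, LinearMap.toMatrix_apply, add_comm, apply_ite, Finsupp.single_apply, eq_comm]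
      ring
    have hdeg : Q.degree < (Finset.range (m+1)).card := by
      have h1 := Polynomial.natDegree_det_X_add_C_le M (1 : Matrix _ _ ℝ)
      rw [← hQ] at h1
      refine lt_of_le_of_lt Polynomial.degree_le_natDegree ?_
      rw [Finset.card_range]
      simp at h1
      exact_mod_cast Nat.lt_succ_of_le h1
    have := congrArg (Polynomial.eval 1) (Lagrange.eq_interpolate hinj hdeg)
    rw [hev, Lagrange.interpolate_apply, Polynomial.eval_finsetSum] at this
    rw [one_smul] at this
    rw [this]
    refine Finset.sum_congr rfl fun i _ => ?_
    rw [Polynomial.eval_mul, Polynomial.eval_C, hev, mul_comm]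

lemma det_pos_of_small {H : Type*} [NormedAddCommGroup H] [NormedSpace ℝ H] [FiniteDimensional ℝ H]
    (A : H →L[ℝ] H) (hA : ‖A‖ < 1) : 0 < (1 + A).det := by
  have hne : ∀ s ∈ Icc (0:ℝ) 1, (1 + s • A).det ≠ 0 := by
    intro s hs h0
    have : ¬ Function.Injective ((1 + s • A : H →L[ℝ] H) : H →ₗ[ℝ] H) := by
      intro hi
      have hu : IsUnit ((1 + s • A : H →L[ℝ] H) : H →ₗ[ℝ] H) :=
        (Module.End.isUnit_iff _).2 ⟨hi, LinearMap.injective_iff_surjective.1 hi⟩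
      exact ((LinearMap.isUnit_iff_isUnit_det _).1 hu).ne_zero h0
    apply this
    rw [← LinearMap.ker_eq_bot, LinearMap.ker_eq_bot']
    intro v hv
    by_contra hv0
    have hv1 : v = - (s • A v) := by
      rw [eq_neg_iff_add_eq_zero]; simpa using hv
    have h3 : ‖v‖ ≤ ‖A‖ * ‖v‖ := by
      calc ‖v‖ = ‖s • A v‖ := by conv_lhs => rw [hv1, norm_neg]
        _ = s * ‖A v‖ := by rw [norm_smul, Real.norm_of_nonneg hs.1]
        _ ≤ 1 * ‖A v‖ := by gcongr; exact hs.2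
        _ ≤ ‖A‖ * ‖v‖ := by rw [one_mul]; exact A.le_opNorm v
    have : 0 < ‖v‖ := norm_pos_iff.2 hv0
    nlinarith
  have hc : ContinuousOn (fun s : ℝ => (1 + s • A).det) (Icc 0 1) := by
    have := (ContinuousLinearMap.continuous_det (𝕜 := ℝ) (E := H))
    exact (this.comp (by fun_prop)).continuousOn
  by_contra hcon
  push Not at hcon
  have h0 : (0:ℝ) ∈ (fun s : ℝ => (1 + s • A).det) '' Icc 0 1 := by
    apply intermediate_value_Icc' zero_le_one hc
    refine ⟨by simpa using hcon, ?_⟩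
    have : (1 : H →L[ℝ] H).det = 1 := by
      simp [ContinuousLinearMap.det]
    simp [this]
  obtain ⟨s, hs, h⟩ := h0
  exact hne s hs h
end

section
open Set MeasureTheory Metric

lemma lipschitz_extend_zero {H : Type*} [NormedAddCommGroup H] [NormedSpace ℝ H]
    (u : H → H) (K : NNReal) (hu : LipschitzOnWith K u (closedBall 0 1))
    (h0 : ∀ x, ‖x‖ = 1 → u x = 0) :
    ∃ v : H → H, LipschitzWith K v ∧ (∀ x, ‖x‖ ≤ 1 → v x = u x) ∧ ∀ x, 1 ≤ ‖x‖ → v x = 0 := by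
  classical
  set v : H → H := fun x => if ‖x‖ ≤ 1 then u x else 0 with hv
  have hv1 : ∀ x, ‖x‖ ≤ 1 → v x = u x := fun x hx => by simp [hv, hx]
  have hv2 : ∀ x, 1 ≤ ‖x‖ → v x = 0 := by
    intro x hx
    by_cases h : ‖x‖ ≤ 1
    · rw [hv1 x h, h0 x (le_antisymm h hx)]
    · simp [hv, h]
  have key : ∀ x y, ‖x‖ ≤ 1 → 1 < ‖y‖ → dist (v x) (v y) ≤ K * dist x y := by
    intro x y hx hy
    have hc : ContinuousOn (fun s : ℝ => ‖x + s • (y - x)‖) (Icc 0 1) := by fun_prop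
    have : (1:ℝ) ∈ (fun s : ℝ => ‖x + s • (y - x)‖) '' Icc 0 1 := by
      apply intermediate_value_Icc zero_le_one hc
      refine ⟨by simpa using hx, by simpa using hy.le⟩
    obtain ⟨s, hs, hs1⟩ := this
    simp only at hs1
    rw [hv2 y hy.le, ← h0 _ hs1, hv1 x hx]
    have := hu.dist_le_mul x (by simpa using hx) (x + s • (y - x)) (by simp [hs1])
    refine this.trans ?_
    gcongr
    rw [dist_eq_norm, dist_eq_norm]
    have : x - (x + s • (y - x)) = s • (x - y) := by module
    rw [this, norm_smul, Real.norm_of_nonneg hs.1]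
    nlinarith [hs.2, norm_nonneg (x - y)]
  refine ⟨v, LipschitzWith.of_dist_le_mul fun x y => ?_, hv1, hv2⟩
  rcases le_or_gt ‖x‖ 1 with hx | hx <;> rcases le_or_gt ‖y‖ 1 with hy | hy
  · rw [hv1 x hx, hv1 y hy]
    exact hu.dist_le_mul x (by simpa using hx) y (by simpa using hy)
  · exact key x y hx hy
  · rw [dist_comm, dist_comm x y]; exact key y x hy hx
  · rw [hv2 x hx.le, hv2 y hy.le]; simp; positivity

lemma no_retraction {H : Type*} [NormedAddCommGroup H] [InnerProductSpace ℝ H]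
    [FiniteDimensional ℝ H] (r : H → H) (r' : H → H →L[ℝ] H) (K : NNReal)
    (hr : LipschitzOnWith K r (closedBall 0 1))
    (hd : ∀ x ∈ ball (0:H) 1, HasFDerivAt r (r' x) x)
    (hn : ∀ x ∈ ball (0:H) 1, ‖r x‖ = 1) (hs : ∀ x, ‖x‖ = 1 → r x = x) : False := by
  let _ : MeasurableSpace H := borel H
  have _ : BorelSpace H := ⟨rfl⟩
  set L : NNReal := K + 1 with hL
  have hu : LipschitzOnWith L (fun x => r x - x) (closedBall 0 1) := by
    have := hr.sub (LipschitzWith.id.lipschitzOnWith (s := closedBall (0:H) 1))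
    simpa using this
  obtain ⟨v, hvL, hv1, hv2⟩ := lipschitz_extend_zero (fun x => r x - x) L hu (by
    intro x hx; simp [hs x hx])
  have hLpos : (0:ℝ) < L := by rw [hL]; positivity
  have hvd : ∀ x ∈ ball (0:H) 1, HasFDerivAt v (r' x - 1) x := by
    intro x hx
    have h1 : HasFDerivAt (fun x => r x - x) (r' x - 1) x := (hd x hx).sub (hasFDerivAt_id x)
    refine h1.congr_of_eventuallyEq ?_
    filter_upwards [isOpen_ball.mem_nhds hx] with y hy
    exact hv1 y (mem_ball_zero_iff.1 hy).le
  have hvn : ∀ x ∈ ball (0:H) 1, ‖r' x - 1‖ ≤ L := fun x hx => (hvd x hx).le_of_lipschitz hvL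
  set δ : ℝ := 1 / (2 * L) with hδ
  have hδpos : 0 < δ := by positivity
  obtain ⟨N, t, c, ht, hc, hdet⟩ := det_lagrange (H := H) (min δ 1) (by positivity)
  set B := ball (0:H) 1 with hB
  have htL : ∀ s, 0 < s → s < min δ 1 → s * L < 1 / 2 ∧ s < 1 := by
    intro s hs hs2
    have h1 : s < δ := lt_of_lt_of_le hs2 (min_le_left _ _)
    refine ⟨?_, lt_of_lt_of_le hs2 (min_le_right _ _)⟩
    rw [hδ, lt_div_iff₀ (by positivity)] at h1
    linarith
  have hmain : ∀ s, 0 < s → s < min δ 1 →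
      IntegrableOn (fun x => (1 + s • (r' x - 1)).det) B volume ∧
      ∫ x in B, (1 + s • (r' x - 1)).det = volume.real B := by
    intro s hs0 hs1
    obtain ⟨hsL, hs11⟩ := htL s hs0 hs1
    set F : H → H := fun x => x + s • v x with hF
    have hFd : ∀ x ∈ B, HasFDerivWithinAt F (1 + s • (r' x - 1)) B x := fun x hx =>
      ((hasFDerivAt_id x).add ((hvd x hx).const_smul s)).hasFDerivWithinAt
    have hFi : Function.Injective F := by
      intro x y hxy
      simp only [hF] at hxy
      have h1 : x - y = s • (v y - v x) := by
        rw [smul_sub, sub_eq_sub_iff_add_eq_add, hxy]; abel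
      have h2 := hvL.dist_le_mul y x
      rw [dist_eq_norm, dist_eq_norm, norm_sub_rev y x] at h2
      have h3 : ‖x - y‖ = s * ‖v y - v x‖ := by
        conv_lhs => rw [h1, norm_smul, Real.norm_of_nonneg hs0.le]
      have h4 : ‖x - y‖ ≤ s * (L * ‖x - y‖) := by
        calc ‖x - y‖ = s * ‖v y - v x‖ := h3
          _ ≤ _ := by gcongr
      have h5 := norm_nonneg (x - y)
      have : ‖x - y‖ = 0 := by nlinarith
      exact sub_eq_zero.1 (norm_eq_zero.1 this)
    have himg : F '' B = B := by
      ext y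
      constructor
      · rintro ⟨x, hx, rfl⟩
        have hx' : ‖x‖ < 1 := by simpa [hB] using hx
        have : F x = (1 - s) • x + s • r x := by
          simp only [hF, hv1 x hx'.le]; module
        rw [hB, mem_ball_zero_iff, this]
        calc _ ≤ ‖(1 - s) • x‖ + ‖s • r x‖ := norm_add_le _ _
          _ = (1 - s) * ‖x‖ + s * 1 := by
            rw [norm_smul, norm_smul, hn x hx, Real.norm_of_nonneg hs0.le,
              Real.norm_of_nonneg (by linarith)]
          _ < 1 := by nlinarith
      · intro hy
        have hy' : ‖y‖ < 1 := by simpa [hB] using hy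
        have hcon : ContractingWith (1/2) (fun z => y - s • v z) := by
          refine ⟨by norm_num, LipschitzWith.of_dist_le_mul fun a b => ?_⟩
          rw [dist_sub_left, dist_eq_norm, ← smul_sub, norm_smul, Real.norm_of_nonneg hs0.le]
          have := hvL.dist_le_mul a b
          rw [dist_eq_norm] at this
          calc s * ‖v a - v b‖ ≤ s * (L * dist a b) := by gcongr
            _ = (s * L) * dist a b := by ring
            _ ≤ _ := by gcongr; simpa using hsL.le
        have hz := hcon.fixedPoint_isFixedPt
        set z := hcon.fixedPoint with hzdef
        have hz2 : y - s • v z = z := hz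
        refine ⟨z, ?_, ?_⟩
        · rw [hB, mem_ball_zero_iff]
          by_contra h
          push Not at h
          rw [hv2 z h] at hz2
          simp at hz2
          rw [← hz2] at h
          linarith
        · simp only [hF]; exact (sub_eq_iff_eq_add.1 hz2).symm
    have hpos : ∀ x ∈ B, |(1 + s • (r' x - 1)).det| = (1 + s • (r' x - 1)).det := by
      intro x hx
      refine abs_of_pos (det_pos_of_small _ ?_)
      rw [norm_smul, Real.norm_of_nonneg hs0.le]
      have := hvn x hx
      nlinarith
    have hI := integral_image_eq_integral_abs_det_fderiv_smul volume measurableSet_ball hFd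
      hFi.injOn (fun _ => (1:ℝ))
    have hJ := integrableOn_image_iff_integrableOn_abs_det_fderiv_smul volume measurableSet_ball hFd
      hFi.injOn (fun _ => (1:ℝ))
    rw [himg] at hI hJ
    have hJ2 := hJ.1 (by
      refine integrableOn_const ?_
      exact measure_ball_lt_top.ne)
    simp only [smul_eq_mul, mul_one] at hI hJ2
    refine ⟨hJ2.congr_fun hpos measurableSet_ball, ?_⟩
    rw [setIntegral_congr_fun measurableSet_ball hpos] at hI
    rw [← hI]
    simp [Measure.real]
  have hzero : ∀ x ∈ B, (1 + (r' x - 1)).det = 0 := by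
    intro x hx
    rw [add_sub_cancel]
    have hconst : HasFDerivAt (fun y => (inner ℝ (r y) (r y) : ℝ)) (0 : H →L[ℝ] ℝ) x := by
      refine (hasFDerivAt_const (1:ℝ) x).congr_of_eventuallyEq ?_
      filter_upwards [isOpen_ball.mem_nhds hx] with y hy
      rw [real_inner_self_eq_norm_sq, hn y hy]; norm_num
    have h2 := (hd x hx).inner ℝ (hd x hx)
    have h3 := h2.unique hconst
    by_contra hne
    have hu : IsUnit ((r' x : H →L[ℝ] H) : H →ₗ[ℝ] H) :=
      (LinearMap.isUnit_iff_isUnit_det _).2 (isUnit_iff_ne_zero.2 hne)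
    obtain ⟨w, hw⟩ := ((Module.End.isUnit_iff _).1 hu).2 (r x)
    have h4 := congrArg (fun A : H →L[ℝ] ℝ => A w) h3
    have hw' : r' x w = r x := hw
    simp [fderivInnerCLM_apply, hw', hn x hx] at h4
  have h1 : ∫ x in B, (1 + (r' x - 1)).det = 0 := by
    rw [setIntegral_congr_fun measurableSet_ball hzero]; simp
  have h2 : ∫ x in B, (1 + (r' x - 1)).det = volume.real B := by
    rw [show (fun x => (1 + (r' x - 1)).det) = fun x => ∑ i ∈ Finset.range N,
      c i * (1 + t i • (r' x - 1)).det from funext fun x => hdet _]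
    rw [integral_finsetSum]
    · simp_rw [integral_const_mul]
      rw [Finset.sum_congr rfl (g := fun i => c i * volume.real B)]
      · rw [← Finset.sum_mul, hc, one_mul]
      · intro i hi
        rw [(hmain (t i) (ht i).1 ((ht i).2 (Finset.mem_range.1 hi))).2]
    · intro i hi
      exact (hmain (t i) (ht i).1 ((ht i).2 (Finset.mem_range.1 hi))).1.const_mul _
  have h3 : 0 < volume.real B :=
    ENNReal.toReal_pos (measure_ball_pos volume _ one_pos).ne' measure_ball_lt_top.ne
  linarith
end

section
open Set MeasureTheory Metric

lemma brouwer_smooth {H : Type*} [NormedAddCommGroup H] [InnerProductSpace ℝ H]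
    [FiniteDimensional ℝ H] (g : H → H) (hg : ContDiff ℝ 1 g)
    (hb : ∀ x, ‖g x‖ < 1) : ∃ x, ‖x‖ ≤ 1 ∧ g x = x := by
  by_contra hcon
  push Not at hcon
  set w : H → H := fun x => x - g x with hw
  have hwc : ContDiff ℝ 1 w := contDiff_id.sub hg
  set D : H → ℝ := fun x => (inner ℝ x (w x))^2 + (inner ℝ (w x) (w x)) * (1 - inner ℝ x x) with hD
  have hDc : ContDiff ℝ 1 D := by
    have := contDiff_id (𝕜 := ℝ) (E := H) (n := 1)
    exact ((contDiff_id.inner ℝ hwc).pow 2).add ((hwc.inner ℝ hwc).mul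
      (contDiff_const.sub (contDiff_id.inner ℝ contDiff_id)))
  have hw0 : ∀ x, ‖x‖ ≤ 1 → 0 < (inner ℝ (w x) (w x) : ℝ) := by
    intro x hx
    apply real_inner_self_pos.2
    simp only [hw]
    exact sub_ne_zero.2 (hcon x hx).symm
  have hxw : ∀ x, ‖x‖ = 1 → 0 < (inner ℝ x (w x) : ℝ) := by
    intro x hx
    simp only [hw, inner_sub_right, real_inner_self_eq_norm_sq, hx]
    have := real_inner_le_norm x (g x)
    rw [hx] at this
    have := hb x
    linarith
  have hDpos : ∀ x, ‖x‖ ≤ 1 → 0 < D x := by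
    intro x hx
    have h1 := hw0 x hx
    simp only [hD]
    rcases hx.lt_or_eq with h | h
    · have : (inner ℝ x x : ℝ) < 1 := by
        rw [real_inner_self_eq_norm_sq]; nlinarith [norm_nonneg x]
      have : 0 < (inner ℝ (w x) (w x) : ℝ) * (1 - inner ℝ x x) := mul_pos h1 (by linarith)
      positivity
    · have := hxw x h
      rw [real_inner_self_eq_norm_sq x, h]
      norm_num
      positivity
  set lam : H → ℝ := fun x => (- inner ℝ x (w x) + Real.sqrt (D x)) / inner ℝ (w x) (w x) with hlam
  set r : H → H := fun x => x + lam x • w x with hrdef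
  have hlc : ∀ x, ‖x‖ ≤ 1 → ContDiffAt ℝ 1 lam x := by
    intro x hx
    refine ContDiffAt.div ?_ (hwc.inner ℝ hwc).contDiffAt (hw0 x hx).ne'
    exact ((contDiff_id.inner ℝ hwc).neg.contDiffAt).add (hDc.contDiffAt.sqrt (hDpos x hx).ne')
  have hrc : ∀ x, ‖x‖ ≤ 1 → ContDiffAt ℝ 1 r x := by
    intro x hx
    exact contDiffAt_id.add ((hlc x hx).smul hwc.contDiffAt)
  have hll : LocallyLipschitzOn (closedBall (0:H) 1) r := by
    intro x hx
    obtain ⟨K, t, ht, h⟩ := (hrc x (by simpa using hx)).exists_lipschitzOnWith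
    exact ⟨K, t, mem_nhdsWithin_of_mem_nhds ht, h⟩
  obtain ⟨K, hK⟩ := hll.exists_lipschitzOnWith_of_compact (isCompact_closedBall _ _)
  refine no_retraction r (fun x => fderiv ℝ r x) K hK ?_ ?_ ?_
  · intro x hx
    exact ((hrc x (mem_ball_zero_iff.1 hx).le).differentiableAt one_ne_zero).hasFDerivAt
  · intro x hx
    have hx' := (mem_ball_zero_iff.1 hx).le
    have h1 := hw0 x hx'
    have h2 := Real.sq_sqrt (hDpos x hx').le
    have h3 : (inner ℝ (r x) (r x) : ℝ) = 1 := by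
      simp only [hrdef, inner_add_left, inner_add_right, real_inner_smul_left, real_inner_smul_right,
        real_inner_comm x (w x)]
      have h4 : lam x * inner ℝ (w x) (w x) = - inner ℝ x (w x) + Real.sqrt (D x) := by
        simp only [hlam]; field_simp
      have h5 : D x = (inner ℝ x (w x))^2 + (inner ℝ (w x) (w x)) * (1 - inner ℝ x x) := rfl
      have h6 : (inner ℝ (w x) (w x) : ℝ) * (inner ℝ x x + lam x * inner ℝ x (w x) + (lam x * inner ℝ x (w x)
          + lam x * (lam x * inner ℝ (w x) (w x)))) = (inner ℝ (w x) (w x) : ℝ) * 1 := by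
        have h7 : (lam x * inner ℝ (w x) (w x) + inner ℝ x (w x))^2 = D x := by
          rw [h4]; linarith [h2]
        rw [h5] at h7
        linarith
      have := mul_left_cancel₀ h1.ne' h6
      rw [real_inner_comm (w x) x]
      rw [real_inner_comm (w x) x] at this
      linarith
    rw [real_inner_self_eq_norm_sq] at h3
    have := norm_nonneg (r x)
    nlinarith
  · intro x hx
    have h1 := hxw x hx
    have : lam x = 0 := by
      have h5 : D x = (inner ℝ x (w x))^2 := by
        simp only [hD, real_inner_self_eq_norm_sq x, hx]; ring
      simp only [hlam, h5, Real.sqrt_sq h1.le]; simp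
    simp [hrdef, this]

lemma brouwer_ball {H : Type*} [NormedAddCommGroup H] [InnerProductSpace ℝ H]
    [FiniteDimensional ℝ H] (f : H → H) (hf : Continuous f) 
    (hb : ∀ x, ‖f x‖ < 1) : ∃ x, f x = x := by
  by_contra hcon
  push Not at hcon
  have hcomp := isCompact_closedBall (0:H) 1
  obtain ⟨x0, hx0, hmin⟩ := hcomp.exists_isMinOn ⟨0, by simp⟩
    (f := fun x => ‖f x - x‖) (by fun_prop)
  set δ := ‖f x0 - x0‖ with hδ
  have hδ0 : 0 < δ := norm_pos_iff.2 (sub_ne_zero.2 (hcon x0))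
  obtain ⟨g, hg, hgf, -⟩ := hf.exists_contDiff_approx 1 (ε := fun x => min (δ / 2) (1 - ‖f x‖))
    (by fun_prop) (fun x => lt_min (by positivity) (by linarith [hb x]))
  obtain ⟨x, hx, hgx⟩ := brouwer_smooth g hg (by
    intro x
    have := (hgf x).trans_le (min_le_right _ _)
    rw [dist_eq_norm] at this
    have h2 : ‖g x‖ ≤ ‖g x - f x‖ + ‖f x‖ := by simpa using norm_add_le (g x - f x) (f x)
    linarith)
  have h1 := (hgf x).trans_le (min_le_left _ _)
  have h2 : δ ≤ ‖f x - x‖ := hmin (by simpa using hx)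
  rw [hgx, dist_comm, dist_eq_norm] at h1
  linarith

/-- Brouwer fixed point theorem for bounded continuous self-maps. -/
theorem brouwer_bounded {E : Type*} [NormedAddCommGroup E] [NormedSpace ℝ E]
    [FiniteDimensional ℝ E] (f : E → E) (hf : Continuous f) (K : ℝ)
    (hb : ∀ x, ‖f x‖ ≤ K) : ∃ x, f x = x := by
  set e := toEuclidean (E := E)
  set C : ℝ := ‖e.toContinuousLinearMap‖ * |K| + 1 with hC
  have hC0 : 0 < C := by positivity
  obtain ⟨y, hy⟩ := brouwer_ball (fun y => C⁻¹ • e (f (e.symm (C • y)))) (by fun_prop) (by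
    intro y
    rw [norm_smul, Real.norm_of_nonneg (by positivity), inv_mul_lt_iff₀ hC0, mul_one]
    have h1 := e.toContinuousLinearMap.le_opNorm (f (e.symm (C • y)))
    have h2 := (hb (e.symm (C • y))).trans (le_abs_self K)
    have h3 : ‖e.toContinuousLinearMap‖ * ‖f (e.symm (C • y))‖ ≤ ‖e.toContinuousLinearMap‖ * |K| := by gcongr
    simp only [ContinuousLinearEquiv.coe_coe] at h1
    linarith)
  refine ⟨e.symm (C • y), ?_⟩
  apply e.injective
  rw [ContinuousLinearEquiv.apply_symm_apply]
  conv_rhs => rw [← hy]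
  rw [smul_smul, mul_inv_cancel₀ hC0.ne', one_smul]
end

section
open Set Metric Filter Topology

lemma ode_global_exists {E : Type*} [NormedAddCommGroup E] [NormedSpace ℝ E] [CompleteSpace E]
    (v : ℝ → E → E) (K L : NNReal) (hv : ∀ t, LipschitzWith K (v t))
    (hc : ∀ x, Continuous fun t => v t x) (hb : ∀ t x, ‖v t x‖ ≤ L) (t₀ : ℝ) (x : E) :
    ∃ α : ℝ → E, α t₀ = x ∧ ∀ t, HasDerivAt α (v t (α t)) t := by
  have hloc : ∀ N : ℕ, ∃ α : ℝ → E, α t₀ = x ∧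
      ∀ t ∈ Ioo (t₀ - (N+1)) (t₀ + (N+1)), HasDerivAt α (v t (α t)) t := by
    intro N
    have hN : (0:ℝ) ≤ N + 1 := by positivity
    have hP : IsPicardLindelof v (tmin := t₀ - (N+1)) (tmax := t₀ + (N+1))
        ⟨t₀, by constructor <;> linarith⟩ x (L * (N+1)) 0 L K := by
      refine ⟨fun t _ => (hv t).lipschitzOnWith, fun y _ => (hc y).continuousOn,
        fun t _ y _ => hb t y, ?_⟩
      simp
    obtain ⟨α, h0, h1⟩ := hP.exists_eq_forall_mem_Icc_hasDerivWithinAt₀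
    exact ⟨α, h0, fun t ht => (h1 t (Ioo_subset_Icc_self ht)).hasDerivAt (Icc_mem_nhds ht.1 ht.2)⟩
  choose α h0 h1 using hloc
  have huniq : ∀ (M N : ℕ) t, |t - t₀| < M + 1 → |t - t₀| < N + 1 → α M t = α N t := by
    intro M N t hM hN
    have hmin : ∀ s, s ∈ Ioo (t₀ - (min (M:ℝ) N + 1)) (t₀ + (min (M:ℝ) N + 1)) →
        s ∈ Ioo (t₀ - ((M:ℝ)+1)) (t₀ + ((M:ℝ)+1)) ∧ s ∈ Ioo (t₀ - ((N:ℝ)+1)) (t₀ + ((N:ℝ)+1)) := by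
      intro s hs
      have h1 : (min (M:ℝ) N) ≤ M := min_le_left _ _
      have h2 : (min (M:ℝ) N) ≤ N := min_le_right _ _
      exact ⟨⟨by linarith [hs.1], by linarith [hs.2]⟩, ⟨by linarith [hs.1], by linarith [hs.2]⟩⟩
    have hp : (0:ℝ) ≤ min (M:ℝ) N := by positivity
    refine ODE_solution_unique_of_mem_Ioo (v := v) (s := fun _ => univ) (K := K) (t₀ := t₀)
      (a := t₀ - (min (M:ℝ) N + 1)) (b := t₀ + (min (M:ℝ) N + 1))
      (fun s _ => (hv s).lipschitzOnWith) ⟨by linarith, by linarith⟩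
      (fun s hs => ⟨h1 M s (hmin s hs).1, trivial⟩) (fun s hs => ⟨h1 N s (hmin s hs).2, trivial⟩)
      (by rw [h0, h0]) ?_
    have : |t - t₀| < min (M:ℝ) N + 1 := by
      rcases min_choice (M:ℝ) N with h | h <;> rw [h] <;> assumption
    rw [abs_lt] at this
    exact ⟨by linarith, by linarith⟩
  have hself : ∀ t : ℝ, |t - t₀| < ⌈|t - t₀|⌉₊ + 1 := fun t => by
    have := Nat.le_ceil |t - t₀|; linarith
  refine ⟨fun t => α ⌈|t - t₀|⌉₊ t, h0 _, fun t => ?_⟩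
  have h2 : HasDerivAt (α ⌈|t - t₀|⌉₊) (v t (α ⌈|t - t₀|⌉₊ t)) t := by
    apply h1
    have := hself t
    rw [abs_lt] at this
    exact ⟨by linarith, by linarith⟩
  refine h2.congr_of_eventuallyEq ?_
  have : ∀ᶠ s in 𝓝 t, |s - t₀| < ⌈|t - t₀|⌉₊ + 1 := by
    have hcs : ContinuousAt (fun s : ℝ => |s - t₀|) t := by fun_prop
    exact hcs.eventually_lt continuousAt_const (hself t)
  filter_upwards [this] with s hs
  exact huniq _ _ s (hself s) hs

lemma ode_dist_right {E : Type*} [NormedAddCommGroup E] [NormedSpace ℝ E]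
    (v : ℝ → E → E) (K : NNReal) (hv : ∀ t, LipschitzWith K (v t)) (f g : ℝ → E)
    (hf : ∀ t, HasDerivAt f (v t (f t)) t) (hg : ∀ t, HasDerivAt g (v t (g t)) t)
    (t : ℝ) (ht : 0 ≤ t) : dist (f t) (g t) ≤ dist (f 0) (g 0) * Real.exp (K * t) := by
  have := dist_le_of_trajectories_ODE (v := v) (K := K) (f := f) (g := g) (a := 0) (b := t) hv
    (HasDerivAt.continuousOn fun s _ => hf s) (fun s _ => (hf s).hasDerivWithinAt)
    (HasDerivAt.continuousOn fun s _ => hg s) (fun s _ => (hg s).hasDerivWithinAt) le_rfl t ⟨ht, le_rfl⟩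
  simpa using this

lemma ode_dist {E : Type*} [NormedAddCommGroup E] [NormedSpace ℝ E]
    (v : ℝ → E → E) (K : NNReal) (hv : ∀ t, LipschitzWith K (v t)) (f g : ℝ → E)
    (hf : ∀ t, HasDerivAt f (v t (f t)) t) (hg : ∀ t, HasDerivAt g (v t (g t)) t)
    (t : ℝ) : dist (f t) (g t) ≤ dist (f 0) (g 0) * Real.exp (K * |t|) := by
  rcases le_total 0 t with h | h
  · rw [abs_of_nonneg h]; exact ode_dist_right v K hv f g hf hg t h
  · rw [abs_of_nonpos h]
    have key : ∀ f : ℝ → E, (∀ t, HasDerivAt f (v t (f t)) t) →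
        ∀ t, HasDerivAt (fun s => f (-s)) (- v (-t) (f (-t))) t := by
      intro f hf t
      have := (hf (-t)).scomp t (hasDerivAt_neg t)
      simpa [Function.comp_def] using this
    have := ode_dist_right (fun t x => - v (-t) x) K (fun t => (hv (-t)).neg)
      (fun s => f (-s)) (fun s => g (-s)) (key f hf) (key g hg) (-t) (by linarith)
    simpa using this

lemma ode_flow {E : Type*} [NormedAddCommGroup E] [NormedSpace ℝ E] [CompleteSpace E]
    (v : ℝ → E → E) (K L : NNReal) (hv : ∀ t, LipschitzWith K (v t))
    (hc : ∀ x, Continuous fun t => v t x) (hb : ∀ t x, ‖v t x‖ ≤ L) :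
    ∃ φ : E → ℝ → E, (∀ x, φ x 0 = x) ∧ (∀ x t, HasDerivAt (φ x) (v t (φ x t)) t) ∧
      Continuous (fun z : E × ℝ => φ z.1 z.2) ∧
      ∀ T, (∀ t x, v (t + T) x = v t x) → ∀ x, φ x T = x → ∀ t, φ x (t + T) = φ x t := by
  choose φ h0 h1 using fun x => ode_global_exists v K L hv hc hb 0 x
  refine ⟨φ, h0, h1, ?_, ?_⟩
  · rw [continuous_iff_continuousAt]
    rintro ⟨x, t⟩
    set N : ℝ := |t| + 1
    have hco : ContinuousOn (fun z : E × ℝ => φ z.1 z.2) (univ ×ˢ Icc (-N) N) := by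
      apply continuousOn_prod_of_continuousOn_lipschitzOnWith _ (Real.exp (K * N)).toNNReal
      · intro y _
        exact HasDerivAt.continuousOn fun s _ => h1 y s
      · intro s hs
        refine LipschitzOnWith.of_dist_le_mul fun y _ z _ => ?_
        have := ode_dist v K hv (φ y) (φ z) (h1 y) (h1 z) s
        rw [h0, h0] at this
        refine this.trans ?_
        rw [Real.coe_toNNReal _ (Real.exp_pos _).le, mul_comm]
        have hsN : |s| ≤ N := abs_le.2 ⟨hs.1, hs.2⟩
        gcongr
    apply hco.continuousAt
    refine prod_mem_nhds univ_mem ?_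
    apply Icc_mem_nhds
    · have := neg_abs_le t; simp only [N]; linarith
    · have := le_abs_self t; simp only [N]; linarith
  · intro T hT x hx t
    have : (fun t => φ x (t + T)) = φ x := by
      refine ODE_solution_unique_univ (v := v) (s := fun _ => univ) (K := K) (t₀ := 0)
        (fun s => (hv s).lipschitzOnWith) (fun s => ⟨?_, trivial⟩) (fun s => ⟨h1 x s, trivial⟩) ?_
      · have := (h1 x (s + T)).comp_add_const s T
        rwa [hT] at this
      · simp [hx, h0]
    exact congrFun this t

lemma exit_time {E : Type*} [MetricSpace E] (W Wm : Set E) (hW : IsClosed W) (hWm : IsClosed Wm)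
    (T : ℝ) (hT : 0 ≤ T) (φ : E → ℝ → E) (hφ0 : ∀ x, φ x 0 = x)
    (hφ : Continuous (fun z : E × ℝ => φ z.1 z.2))
    (ha : ∀ x, ∀ t ∈ Ico 0 T, (∀ s ∈ Icc 0 t, φ x s ∈ W) → φ x t ∈ Wm →
      ∀ ε > 0, ∃ s ∈ Ioo t (t + ε), φ x s ∉ W)
    (hb : ∀ x, ∀ t ∈ Ico 0 T, (∀ s ∈ Icc 0 t, φ x s ∈ W) → φ x t ∉ Wm →
      ∃ ε > 0, ∀ s ∈ Ioo t (t + ε), φ x s ∈ W) :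
    ∃ τ : E → ℝ, ContinuousOn τ W ∧ ∀ x ∈ W, τ x ∈ Icc 0 T ∧ (∀ s ∈ Icc 0 (τ x), φ x s ∈ W) ∧
      (τ x < T → φ x (τ x) ∈ Wm) ∧ (0 < T → x ∈ Wm → τ x = 0) := by
  set S : E → Set ℝ := fun x => {t | t ∈ Icc 0 T ∧ ∀ s ∈ Icc 0 t, φ x s ∈ W} with hS
  set τ : E → ℝ := fun x => sSup (S x) with hτ
  have hφx : ∀ x, Continuous (φ x) := fun x => hφ.comp (by fun_prop : Continuous fun t : ℝ => (x, t))
  have hφt : ∀ t, Continuous (fun x => φ x t) := fun t =>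
    hφ.comp (by fun_prop : Continuous fun x : E => (x, t))
  have hbdd : ∀ x, BddAbove (S x) := fun x => ⟨T, fun t ht => ht.1.2⟩
  have h0 : ∀ x ∈ W, (0:ℝ) ∈ S x := by
    intro x hx
    refine ⟨⟨le_rfl, hT⟩, fun s hs => ?_⟩
    have : s = 0 := le_antisymm hs.2 hs.1
    rw [this, hφ0]; exact hx
  have hI : ∀ x ∈ W, τ x ∈ Icc 0 T := fun x hx =>
    ⟨le_csSup (hbdd x) (h0 x hx), csSup_le ⟨0, h0 x hx⟩ fun t ht => ht.1.2⟩
  have hlt : ∀ x ∈ W, ∀ s, 0 ≤ s → s < τ x → φ x s ∈ W := by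
    intro x hx s hs0 hs
    obtain ⟨t, ht, hst⟩ := exists_lt_of_lt_csSup ⟨0, h0 x hx⟩ hs
    exact ht.2 s ⟨hs0, hst.le⟩
  have hle : ∀ x ∈ W, ∀ s ∈ Icc 0 (τ x), φ x s ∈ W := by
    intro x hx s hs
    rcases (hI x hx).1.eq_or_lt with h | h
    · have : s = 0 := le_antisymm (h ▸ hs.2) hs.1
      rw [this, hφ0]; exact hx
    · have hcl : IsClosed (φ x ⁻¹' W) := hW.preimage (hφx x)
      have hsub : Ico 0 (τ x) ⊆ φ x ⁻¹' W := fun u hu => hlt x hx u hu.1 hu.2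
      have := closure_minimal hsub hcl
      rw [closure_Ico h.ne] at this
      exact this hs
  have hnot : ∀ x ∈ W, ∀ s, 0 ≤ s → s < τ x → φ x s ∉ Wm := by
    intro x hx s hs0 hs hm
    obtain ⟨u, hu, huW⟩ := ha x s ⟨hs0, hs.trans_le (hI x hx).2⟩
      (fun u hu => hle x hx u ⟨hu.1, hu.2.trans hs.le⟩) hm (τ x - s) (by linarith)
    exact huW (hle x hx u ⟨hs0.trans hu.1.le, by linarith [hu.2]⟩)
  have hexit : ∀ x ∈ W, τ x < T → φ x (τ x) ∈ Wm := by
    intro x hx hlt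
    by_contra hm
    obtain ⟨ε, hε, h⟩ := hb x (τ x) ⟨(hI x hx).1, hlt⟩ (hle x hx) hm
    set u := min T (τ x + ε / 2) with hu
    have hu1 : τ x < u := lt_min hlt (by linarith)
    have : u ∈ S x := by
      refine ⟨⟨(hI x hx).1.trans hu1.le, min_le_left _ _⟩, fun s hs => ?_⟩
      rcases le_or_gt s (τ x) with h1 | h1
      · exact hle x hx s ⟨hs.1, h1⟩
      · exact h s ⟨h1, by linarith [hs.2, min_le_right T (τ x + ε / 2)]⟩
    have := le_csSup (hbdd x) this
    linarith
  refine ⟨τ, ?_, fun x hx => ⟨hI x hx, hle x hx, hexit x hx, ?_⟩⟩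
  · intro x hx
    refine tendsto_order.2 ⟨fun c hc => ?_, fun c hc => ?_⟩
    · rcases lt_or_ge c 0 with h | h
      · filter_upwards [self_mem_nhdsWithin] with y hy
        exact h.trans_le (hI y hy).1
      · have hev : ∀ᶠ y in 𝓝 x, ∀ s ∈ Icc 0 c, φ y s ∉ Wm := by
          apply (isCompact_Icc (a := (0:ℝ)) (b := c)).eventually_forall_of_forall_eventually
          intro s hs
          have ho : IsOpen {z : E × ℝ | φ z.1 z.2 ∉ Wm} := (hWm.preimage hφ).isOpen_compl
          exact ho.mem_nhds (hnot x hx s hs.1 (hs.2.trans_lt hc))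
        filter_upwards [self_mem_nhdsWithin, mem_nhdsWithin_of_mem_nhds hev] with y hy hyc
        by_contra hcon
        push Not at hcon
        exact hyc (τ y) ⟨(hI y hy).1, hcon⟩ (hexit y hy (hcon.trans_lt (hc.trans_le (hI x hx).2)))
    · rcases (hI x hx).2.eq_or_lt with h | h
      · filter_upwards [self_mem_nhdsWithin] with y hy
        exact ((hI y hy).2.trans h.ge).trans_lt hc
      · obtain ⟨s, hs, hsW⟩ := ha x (τ x) ⟨(hI x hx).1, h⟩ (hle x hx) (hexit x hx h) (c - τ x)
          (by linarith)
        have hev : ∀ᶠ y in 𝓝 x, φ y s ∉ W := (hW.preimage (hφt s)).isOpen_compl.mem_nhds hsW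
        filter_upwards [self_mem_nhdsWithin, mem_nhdsWithin_of_mem_nhds hev] with y hy hyc
        by_contra hcon
        push Not at hcon
        exact hyc (hle y hy s ⟨(hI x hx).1.trans hs.1.le, by linarith [hs.2]⟩)
  · intro _ hm
    by_contra hne
    have := hnot x hx 0 le_rfl (lt_of_le_of_ne (hI x hx).1 (Ne.symm hne))
    rw [hφ0] at this
    exact this hm
end

section
open Set

/-- If h vanishes to first order at t, and its second derivative is at most C (h + |dh|), then h is not
positive right after `t`. -/
lemma second_order_ineq (h h1 h2 : ℝ → ℝ) (t ε C : ℝ) (hε : 0 < ε) 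
    (hd : ∀ s ∈ Ico t (t + ε), HasDerivAt h (h1 s) s)
    (hd1 : ∀ s ∈ Ico t (t + ε), HasDerivAt h1 (h2 s) s)
    (h0 : h t = 0) (h10 : h1 t = 0)
    (hineq : ∀ s ∈ Ioo t (t + ε), h2 s ≤ C * (|h s| + |h1 s|))
    (hpos : ∀ s ∈ Ioo t (t + ε), 0 < h s) : False := by
  have hC : ∃ C' : ℝ, 0 < C' ∧ ∀ s ∈ Ioo t (t + ε), h2 s ≤ C' * (|h s| + |h1 s|) := by
    refine ⟨|C| + 1, by positivity, fun s hs => (hineq s hs).trans ?_⟩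
    gcongr
    linarith [le_abs_self C]
  obtain ⟨D, hD, hin⟩ := hC
  set δ : ℝ := min (ε / 2) (min 1 (1 / (4 * D))) with hδ
  have hδ0 : 0 < δ := by positivity
  have hδε : δ < ε := (min_le_left _ _).trans_lt (by linarith)
  have hδ1 : δ ≤ 1 := (min_le_right _ _).trans (min_le_left _ _)
  have hδD : δ * D ≤ 1 / 4 := by
    have : δ ≤ 1 / (4 * D) := (min_le_right _ _).trans (min_le_right _ _)
    rw [le_div_iff₀ (by positivity)] at this
    linarith
  have hsub : Icc t (t + δ) ⊆ Ico t (t + ε) := fun s hs => ⟨hs.1, by linarith [hs.2]⟩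
  have hc1 : ContinuousOn h1 (Icc t (t + δ)) := HasDerivAt.continuousOn fun s hs => hd1 s (hsub hs)
  have hc : ContinuousOn h (Icc t (t + δ)) := HasDerivAt.continuousOn fun s hs => hd s (hsub hs)
  obtain ⟨m, hm, hmax⟩ := isCompact_Icc.exists_isMaxOn ⟨t, left_mem_Icc.2 (by linarith)⟩ hc1
  have hM : ∀ s ∈ Icc t (t + δ), h1 s ≤ h1 m := fun s hs => hmax hs
  -- the max is positive
  have hMpos : 0 < h1 m := by
    obtain ⟨c, hcc, he⟩ := exists_hasDerivAt_eq_slope h h1 (a := t) (b := t + δ) (by linarith) hc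
      (fun s hs => hd s (hsub (Ioo_subset_Icc_self hs)))
    have hp := hpos (t + δ) ⟨by linarith, by linarith⟩
    have : 0 < h1 c := by rw [he, h0]; apply div_pos <;> linarith
    exact this.trans_le (hM c (Ioo_subset_Icc_self hcc))
  have htm : t < m := by
    rcases hm.1.eq_or_lt with h | h
    · rw [← h, h10] at hMpos; exact absurd hMpos (lt_irrefl _)
    · exact h
  -- the last zero
  have hsub2 : Icc t m ⊆ Icc t (t + δ) := Icc_subset_Icc_right hm.2
  have hcl : IsClosed (Icc t m ∩ h1 ⁻¹' (Iic 0)) :=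
    (hc1.mono hsub2).preimage_isClosed_of_isClosed isClosed_Icc isClosed_Iic
  have hcpt : IsCompact (Icc t m ∩ h1 ⁻¹' (Iic 0)) :=
    isCompact_Icc.of_isClosed_subset hcl inter_subset_left
  obtain ⟨a, haM⟩ := hcpt.exists_isGreatest ⟨t, left_mem_Icc.2 htm.le, h10.le⟩
  have ha0 : h1 a ≤ 0 := haM.1.2
  have hat : t ≤ a := haM.1.1.1
  have ham : a < m := by
    rcases haM.1.1.2.eq_or_lt with h | h
    · rw [h] at ha0; linarith
    · exact h
  have hcp : ∀ s ∈ Ioc a m, 0 < h1 s := by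
    intro s hs
    by_contra hcon
    have := haM.2 ⟨⟨hat.trans hs.1.le, hs.2⟩, not_lt.1 hcon⟩
    linarith [hs.1]
  have hmδ : m ≤ t + δ := hm.2
  obtain ⟨c, hcI, he⟩ := exists_hasDerivAt_eq_slope h1 h2 ham
    (hc1.mono (Icc_subset_Icc hat hmδ))
    (fun s hs => hd1 s ⟨hat.trans hs.1.le, by linarith [hs.2]⟩)
  have hcI' : c ∈ Ioo t (t + ε) := ⟨hat.trans_lt hcI.1, by linarith [hcI.2]⟩
  have hcpos := hcp c ⟨hcI.1, hcI.2.le⟩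
  have hcM := hM c ⟨hcI'.1.le, by linarith [hcI.2]⟩
  have hhc : h c ≤ δ * h1 m := by
    obtain ⟨e, heI, hee⟩ := exists_hasDerivAt_eq_slope h h1 hcI'.1
      (hc.mono (Icc_subset_Icc le_rfl (by linarith [hcI.2])))
      (fun s hs => hd s ⟨hs.1.le, by linarith [hs.2, hcI'.2]⟩)
    rw [h0, sub_zero, eq_div_iff (by linarith [hcI'.1])] at hee
    have := hM e ⟨heI.1.le, by linarith [heI.2, hcI.2]⟩
    have h3 : c - t ≤ δ := by linarith [hcI.2]
    have h4 : 0 < c - t := by linarith [hcI'.1]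
    nlinarith
  have hb := hin c hcI'
  rw [abs_of_pos (hpos c hcI'), abs_of_pos hcpos] at hb
  have : h1 m ≤ h2 c * (m - a) := by
    rw [he, div_mul_cancel₀ _ (by linarith)]
    linarith
  have hma : m - a ≤ δ := by linarith
  have hb2 : h2 c ≤ D * (2 * h1 m) := by
    refine hb.trans ?_
    gcongr
    nlinarith
  have : h2 c * (m - a) ≤ D * (2 * h1 m) * δ := by
    calc h2 c * (m - a) ≤ D * (2 * h1 m) * (m - a) := by gcongr
      _ ≤ _ := by gcongr
  nlinarith
end

section
open Set Metric

lemma exists_shift_Ico (T : ℝ) (hT : 0 < T) (t : ℝ) : ∃ k : ℤ, t - k * T ∈ Ico 0 T := by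
  refine ⟨⌊t / T⌋, ?_, ?_⟩
  · have := Int.floor_le (t / T)
    rw [le_div_iff₀ hT] at this
    linarith
  · have := Int.lt_floor_add_one (t / T)
    rw [div_lt_iff₀ hT] at this
    linarith

lemma cutoff_field {E : Type*} [NormedAddCommGroup E] [NormedSpace ℝ E] [FiniteDimensional ℝ E]
    (F : ℝ → E → E) (hF : ContDiff ℝ 1 (fun z : ℝ × E => F z.1 z.2)) (T : ℝ) (hT : 0 < T)
    (hper : ∀ t x, F (t + T) x = F t x) (r : ℝ) (hr : 0 < r) :
    ∃ (v : ℝ → E → E) (K L : NNReal), (∀ t, LipschitzWith K (v t)) ∧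
      (∀ x, Continuous fun t => v t x) ∧ (∀ t x, ‖v t x‖ ≤ L) ∧
      (∀ t x, v (t + T) x = v t x) ∧ ∀ t x, ‖x‖ < r → v t x = F t x := by
  let χ : ContDiffBump (0 : E) := ⟨r, 2 * r, hr, by linarith⟩
  let ψ : ContDiffBump (0 : ℝ) := ⟨T + 1, T + 2, by linarith, by linarith⟩
  let G : ℝ × E → E := fun z => ψ z.1 • χ z.2 • F z.1 z.2
  have hG : ContDiff ℝ 1 G := by
    have h1 : ContDiff ℝ 1 (fun z : ℝ × E => ψ z.1) := ψ.contDiff.comp contDiff_fst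
    have h2 : ContDiff ℝ 1 (fun z : ℝ × E => χ z.2) := χ.contDiff.comp contDiff_snd
    exact h1.smul (h2.smul hF)
  have hGs : HasCompactSupport G := by
    refine HasCompactSupport.intro' (K := closedBall (0:ℝ) (T+2) ×ˢ closedBall (0:E) (2*r))
      ((isCompact_closedBall _ _).prod (isCompact_closedBall _ _))
      (isClosed_closedBall.prod isClosed_closedBall) ?_
    rintro ⟨t, x⟩ hz
    simp only [mem_prod, not_and_or, mem_closedBall, not_le] at hz
    rcases hz with h | h
    · simp only [G]; rw [ψ.zero_of_le_dist h.le, zero_smul]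
    · simp only [G]; rw [χ.zero_of_le_dist h.le, zero_smul, smul_zero]
  obtain ⟨K, hK⟩ := ContDiff.lipschitzWith_of_hasCompactSupport hGs hG one_ne_zero
  obtain ⟨L, hL⟩ := hGs.exists_bound_of_continuous hG.continuous
  have hperk : ∀ (k : ℤ) t x, F (t - k * T) x = F t x := by
    intro k t x
    have : Function.Periodic (fun t => F t x) T := fun t => hper t x
    exact this.sub_int_mul_eq k
  have hred : ∀ t, ∃ t', ∀ x, χ x • F t x = G (t', x) := by
    intro t
    obtain ⟨k, hk⟩ := exists_shift_Ico T hT t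
    refine ⟨t - k * T, fun x => ?_⟩
    simp only [G]
    rw [hperk, ψ.one_of_mem_closedBall, one_smul]
    rw [mem_closedBall, dist_zero_right, Real.norm_eq_abs, abs_of_nonneg hk.1]
    show _ ≤ T + 1
    linarith [hk.2]
  refine ⟨fun t x => χ x • F t x, K, L.toNNReal, ?_, ?_, ?_, ?_, ?_⟩
  · intro t
    obtain ⟨t', h⟩ := hred t
    refine LipschitzWith.of_dist_le_mul fun x y => ?_
    beta_reduce
    rw [h, h]
    refine (hK.dist_le_mul _ _).trans ?_
    gcongr
    simp [Prod.dist_eq]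
  · intro x
    exact continuous_const.smul (hF.continuous.comp (by fun_prop : Continuous fun t : ℝ => (t, x)))
  · intro t x
    obtain ⟨t', h⟩ := hred t
    beta_reduce
    rw [h]
    exact (hL _).trans (Real.le_coe_toNNReal L)
  · intro t x; simp only [hper]
  · intro t x hx
    simp only
    rw [χ.one_of_mem_closedBall, one_smul]
    rw [mem_closedBall, dist_zero_right]; exact hx.le
end

section
open Set Filter Topology
open scoped RealInnerProductSpace

/-- (q, p) solves dq = p, dp = A on I. -/
def SolA {ι V : Type*} [NormedAddCommGroup V] [NormedSpace ℝ V]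
    (A : ι → ℝ → (ι → V) → (ι → V) → V) (q p : ℝ → ι → V) (I : Set ℝ) : Prop :=
  ∀ t ∈ I, ∀ i, HasDerivAt (fun s => q s i) (p t i) t ∧
    HasDerivAt (fun s => p s i) (A i t (q t) (p t)) t

lemma right_lt (g : ℝ → ℝ) (c t : ℝ) (hg : HasDerivAt g c t) (hc : c < 0) :
    ∀ᶠ s in 𝓝[>] t, g s < g t := by
  have h := (hasDerivAt_iff_tendsto_slope.1 hg).mono_left
    (nhdsWithin_mono t (fun s (hs : t < s) => (ne_of_gt hs : s ≠ t)))
  filter_upwards [h.eventually_lt_const hc, self_mem_nhdsWithin] with s hs hst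
  have hst : 0 < s - t := sub_pos.2 hst
  rw [slope_def_field, div_neg_iff] at hs
  rcases hs with h | h <;> linarith [h.1, h.2]

lemma right_gt (g : ℝ → ℝ) (c t : ℝ) (hg : HasDerivAt g c t) (hc : 0 < c) :
    ∀ᶠ s in 𝓝[>] t, g t < g s := by
  have := right_lt (fun s => - g s) (-c) t hg.neg (by linarith)
  filter_upwards [this] with s hs
  linarith

lemma ev_right {P : ℝ → Prop} {t : ℝ} (h : ∀ᶠ s in 𝓝[>] t, P s) :
    ∃ ε > 0, ∀ s ∈ Ioo t (t + ε), P s := by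
  obtain ⟨u, hu, h⟩ := (mem_nhdsGT_iff_exists_Ioo_subset).1 h
  refine ⟨u - t, sub_pos.2 hu, fun s hs => h ⟨hs.1, by linarith [hs.2]⟩⟩

lemma ev_right' {P : ℝ → Prop} {t ε : ℝ} (hε : 0 < ε) (h : ∀ s ∈ Ioo t (t + ε), P s) :
    ∀ᶠ s in 𝓝[>] t, P s :=
  mem_of_superset (Ioo_mem_nhdsGT (by linarith)) h

section
variable {ι V : Type*} [NormedAddCommGroup V] [InnerProductSpace ℝ V]
  {A : ι → ℝ → (ι → V) → (ι → V) → V} {q p : ℝ → ι → V} {I : Set ℝ}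

lemma SolA.sq (h : SolA A q p I) {t : ℝ} (ht : t ∈ I) (i : ι) :
    HasDerivAt (fun s => ‖q s i‖ ^ 2) (2 * ⟪q t i, p t i⟫) t := by
  exact (h t ht i).1.norm_sq

lemma SolA.psq (h : SolA A q p I) {t : ℝ} (ht : t ∈ I) (i : ι) :
    HasDerivAt (fun s => ‖p s i‖ ^ 2) (2 * ⟪p t i, A i t (q t) (p t)⟫) t := by
  exact (h t ht i).2.norm_sq

lemma SolA.ip (h : SolA A q p I) {t : ℝ} (ht : t ∈ I) (i : ι) :
    HasDerivAt (fun s => ⟪q s i, p s i⟫) (‖p t i‖ ^ 2 + ⟪q t i, A i t (q t) (p t)⟫) t := by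
  have := (h t ht i).1.inner ℝ (h t ht i).2
  rw [real_inner_self_eq_norm_sq, add_comm] at this
  exact this

/-- hypothesis (3), abstractly -/
def HExit (A : ι → ℝ → (ι → V) → (ι → V) → V) (R : ι → ℝ) : Prop :=
  ∀ t₀ : ℝ, ∀ q0 p0 : ι → V, (∀ j, ‖q0 j‖ ≤ R j) → (∃ i, ‖q0 i‖ = R i) →
    (∀ i, ‖q0 i‖ = R i → ⟪q0 i, p0 i⟫ = 0) →
    ∀ (I : Set ℝ) (q p : ℝ → ι → V), IsOpen I → t₀ ∈ I → SolA A q p I → q t₀ = q0 → p t₀ = p0 →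
      ∃ ε > (0 : ℝ), ∀ t ∈ Ioo t₀ (t₀ + ε), t ∈ I → ∃ j, R j < ‖q t j‖

variable {R : ι → ℝ}

lemma no_touch (hex : HExit A R) (hI : IsOpen I) (h : SolA A q p I) (t : ℝ)
    (ht : t ∈ I)
    (hev : ∀ᶠ s in 𝓝 t, ∀ i, ‖q s i‖ ≤ R i) : ∀ i, ‖q t i‖ < R i := by
  by_contra hcon
  push Not at hcon
  obtain ⟨i, hi⟩ := hcon
  have hle := hev.self_of_nhds
  have htan : ∀ i, ‖q t i‖ = R i → ⟪q t i, p t i⟫ = 0 := by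
    intro i hi
    have hmax : IsLocalMax (fun s => ‖q s i‖ ^ 2) t := by
      filter_upwards [hev] with s hs
      simp only [hi]
      have := hs i
      gcongr
    have := hmax.hasDerivAt_eq_zero (h.sq ht i)
    linarith
  obtain ⟨ε, hε, hout⟩ := hex t (q t) (p t) hle ⟨i, le_antisymm (hle i) hi⟩ htan I q p hI ht h rfl rfl
  have h1 : ∀ᶠ s in 𝓝[>] t, s ∈ I → ∃ j, R j < ‖q s j‖ := ev_right' hε hout
  have h2 : ∀ᶠ s in 𝓝[>] t, s ∈ I := mem_nhdsWithin_of_mem_nhds (hI.mem_nhds ht)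
  obtain ⟨s, hs1, hs2, hs3⟩ := (h1.and (h2.and (mem_nhdsWithin_of_mem_nhds hev))).exists
  obtain ⟨j, hj⟩ := hs1 hs2
  exact absurd (hs3 j) (not_le.2 hj)

lemma SolA.cont (h : SolA A q p I) {t : ℝ} (ht : t ∈ I) (i : ι) :
    ContinuousAt (fun s => q s i) t := (h t ht i).1.continuousAt

lemma SolA.contp (h : SolA A q p I) {t : ℝ} (ht : t ∈ I) (i : ι) :
    ContinuousAt (fun s => p s i) t := (h t ht i).2.continuousAt

lemma tangent_nonneg [Finite ι] (hR : ∀ i, 0 < R i) (hex : HExit A R)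
    (hloc : ∀ t₀ q0 p0, ∃ I q p, IsOpen I ∧ t₀ ∈ I ∧ SolA A q p I ∧ q t₀ = q0 ∧ p t₀ = p0)
    (t : ℝ) (q0 p0 : ι → V) (j : ι) (hj : ‖q0 j‖ = R j) (hjt : ⟪q0 j, p0 j⟫ = 0)
    (hlt : ∀ i, i ≠ j → ‖q0 i‖ < R i) : 0 ≤ ‖p0 j‖ ^ 2 + ⟪q0 j, A j t q0 p0⟫ := by
  by_contra hneg
  push Not at hneg
  obtain ⟨I, q, p, hI, ht, h, rfl, rfl⟩ := hloc t q0 p0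
  have hle : ∀ i, ‖q t i‖ ≤ R i := fun i => by
    by_cases hi : i = j
    · rw [hi, hj]
    · exact (hlt i hi).le
  have htan : ∀ i, ‖q t i‖ = R i → ⟪q t i, p t i⟫ = 0 := by
    intro i hi
    by_cases hij : i = j
    · rw [hij, hjt]
    · exact absurd hi (hlt i hij).ne
  obtain ⟨ε, hε, hout⟩ := hex t (q t) (p t) hle ⟨j, hj⟩ htan I q p hI ht h rfl rfl
  have h1 : ∀ᶠ s in 𝓝[>] t, s ∈ I → ∃ j, R j < ‖q s j‖ := ev_right' hε hout
  have h2 : ∀ᶠ s in 𝓝[>] t, s ∈ I := mem_nhdsWithin_of_mem_nhds (hI.mem_nhds ht)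
  have h3 : ∀ᶠ s in 𝓝[>] t, ⟪q s j, p s j⟫ < 0 := by
    have := right_lt _ _ t (h.ip ht j) hneg
    simpa only [hjt] using this
  have h4 : ∀ᶠ s in 𝓝[>] t, ∀ i, i ≠ j → ‖q s i‖ < R i := by
    rw [eventually_all]
    intro i
    by_cases hi : i = j
    · simp [hi]
    · filter_upwards [mem_nhdsWithin_of_mem_nhds
        ((h.cont ht i).norm.eventually_lt continuousAt_const (hlt i hi))] with s hs _
      exact hs
  obtain ⟨δ, hδ, h5⟩ := ev_right (h1.and (h2.and (h3.and h4)))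
  have hsub : ∀ s ∈ Icc t (t + δ / 2), s ∈ I := by
    intro s hs
    rcases hs.1.eq_or_lt with e | e
    · exact e ▸ ht
    · exact (h5 s ⟨e, by linarith [hs.2]⟩).2.1
  obtain ⟨c, hc, he⟩ := exists_hasDerivAt_eq_slope (fun s => ‖q s j‖ ^ 2)
    (fun s => 2 * ⟪q s j, p s j⟫) (a := t) (b := t + δ / 2) (by linarith)
    (HasDerivAt.continuousOn fun s hs => h.sq (hsub s hs) j)
    (fun s hs => h.sq (hsub s (Ioo_subset_Icc_self hs)) j)
  have hc3 := (h5 c ⟨hc.1, by linarith [hc.2]⟩).2.2.1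
  rw [eq_div_iff (by linarith)] at he
  obtain ⟨a1, a2, a3, a4⟩ := h5 (t + δ / 2) ⟨by linarith, by linarith⟩
  have hlt2 : ‖q (t + δ / 2) j‖ ^ 2 < R j ^ 2 := by
    rw [← hj]
    nlinarith
  obtain ⟨k, hk⟩ := a1 a2
  by_cases hkj : k = j
  · subst hkj
    have := lt_of_pow_lt_pow_left₀ 2 (hR k).le hlt2
    linarith
  · linarith [a4 k hkj]

lemma stay_inside [Finite ι] (h : SolA A q p I) {t : ℝ} (ht : t ∈ I) (P : ℝ) (hP : 0 < P)
    (hR : ∀ i, 0 < R i)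
    (hq : ∀ i, ‖q t i‖ ≤ R i) (hp : ∀ i, ‖p t i‖ ≤ P)
    (hqt : ∀ i, ‖q t i‖ = R i → ⟪q t i, p t i⟫ < 0)
    (hpt : ∀ i, ‖p t i‖ = P → ⟪p t i, A i t (q t) (p t)⟫ < 0) :
    ∀ᶠ s in 𝓝[>] t, ∀ i, ‖q s i‖ ≤ R i ∧ ‖p s i‖ ≤ P := by
  rw [eventually_all]
  intro i
  refine Filter.Eventually.and ?_ ?_
  · rcases (hq i).eq_or_lt with e | e
    · filter_upwards [right_lt _ _ t (h.sq ht i) (by linarith [hqt i e])] with s hs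
      rw [e] at hs
      exact (lt_of_pow_lt_pow_left₀ 2 (hR i).le hs).le
    · filter_upwards [mem_nhdsWithin_of_mem_nhds
        ((h.cont ht i).norm.eventually_lt continuousAt_const e)] with s hs
      exact hs.le
  · rcases (hp i).eq_or_lt with e | e
    · filter_upwards [right_lt _ _ t (h.psq ht i) (by linarith [hpt i e])] with s hs
      rw [e] at hs
      exact (lt_of_pow_lt_pow_left₀ 2 hP.le hs).le
    · filter_upwards [mem_nhdsWithin_of_mem_nhds
        ((h.contp ht i).norm.eventually_lt continuousAt_const e)] with s hs
      exact hs.le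

lemma must_exit [Fintype ι] [DecidableEq ι] (hR : ∀ i, 0 < R i) (hex : HExit A R)
    (hA : ∀ i, ContDiff ℝ 1 (fun u : ℝ × (ι → V) × (ι → V) => A i u.1 u.2.1 u.2.2))
    (hloc : ∀ t₀ q0 p0, ∃ I q p, IsOpen I ∧ t₀ ∈ I ∧ SolA A q p I ∧ q t₀ = q0 ∧ p t₀ = p0)
    (hI : IsOpen I) (h : SolA A q p I) {t : ℝ} (ht : t ∈ I) (j : ι) (hj : ‖q t j‖ = R j)
    (hjp : 0 ≤ ⟪q t j, p t j⟫) (hev : ∀ᶠ s in 𝓝[>] t, ∀ i, ‖q s i‖ ≤ R i) : False := by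
  have hRj := hR j
  -- step 1
  have hj0 : ⟪q t j, p t j⟫ = 0 := by
    by_contra hne
    have hpos : 0 < ⟪q t j, p t j⟫ := lt_of_le_of_ne hjp (Ne.symm hne)
    have h1 := right_gt _ _ t (h.sq ht j) (by linarith)
    obtain ⟨s, hs1, hs2⟩ := (h1.and hev).exists
    rw [hj] at hs1
    have := lt_of_pow_lt_pow_left₀ 2 (norm_nonneg _) hs1
    linarith [hs2 j]
  have hIev : ∀ᶠ s in 𝓝[>] t, s ∈ I := mem_nhdsWithin_of_mem_nhds (hI.mem_nhds ht)
  -- step 2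
  have hlt : ∀ᶠ s in 𝓝[>] t, ∀ i, ‖q s i‖ < R i := by
    obtain ⟨ε, hε, h1⟩ := ev_right (hIev.and hev)
    refine ev_right' hε fun s hs => no_touch hex hI h s (h1 s hs).1 ?_
    filter_upwards [Ioo_mem_nhds hs.1 hs.2] with u hu using (h1 u hu).2
  -- step 3
  set B : ℝ × (ι → V) × (ι → V) → ℝ := fun u => ‖u.2.2 j‖ ^ 2 + ⟪u.2.1 j, A j u.1 u.2.1 u.2.2⟫ with hB
  have hBs : ContDiff ℝ 1 B := by
    have e1 : ContDiff ℝ 1 (fun u : ℝ × (ι → V) × (ι → V) => u.2.1 j) := by fun_prop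
    have e2 : ContDiff ℝ 1 (fun u : ℝ × (ι → V) × (ι → V) => u.2.2 j) := by fun_prop
    exact (e2.norm_sq ℝ).add (e1.inner ℝ (hA j))
  obtain ⟨K, N, hN, hK⟩ := (hBs.contDiffAt (x := (t, q t, p t))).exists_lipschitzOnWith
  set qπ : ℝ → ι → V := fun s => Function.update (q s) j ((R j / ‖q s j‖) • q s j) with hqπ
  set pπ : ℝ → ι → V := fun s => Function.update (p s) j
    (p s j - (⟪q s j, p s j⟫ / ‖q s j‖ ^ 2) • q s j) with hpπ
  have hqc : ContinuousAt q t := continuousAt_pi.2 fun i => h.cont ht i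
  have hpc : ContinuousAt p t := continuousAt_pi.2 fun i => h.contp ht i
  have hqj := h.cont ht j
  have hpj := h.contp ht j
  have hne : ‖q t j‖ ≠ 0 := by rw [hj]; exact hRj.ne'
  have hqπc : ContinuousAt qπ t := by
    refine hqc.update j ?_
    exact (continuousAt_const.div hqj.norm hne).smul hqj
  have hpπc : ContinuousAt pπ t := by
    refine hpc.update j ?_
    exact hpj.sub (((hqj.inner hpj).div (hqj.norm.pow 2) (pow_ne_zero 2 hne)).smul hqj)
  have hqπt : qπ t = q t := by
    simp only [hqπ]; rw [hj, div_self hRj.ne', one_smul, Function.update_eq_self]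
  have hpπt : pπ t = p t := by
    simp only [hpπ]; rw [hj0, zero_div, zero_smul, sub_zero, Function.update_eq_self]
  have hN1 : ∀ᶠ s in 𝓝[>] t, (s, q s, p s) ∈ N := by
    have : ContinuousAt (fun s => (s, q s, p s)) t := continuousAt_id.prodMk (hqc.prodMk hpc)
    exact mem_nhdsWithin_of_mem_nhds (this.preimage_mem_nhds hN)
  have hN2 : ∀ᶠ s in 𝓝[>] t, (s, qπ s, pπ s) ∈ N := by
    have : ContinuousAt (fun s => (s, qπ s, pπ s)) t := continuousAt_id.prodMk (hqπc.prodMk hpπc)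
    refine mem_nhdsWithin_of_mem_nhds (this.preimage_mem_nhds ?_)
    rw [hqπt, hpπt]; exact hN
  have hhalf : ∀ᶠ s in 𝓝[>] t, R j / 2 < ‖q s j‖ :=
    mem_nhdsWithin_of_mem_nhds (continuousAt_const.eventually_lt hqj.norm (by rw [hj]; linarith))
  obtain ⟨ε, hε, H⟩ := ev_right (hIev.and (hlt.and (hN1.and (hN2.and hhalf))))
  have hIco : ∀ s ∈ Ico t (t + ε), s ∈ I := by
    intro s hs
    rcases hs.1.eq_or_lt with e | e
    · exact e ▸ ht
    · exact (H s ⟨e, hs.2⟩).1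
  refine second_order_ineq (fun s => R j ^ 2 - ‖q s j‖ ^ 2) (fun s => - (2 * ⟪q s j, p s j⟫))
    (fun s => - (2 * B (s, q s, p s))) t ε (2 * K / R j) hε
    (fun s hs => (h.sq (hIco s hs) j).const_sub _)
    (fun s hs => ((h.ip (hIco s hs) j).const_mul 2).neg) (by simp [hj]) (by simp [hj0]) ?_ ?_
  · intro s hs
    obtain ⟨b1, b2, b3, b4, b5⟩ := H s hs
    have hq0 : 0 < ‖q s j‖ := by linarith
    have hq1 := b2 j
    have hBπ : 0 ≤ B (s, qπ s, pπ s) := by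
      apply tangent_nonneg hR hex hloc s (qπ s) (pπ s) j
      · simp only [hqπ, Function.update_self]
        rw [norm_smul, norm_div, norm_norm, Real.norm_of_nonneg hRj.le, div_mul_cancel₀ _ hq0.ne']
      · simp only [hqπ, hpπ, Function.update_self]
        rw [real_inner_smul_left, inner_sub_right, real_inner_smul_right, real_inner_self_eq_norm_sq,
          div_mul_cancel₀ _ (pow_ne_zero 2 hq0.ne')]
        simp
      · intro i hi
        simp only [hqπ, Function.update_of_ne hi]
        exact b2 i
    have hd := hK.dist_le_mul _ b4 _ b3
    rw [Real.dist_eq] at hd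
    have hdist : dist (s, qπ s, pπ s) (s, q s, p s) ≤
        (|R j ^ 2 - ‖q s j‖ ^ 2| + |-(2 * ⟪q s j, p s j⟫)|) / R j := by
      have hD0 : 0 ≤ (|R j ^ 2 - ‖q s j‖ ^ 2| + |-(2 * ⟪q s j, p s j⟫)|) / R j := by positivity
      rw [Prod.dist_eq, dist_self, Prod.dist_eq]
      refine max_le hD0 (max_le ?_ ?_)
      · rw [dist_pi_le_iff hD0]
        intro i
        by_cases hi : i = j
        · subst hi
          simp only [hqπ, Function.update_self]
          rw [dist_eq_norm]
          have : (R i / ‖q s i‖) • q s i - q s i = ((R i - ‖q s i‖) / ‖q s i‖) • q s i := by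
            rw [sub_div, div_self hq0.ne', sub_smul, one_smul]
          rw [this, norm_smul, norm_div, norm_norm, div_mul_cancel₀ _ hq0.ne', Real.norm_eq_abs,
            abs_of_pos (by linarith), le_div_iff₀ hRj, abs_of_pos (by nlinarith)]
          have := abs_nonneg (-(2 * ⟪q s i, p s i⟫))
          nlinarith
        · simp only [hqπ, Function.update_of_ne hi, dist_self]; exact hD0
      · rw [dist_pi_le_iff hD0]
        intro i
        by_cases hi : i = j
        · subst hi
          simp only [hpπ, Function.update_self]
          rw [dist_eq_norm, sub_sub_cancel_left, norm_neg, norm_smul, norm_div, norm_pow, norm_norm,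
            Real.norm_eq_abs, abs_neg, abs_mul, abs_two, sq, ← div_div, div_mul_cancel₀ _ hq0.ne',
            div_le_div_iff₀ hq0 hRj]
          have := abs_nonneg ⟪q s i, p s i⟫
          have h3 := abs_nonneg (R i ^ 2 - ‖q s i‖ ^ 2)
          have h4 : 0 ≤ |R i ^ 2 - ‖q s i‖ ^ 2| * ‖q s i‖ := by positivity
          have h5 : |⟪q s i, p s i⟫| * R i ≤ |⟪q s i, p s i⟫| * (2 * ‖q s i‖) := by
            gcongr; linarith
          simp only [sq] at h4 ⊢
          linarith
        · simp only [hpπ, Function.update_of_ne hi, dist_self]; exact hD0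
    have h6 : |B (s, qπ s, pπ s) - B (s, q s, p s)| ≤
      K * ((|R j ^ 2 - ‖q s j‖ ^ 2| + |-(2 * ⟪q s j, p s j⟫)|) / R j) := hd.trans (by gcongr)
    have h7 := (le_abs_self _).trans h6
    have e : 2 * (K:ℝ) / R j * (|R j ^ 2 - ‖q s j‖ ^ 2| + |-(2 * ⟪q s j, p s j⟫)|) =
      2 * (K * ((|R j ^ 2 - ‖q s j‖ ^ 2| + |-(2 * ⟪q s j, p s j⟫)|) / R j)) := by ring
    rw [e]
    linarith
  · intro s hs
    have := (H s hs).2.1 j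
    have h0 := norm_nonneg (q s j)
    nlinarith
end
end

section
open Set Filter Topology Metric
open scoped RealInnerProductSpace

/-- radial clamp to a ball -/
noncomputable def clampB {V : Type*} [NormedAddCommGroup V] [NormedSpace ℝ V] (r : ℝ) (x : V) : V :=
  (r / max r ‖x‖) • x

lemma clampB_cont {V : Type*} [NormedAddCommGroup V] [NormedSpace ℝ V] {r : ℝ} (hr : 0 < r) :
    Continuous (clampB r : V → V) := by
  have h : ∀ x : V, max r ‖x‖ ≠ 0 := fun x => (hr.trans_le (le_max_left _ _)).ne'
  exact (continuous_const.div (continuous_const.max continuous_norm) h).smul continuous_id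

lemma clampB_norm {V : Type*} [NormedAddCommGroup V] [NormedSpace ℝ V] {r : ℝ} (hr : 0 < r) (x : V) :
    ‖clampB r x‖ ≤ r := by
  have h : 0 < max r ‖x‖ := hr.trans_le (le_max_left _ _)
  rw [clampB, norm_smul, Real.norm_of_nonneg (by positivity), div_mul_eq_mul_div, div_le_iff₀ h]
  gcongr
  exact le_max_right _ _

lemma clampB_eq {V : Type*} [NormedAddCommGroup V] [NormedSpace ℝ V] {r : ℝ} (hr : 0 < r) (x : V)
    (hx : ‖x‖ ≤ r) : clampB r x = x := by
  rw [clampB, max_eq_left hx, div_self hr.ne', one_smul]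

/-- rotation of the plane -/
noncomputable def rotP (θ : ℝ) (x : EuclideanSpace ℝ (Fin 2)) : EuclideanSpace ℝ (Fin 2) :=
  !₂[Real.cos θ * x 0 - Real.sin θ * x 1, Real.sin θ * x 0 + Real.cos θ * x 1]

lemma rotP_inner (θ : ℝ) (x y : EuclideanSpace ℝ (Fin 2)) : ⟪rotP θ x, rotP θ y⟫ = ⟪x, y⟫ := by
  simp only [rotP, PiLp.inner_apply, Fin.sum_univ_two, RCLike.inner_apply, conj_trivial]
  simp
  have := Real.sin_sq_add_cos_sq θ
  linear_combination (y 0 * x 0 + y 1 * x 1) * this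

lemma rotP_norm (θ : ℝ) (x : EuclideanSpace ℝ (Fin 2)) : ‖rotP θ x‖ = ‖x‖ := by
  rw [norm_eq_sqrt_real_inner, rotP_inner, ← norm_eq_sqrt_real_inner]

lemma rotP_zero (x : EuclideanSpace ℝ (Fin 2)) : rotP 0 x = x := by
  ext i; fin_cases i <;> simp [rotP]

lemma rotP_pi (x : EuclideanSpace ℝ (Fin 2)) : rotP Real.pi x = -x := by
  ext i; fin_cases i <;> simp [rotP]

lemma solA_of_deriv {ι V : Type*} [Fintype ι] [NormedAddCommGroup V] [NormedSpace ℝ V]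
    (A : ι → ℝ → (ι → V) → (ι → V) → V) (α : ℝ → (ι → V) × (ι → V)) (I : Set ℝ)
    (h : ∀ t ∈ I, HasDerivAt α ((α t).2, fun i => A i t (α t).1 (α t).2) t) :
    SolA A (fun s => (α s).1) (fun s => (α s).2) I := by
  intro t ht i
  have h1 := (h t ht).fst
  have h2 := (h t ht).snd
  exact ⟨hasDerivAt_pi.1 h1 i, hasDerivAt_pi.1 h2 i⟩

/-- the plane -/
abbrev PlaneE : Type := EuclideanSpace ℝ (Fin 2)


lemma rotP_cont' {X : Type} [TopologicalSpace X] (a : X → ℝ) (b : X → EuclideanSpace ℝ (Fin 2)) (ha : Continuous a)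
   (hb : Continuous b) : Continuous fun x => rotP (a x) (b x) := by
  unfold rotP
  refine (PiLp.continuous_toLp 2 _).comp (continuous_pi fun i => ?_)
  fin_cases i
  · simp; fun_prop
  · simp; fun_prop

attribute [irreducible] rotP
lemma rotAll_cont {ι : Type} [Fintype ι] : Continuous (fun w : ℝ × (ι → PlaneE) × (ι → PlaneE) =>
    ((fun i => rotP w.1 (w.2.1 i), fun i => rotP w.1 (w.2.2 i)) : (ι → PlaneE) × (ι → PlaneE))) := by
  refine Continuous.prodMk (continuous_pi fun i => ?_) (continuous_pi fun i => ?_)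
  · apply rotP_cont'
    · exact continuous_fst
    · fun_prop
  · apply rotP_cont'
    · exact continuous_fst
    · fun_prop

set_option maxHeartbeats 1000000 in
lemma main_abs {ι : Type} [Fintype ι] [DecidableEq ι]
    (A : ι → ℝ → (ι → PlaneE) → (ι → PlaneE) →
      PlaneE) (T : ℝ) (hT : 0 < T) (R : ι → ℝ) (hR : ∀ i, 0 < R i)
    (hA : ∀ i, ContDiff ℝ 1 (fun u : ℝ × (ι → PlaneE) ×
      (ι → PlaneE) => A i u.1 u.2.1 u.2.2))
    (hper : ∀ i t q p, A i (t + T) q p = A i t q p)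
    (hex : HExit A R) (P : ℝ) (hP : 0 < P)
    (hpt : ∀ i t q p, (∀ j, ‖q j‖ ≤ R j) → ‖p i‖ = P → ⟪p i, A i t q p⟫ < 0) :
    ∃ q p : ℝ → ι → PlaneE, SolA A q p univ ∧ (∀ t i, q (t + T) i = q t i) ∧
      (∀ t i, p (t + T) i = p t i) ∧ (∀ t i, ‖q t i‖ < R i) := by
  set F : ℝ → (ι → PlaneE) × (ι → PlaneE) → (ι → PlaneE) × (ι → PlaneE) :=
    fun t z => (z.2, fun i => A i t z.1 z.2) with hF
  have hFs : ContDiff ℝ 1 (fun z : ℝ × (ι → PlaneE) × (ι → PlaneE) => F z.1 z.2) := by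
    refine ContDiff.prodMk (by fun_prop) ?_
    exact contDiff_pi.2 hA
  have hFper : ∀ t x, F (t + T) x = F t x := by
    intro t x; simp only [hF, hper]
  have hloc : ∀ t₀ q0 p0, ∃ I q p, IsOpen I ∧ t₀ ∈ I ∧ SolA A q p I ∧ q t₀ = q0 ∧ p t₀ = p0 := by
    intro t₀ q0 p0
    obtain ⟨v, K, L, h1, h2, h3, h4, h5⟩ := cutoff_field F hFs T hT hFper (‖(q0, p0)‖ + 1)
      (by positivity)
    obtain ⟨α, hα0, hα⟩ := ode_global_exists v K L h1 h2 h3 t₀ (q0, p0)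
    have hαc : Continuous α := continuous_iff_continuousAt.2 fun t => (hα t).continuousAt
    refine ⟨{t | ‖α t‖ < ‖(q0, p0)‖ + 1}, fun s => (α s).1, fun s => (α s).2,
      isOpen_lt hαc.norm continuous_const, ?_, ?_, ?_, ?_⟩
    · simp [hα0]
    · refine solA_of_deriv A α _ fun t ht => ?_
      have := hα t
      rwa [h5 t _ ht] at this
    · simp [hα0]
    · simp [hα0]
  set r : ℝ := P + ∑ i, R i + 1 with hr
  have hsum : 0 ≤ ∑ i, R i := Finset.sum_nonneg fun i _ => (hR i).le
  obtain ⟨v, K, L, h1, h2, h3, h4, h5⟩ := cutoff_field F hFs T hT hFper r (by positivity)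
  obtain ⟨φ, hφ0, hφd, hφc, hφT⟩ := ode_flow v K L h1 h2 h3
  have hφx : ∀ x, Continuous (φ x) := fun x =>
    hφc.comp (by fun_prop : Continuous fun t : ℝ => (x, t))
  set W : Set ((ι → PlaneE) × (ι → PlaneE)) := {z | ∀ i, ‖z.1 i‖ ≤ R i ∧ ‖z.2 i‖ ≤ P} with hWdef
  set Wm : Set ((ι → PlaneE) × (ι → PlaneE)) := {z | z ∈ W ∧ ∃ i, ‖z.1 i‖ = R i ∧ 0 ≤ ⟪z.1 i, z.2 i⟫}
    with hWm
  have hWc : IsClosed W := by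
    have : W = ⋂ i, ({z | ‖z.1 i‖ ≤ R i} ∩ {z | ‖z.2 i‖ ≤ P}) := by
      ext z; simp [hWdef]
    rw [this]
    refine isClosed_iInter fun i => IsClosed.inter ?_ ?_
    · exact isClosed_le (by fun_prop) continuous_const
    · exact isClosed_le (by fun_prop) continuous_const
  have hWmc : IsClosed Wm := by
    have : Wm = W ∩ ⋃ i, ({z | ‖z.1 i‖ = R i} ∩ {z | 0 ≤ ⟪z.1 i, z.2 i⟫}) := by
      ext z; simp [hWm]
    rw [this]
    refine hWc.inter (isClosed_iUnion_of_finite fun i => IsClosed.inter ?_ ?_)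
    · exact isClosed_eq (by fun_prop) continuous_const
    · exact isClosed_le continuous_const (by fun_prop)
  have hWr : ∀ z ∈ W, ‖z‖ < r := by
    intro z hz
    rw [Prod.norm_def]
    refine max_lt ?_ ?_
    · refine (pi_norm_lt_iff (by positivity)).2 fun i => (hz i).1.trans_lt ?_
      have := Finset.single_le_sum (f := R) (fun i _ => (hR i).le) (Finset.mem_univ i)
      linarith
    · refine (pi_norm_lt_iff (by positivity)).2 fun i => (hz i).2.trans_lt ?_
      linarith
  have hIo : ∀ x, IsOpen {s | ‖φ x s‖ < r} := fun x => isOpen_lt (hφx x).norm continuous_const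
  have hsol : ∀ x, SolA A (fun s => (φ x s).1) (fun s => (φ x s).2) {s | ‖φ x s‖ < r} := by
    intro x
    refine solA_of_deriv A (φ x) _ fun t ht => ?_
    have := hφd x t
    rwa [h5 t _ ht] at this
  obtain ⟨τ, hτc, hτ⟩ := exit_time W Wm hWc hWmc T hT.le φ hφ0 hφc
    (by
      intro x t _ hin hm ε hε
      by_contra hcon
      push Not at hcon
      obtain ⟨hmW, j, hj, hjp⟩ := hm
      refine must_exit hR hex hA hloc (hIo x) (hsol x) (t := t) (hWr _ hmW) j hj hjp ?_
      exact ev_right' hε fun s hs i => (hcon s hs i).1)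
    (by
      intro x t ht hin hm
      have hxW : φ x t ∈ W := hin t ⟨ht.1, le_rfl⟩
      refine ev_right (stay_inside (hsol x) (t := t) (hWr _ hxW) P hP hR (fun i => (hxW i).1)
        (fun i => (hxW i).2) ?_ ?_)
      · intro i hi
        by_contra hcon
        exact hm ⟨hxW, i, hi, not_lt.1 hcon⟩
      · intro i hi
        exact hpt i t _ _ (fun j => (hxW j).1) hi)
  -- the Brouwer map
  set ρ : (ι → PlaneE) × (ι → PlaneE) → (ι → PlaneE) × (ι → PlaneE) :=
    fun z => (fun i => clampB (R i) (z.1 i), fun i => clampB P (z.2 i)) with hρ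
  have hρc : Continuous ρ := by
    refine Continuous.prodMk (continuous_pi fun i => ?_) (continuous_pi fun i => ?_)
    · exact (clampB_cont (hR i)).comp (by fun_prop)
    · exact (clampB_cont hP).comp (by fun_prop)
  have hρW : ∀ z, ρ z ∈ W := fun z i => ⟨clampB_norm (hR i) _, clampB_norm hP _⟩
  have hρe : ∀ z ∈ W, ρ z = z := fun z hz => Prod.ext
    (funext fun i => clampB_eq (hR i) _ (hz i).1) (funext fun i => clampB_eq hP _ (hz i).2)
  set rot : ℝ → (ι → PlaneE) × (ι → PlaneE) → (ι → PlaneE) × (ι → PlaneE) :=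
    fun θ z => (fun i => rotP θ (z.1 i), fun i => rotP θ (z.2 i)) with hrot
  have hrotc : Continuous (fun w : ℝ × (ι → PlaneE) × (ι → PlaneE) => rot w.1 w.2) := rotAll_cont
  have hrotW : ∀ θ, ∀ z ∈ W, rot θ z ∈ W := fun θ z hz i => by
    simp only [hrot, rotP_norm]; exact hz i
  have hrotWm : ∀ θ, ∀ z ∈ Wm, rot θ z ∈ Wm := by
    rintro θ z ⟨hz, i, hi, hip⟩
    refine ⟨hrotW θ z hz, i, ?_, ?_⟩
    · simp only [hrot, rotP_norm]; exact hi
    · simp only [hrot, rotP_inner]; exact hip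
  have hτρ : Continuous (fun z => τ (ρ z)) := hτc.comp_continuous hρc hρW
  set Φ : (ι → PlaneE) × (ι → PlaneE) → (ι → PlaneE) × (ι → PlaneE) :=
    fun z => rot (Real.pi * (T - τ (ρ z)) / T) (φ (ρ z) (τ (ρ z))) with hΦ
  have hΦc : Continuous Φ := by
    refine hrotc.comp (Continuous.prodMk ?_ (hφc.comp (hρc.prodMk hτρ)))
    exact ((continuous_const.mul (continuous_const.sub hτρ)).div_const T)
  have hΦW : ∀ z, Φ z ∈ W := fun z => hrotW _ _
    ((hτ _ (hρW z)).2.1 _ ⟨(hτ _ (hρW z)).1.1, le_rfl⟩)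
  obtain ⟨x, hx⟩ := brouwer_bounded Φ hΦc r fun z => (hWr _ (hΦW z)).le
  have hxW : x ∈ W := hx ▸ hΦW x
  simp only [hΦ, hρe x hxW] at hx
  obtain ⟨hτI, hτin, hτm, hτ0⟩ := hτ x hxW
  have hτT : τ x = T := by
    by_contra hne
    have hm := hτm (lt_of_le_of_ne hτI.2 hne)
    have hxm : x ∈ Wm := by
      have := hrotWm (Real.pi * (T - τ x) / T) _ hm
      rwa [hx] at this
    have h0 := hτ0 hT hxm
    rw [h0, sub_zero, mul_div_assoc, div_self hT.ne', mul_one, hφ0] at hx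
    obtain ⟨_, i, hi, _⟩ := hxm
    have hxi : rotP Real.pi (x.1 i) = x.1 i := congrFun (congrArg Prod.fst hx) i
    rw [rotP_pi] at hxi
    have h2x : (2 : ℝ) • x.1 i = 0 := by
      rw [two_smul]
      nth_rewrite 1 [← hxi]
      exact neg_add_cancel _
    have hx0 : x.1 i = 0 := (smul_eq_zero.1 h2x).resolve_left two_ne_zero
    rw [hx0, norm_zero] at hi
    exact (hR i).ne hi
  have hxT : φ x T = x := by
    rw [hτT, sub_self, mul_zero, zero_div] at hx
    have : ∀ z, rot 0 z = z := fun z => by simp only [hrot, rotP_zero]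
    rwa [this] at hx
  have hφper := hφT T h4 x hxT
  have hin : ∀ t, φ x t ∈ W := by
    intro t
    obtain ⟨k, hk⟩ := exists_shift_Ico T hT t
    have hp : Function.Periodic (φ x) T := hφper
    rw [← hp.sub_int_mul_eq k]
    exact hτin _ ⟨hk.1, by rw [hτT]; exact hk.2.le⟩
  have hsolU : SolA A (fun s => (φ x s).1) (fun s => (φ x s).2) univ :=
    fun t _ => hsol x t (hWr _ (hin t))
  refine ⟨fun s => (φ x s).1, fun s => (φ x s).2, hsolU, ?_, ?_, ?_⟩
  · intro t i; simp only [hφper]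
  · intro t i; simp only [hφper]
  · intro t
    exact no_touch hex isOpen_univ hsolU t trivial (Filter.Eventually.of_forall fun s i => (hin s i).1)
end

theorem forced_oscillations_disc_blocks
    (n : ℕ) (hn : 1 ≤ n) (T : ℝ) (hT : 0 < T)
    (R : Fin n → ℝ) (hR : ∀ i, 0 < R i)
    (f ffr : Fin n → ℝ → EuclideanSpace ℝ (Fin 2) → EuclideanSpace ℝ (Fin 2) →
      EuclideanSpace ℝ (Fin 2))
    (fint : Fin n → ℝ → (Fin n → EuclideanSpace ℝ (Fin 2)) →
      (Fin n → EuclideanSpace ℝ (Fin 2)) → EuclideanSpace ℝ (Fin 2))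
    (hf_smooth : ∀ i, ContDiff ℝ (⊤ : ℕ∞)
      (fun u : ℝ × EuclideanSpace ℝ (Fin 2) × EuclideanSpace ℝ (Fin 2) =>
        f i u.1 u.2.1 u.2.2))
    (hffr_smooth : ∀ i, ContDiff ℝ (⊤ : ℕ∞)
      (fun u : ℝ × EuclideanSpace ℝ (Fin 2) × EuclideanSpace ℝ (Fin 2) =>
        ffr i u.1 u.2.1 u.2.2))
    (hfint_smooth : ∀ i, ContDiff ℝ (⊤ : ℕ∞)
      (fun u : ℝ × (Fin n → EuclideanSpace ℝ (Fin 2)) ×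
          (Fin n → EuclideanSpace ℝ (Fin 2)) => fint i u.1 u.2.1 u.2.2))
    (hf_per : ∀ i t q p, f i (t + T) q p = f i t q p)
    (hffr_per : ∀ i t q p, ffr i (t + T) q p = ffr i t q p)
    (hfint_per : ∀ i t q p, fint i (t + T) q p = fint i t q p)
    -- (1) boundedness of the external and interaction forces
    (hf_bdd : ∀ i, ∃ C : ℝ, ∀ t q p, ‖f i t q p‖ ≤ C)
    (hfint_bdd : ∀ i, ∃ C : ℝ, ∀ t q p, ‖fint i t q p‖ ≤ C)
    -- (2) friction condition (H1):
    -- sup { ⟨ffrᵢ(t,q,p),p⟩/⟨p,p⟩ : t ∈ [0,T], |q| ≤ Rᵢ, ⟨p,p⟩ > dᵢ } < 0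
    (hfr : ∀ i, ∃ d > (0 : ℝ), ∃ c < (0 : ℝ), ∀ t ∈ Icc (0 : ℝ) T,
      ∀ q : EuclideanSpace ℝ (Fin 2), ‖q‖ ≤ R i →
      ∀ p : EuclideanSpace ℝ (Fin 2), d < ⟪p, p⟫ →
        ⟪ffr i t q p, p⟫ / ⟪p, p⟫ ≤ c)
    -- (3) solutions starting on the boundary of the product of discs
    -- (tangentially) leave it immediately
    (hexit : ∀ t₀ : ℝ, ∀ q0 p0 : Fin n → EuclideanSpace ℝ (Fin 2),
      (∀ j, ‖q0 j‖ ≤ R j) →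
      (∃ i, ‖q0 i‖ = R i) →
      (∀ i, ‖q0 i‖ = R i → ⟪q0 i, p0 i⟫ = 0) →
      ∀ (I : Set ℝ) (q p : ℝ → Fin n → EuclideanSpace ℝ (Fin 2)),
        IsOpen I → t₀ ∈ I →
        IsSolution1 n f ffr fint q p I → q t₀ = q0 → p t₀ = p0 →
        ∃ ε > (0 : ℝ), ∀ t ∈ Ioo t₀ (t₀ + ε), t ∈ I →
          ∃ j, R j < ‖q t j‖) :
    -- conclusion: a T-periodic solution staying strictly inside the product of discs
    ∃ q p : ℝ → Fin n → EuclideanSpace ℝ (Fin 2),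
      IsSolution1 n f ffr fint q p univ ∧
      (∀ t i, q (t + T) i = q t i) ∧
      (∀ t i, p (t + T) i = p t i) ∧
      (∀ t i, ‖q t i‖ < R i) := by
  choose d hd c hc hfr using hfr
  choose C hC using hf_bdd
  choose C' hC' using hfint_bdd
  have hterm : ∀ i, 0 ≤ d i + (|C i| + |C' i|) / (-c i) := fun i => by
    have h1 := hd i
    have h2 : 0 < -c i := by linarith [hc i]
    positivity
  set P : ℝ := 1 + ∑ i, (d i + (|C i| + |C' i|) / (-c i)) with hPdef
  have hPi : ∀ i, 1 + (d i + (|C i| + |C' i|) / (-c i)) ≤ P := fun i => by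
    have := Finset.single_le_sum (f := fun i => d i + (|C i| + |C' i|) / (-c i))
      (fun i _ => hterm i) (Finset.mem_univ i)
    simp only [hPdef]
    linarith
  have hP1 : 1 ≤ P := by
    have := Finset.sum_nonneg (fun i (_ : i ∈ Finset.univ) => hterm i)
    simp only [hPdef]
    linarith
  have hP : 0 < P := by linarith
  have main := main_abs (fun i t q p => f i t (q i) (p i) + ffr i t (q i) (p i) + fint i t q p)
    T hT R hR ?_ ?_ ?_ P hP ?_
  · exact main
  · intro i
    have hle : (1 : WithTop ℕ∞) ≤ ((⊤ : ℕ∞) : WithTop ℕ∞) := by exact_mod_cast le_top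
    have hg : ContDiff ℝ 1 (fun u : ℝ × (Fin n → PlaneE) × (Fin n → PlaneE) =>
        ((u.1, u.2.1 i, u.2.2 i) : ℝ × PlaneE × PlaneE)) := by fun_prop
    exact ((((hf_smooth i).of_le hle).comp hg).add (((hffr_smooth i).of_le hle).comp hg)).add
      ((hfint_smooth i).of_le hle)
  · intro i t q p
    simp only [hf_per, hffr_per, hfint_per]
  · exact hexit
  · intro i t q p hq hp
    have hd0 := hd i
    have hc0 := hc i
    have hcn : 0 < -c i := by linarith
    have hPd : d i + 1 ≤ P := by
      have h1 := hPi i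
      have h2 : 0 ≤ (|C i| + |C' i|) / (-c i) := by positivity
      linarith
    have hPC : |C i| + |C' i| < P * (-c i) := by
      have h1 := hPi i
      have h3 : (|C i| + |C' i|) / (-c i) < P := by linarith
      rwa [div_lt_iff₀ hcn] at h3
    have hpp : ⟪p i, p i⟫ = P ^ 2 := by rw [real_inner_self_eq_norm_sq, hp]
    have hfric : ⟪p i, ffr i t (q i) (p i)⟫ ≤ c i * P ^ 2 := by
      obtain ⟨k, hk⟩ := exists_shift_Ico T hT t
      have hper : Function.Periodic (fun t => ffr i t (q i) (p i)) T := fun t => hffr_per i t _ _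
      have h1 := hfr i (t - k * T) ⟨hk.1, hk.2.le⟩ (q i) (hq i) (p i) (by rw [hpp]; nlinarith)
      have h2 : ffr i (t - k * T) (q i) (p i) = ffr i t (q i) (p i) := hper.sub_int_mul_eq k
      rw [h2, hpp, div_le_iff₀ (by positivity)] at h1
      rw [real_inner_comm]
      exact h1
    have hb1 : ⟪p i, f i t (q i) (p i)⟫ ≤ P * |C i| := by
      refine (real_inner_le_norm _ _).trans ?_
      rw [hp]
      gcongr
      exact (hC i t _ _).trans (le_abs_self _)
    have hb2 : ⟪p i, fint i t q p⟫ ≤ P * |C' i| := by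
      refine (real_inner_le_norm _ _).trans ?_
      rw [hp]
      gcongr
      exact (hC' i t _ _).trans (le_abs_self _)
    simp only [inner_add_right]
    nlinarith
end

section
/- Suppose that f and g are bounded and that there exists d > 0 such that sup{ ⟨h(t, q, p), p⟩ / ⟨p, p⟩ : t ∈ [0,T], q ∈ K, ⟨p, p⟩ > d } < 0. Then there exists c > 0 with the following property: for every solution (q, p) : I → E × E of the system q̇ = p, ṗ = f(t, q, p) + h(t, q, p) + g(t, q, p), and every time t ∈ I ∩ [0, T] at which q(t) ∈ K and ‖p(t)‖² = c, the derivative at t of the function s ↦ ‖p(s)‖² is strictly negative. -/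
open Set
open scoped RealInnerProductSpace

/-- `(q, p)` is a solution of `q̇ = p`, `ṗ = f(t,q,p) + h(t,q,p) + g(t,q,p)` on `I ⊆ ℝ`. -/
def IsSolution2 {E : Type*} [NormedAddCommGroup E] [InnerProductSpace ℝ E]
    (f h g : ℝ → E → E → E) (q p : ℝ → E) (I : Set ℝ) : Prop :=
  ∀ t ∈ I,
    HasDerivAt q (p t) t ∧
    HasDerivAt p (f t (q t) (p t) + h t (q t) (p t) + g t (q t) (p t)) t

theorem kinetic_energy_decreases_on_high_level_set
    {E : Type*} [NormedAddCommGroup E] [InnerProductSpace ℝ E] [FiniteDimensional ℝ E]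
    (K : Set E) (hK : IsCompact K) (T : ℝ) (hT : 0 < T)
    (f h g : ℝ → E → E → E)
    (hf_cont : Continuous fun u : ℝ × E × E => f u.1 u.2.1 u.2.2)
    (hh_cont : Continuous fun u : ℝ × E × E => h u.1 u.2.1 u.2.2)
    (hg_cont : Continuous fun u : ℝ × E × E => g u.1 u.2.1 u.2.2)
    -- f and g are bounded
    (hf_bdd : ∃ C : ℝ, ∀ t q p, ‖f t q p‖ ≤ C)
    (hg_bdd : ∃ C : ℝ, ∀ t q p, ‖g t q p‖ ≤ C)
    -- sup { ⟨h(t,q,p),p⟩/⟨p,p⟩ : t ∈ [0,T], q ∈ K, ⟨p,p⟩ > d } < 0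
    (hfr : ∃ d > (0 : ℝ), ∃ c < (0 : ℝ), ∀ t ∈ Icc (0 : ℝ) T, ∀ q ∈ K,
      ∀ p : E, d < ⟪p, p⟫ → ⟪h t q p, p⟫ / ⟪p, p⟫ ≤ c) :
    ∃ c > (0 : ℝ), ∀ (I : Set ℝ) (q p : ℝ → E),
      IsSolution2 f h g q p I →
      ∀ t ∈ I ∩ Icc (0 : ℝ) T, q t ∈ K → ‖p t‖ ^ 2 = c →
        deriv (fun s => ‖p s‖ ^ 2) t < 0 := by
  obtain ⟨A, hA⟩ := hf_bdd
  obtain ⟨B, hB⟩ := hg_bdd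
  obtain ⟨d, hd, c, hc, H⟩ := hfr
  have hA0 : 0 ≤ A := (norm_nonneg _).trans (hA 0 0 0)
  have hB0 : 0 ≤ B := (norm_nonneg _).trans (hB 0 0 0)
  obtain ⟨R, hR1, hRd, hR⟩ : ∃ R : ℝ, 1 ≤ R ∧ d < R ∧ A + B + c * R < 0 := by
    have hq : 0 ≤ (A + B + 1) / (-c) := div_nonneg (by linarith) (by linarith)
    refine ⟨d + 1 + (A + B + 1) / (-c), by linarith, by linarith, ?_⟩
    have e : c * ((A + B + 1) / (-c)) = -(A + B + 1) := by
      have := hc.ne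
      field_simp
    have : c * d < 0 := mul_neg_of_neg_of_pos hc hd
    nlinarith
  refine ⟨R ^ 2, by positivity, ?_⟩
  intro I q p hs t ht hq hp
  have hn : ‖p t‖ = R := by
    rwa [sq_eq_sq₀ (norm_nonneg _) (by linarith)] at hp
  have hpp : ⟪p t, p t⟫ = R ^ 2 := by rw [real_inner_self_eq_norm_sq, hp]
  rw [((hs t ht.1).2.norm_sq).deriv]
  have h1 := H t ht.2 (q t) hq (p t) (by rw [hpp]; nlinarith)
  rw [hpp, div_le_iff₀ (by positivity)] at h1
  have h2 : ⟪f t (q t) (p t), p t⟫ ≤ A * R := by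
    refine (real_inner_le_norm _ _).trans ?_
    rw [hn]
    exact mul_le_mul_of_nonneg_right (hA _ _ _) (by linarith)
  have h3 : ⟪g t (q t) (p t), p t⟫ ≤ B * R := by
    refine (real_inner_le_norm _ _).trans ?_
    rw [hn]
    exact mul_le_mul_of_nonneg_right (hB _ _ _) (by linarith)
  rw [real_inner_comm, inner_add_left, inner_add_left]
  have h4 : R * (A + B + c * R) < 0 := mul_neg_of_pos_of_neg (by linarith) hR
  nlinarith
end

section
/- Under the same hypotheses, there exists c > 0 such that the sublevel set {‖p‖² ≤ c} is forward invariant over K: for every solution (q, p) : [t₀, t₁] → E × E of the system q̇ = p, ṗ = f(t, q, p) + h(t, q, p) + g(t, q, p) with [t₀, t₁] ⊆ [0, T], if q(t) ∈ K for all t ∈ [t₀, t₁] and ‖p(t₀)‖² ≤ c, then ‖p(t)‖² ≤ c for all t ∈ [t₀, t₁]. -/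
open Set
open scoped RealInnerProductSpace

/-- `(q, p)` is a solution of `q̇ = p`, `ṗ = f(t,q,p) + h(t,q,p) + g(t,q,p)` on `I ⊆ ℝ`. -/
def IsSolution3 {E : Type*} [NormedAddCommGroup E] [InnerProductSpace ℝ E]
    (f h g : ℝ → E → E → E) (q p : ℝ → E) (I : Set ℝ) : Prop :=
  ∀ t ∈ I,
    HasDerivAt q (p t) t ∧
    HasDerivAt p (f t (q t) (p t) + h t (q t) (p t) + g t (q t) (p t)) t

theorem kinetic_energy_sublevel_forward_invariant
    {E : Type*} [NormedAddCommGroup E] [InnerProductSpace ℝ E] [FiniteDimensional ℝ E]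
    (K : Set E) (hK : IsCompact K) (T : ℝ) (hT : 0 < T)
    (f h g : ℝ → E → E → E)
    (hf_cont : Continuous fun u : ℝ × E × E => f u.1 u.2.1 u.2.2)
    (hh_cont : Continuous fun u : ℝ × E × E => h u.1 u.2.1 u.2.2)
    (hg_cont : Continuous fun u : ℝ × E × E => g u.1 u.2.1 u.2.2)
    -- f and g are bounded
    (hf_bdd : ∃ C : ℝ, ∀ t q p, ‖f t q p‖ ≤ C)
    (hg_bdd : ∃ C : ℝ, ∀ t q p, ‖g t q p‖ ≤ C)
    -- sup { ⟨h(t,q,p),p⟩/⟨p,p⟩ : t ∈ [0,T], q ∈ K, ⟨p,p⟩ > d } < 0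
    (hfr : ∃ d > (0 : ℝ), ∃ c < (0 : ℝ), ∀ t ∈ Icc (0 : ℝ) T, ∀ q ∈ K,
      ∀ p : E, d < ⟪p, p⟫ → ⟪h t q p, p⟫ / ⟪p, p⟫ ≤ c) :
    ∃ c > (0 : ℝ), ∀ (t₀ t₁ : ℝ) (q p : ℝ → E),
      Icc t₀ t₁ ⊆ Icc (0 : ℝ) T →
      IsSolution3 f h g q p (Icc t₀ t₁) →
      (∀ t ∈ Icc t₀ t₁, q t ∈ K) →
      ‖p t₀‖ ^ 2 ≤ c →
      ∀ t ∈ Icc t₀ t₁, ‖p t‖ ^ 2 ≤ c := by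
  obtain ⟨A, hA⟩ := hf_bdd
  obtain ⟨B, hB⟩ := hg_bdd
  obtain ⟨d, hd, k, hk, hfr⟩ := hfr
  have hA0 : 0 ≤ A := (norm_nonneg _).trans (hA 0 0 0)
  have hB0 : 0 ≤ B := (norm_nonneg _).trans (hB 0 0 0)
  obtain ⟨R, hR⟩ : ∃ R, R = d + 1 + (A + B) / (-k) := ⟨_, rfl⟩
  have hk' : 0 < -k := by linarith
  have hq0 : 0 ≤ (A + B) / (-k) := by positivity
  have hRd : d + 1 ≤ R := by linarith
  have hR0 : 0 < R := by linarith
  have hRk : A + B < R * (-k) := by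
    rw [← div_lt_iff₀ hk']
    linarith
  refine ⟨R ^ 2, by positivity, ?_⟩
  intro t₀ t₁ q p hI hsol hqK h0
  have hder : ∀ t ∈ Icc t₀ t₁, HasDerivAt (fun t => ‖p t‖ ^ 2)
      (2 * ⟪p t, f t (q t) (p t) + h t (q t) (p t) + g t (q t) (p t)⟫) t :=
    fun t ht => (hsol t ht).2.norm_sq
  intro t ht
  refine image_le_of_deriv_right_lt_deriv_boundary (B := fun _ => R ^ 2) (B' := fun _ => 0)
    (fun t ht => (hder t ht).continuousAt.continuousWithinAt)
    (fun t ht => (hder t (Ico_subset_Icc_self ht)).hasDerivWithinAt) h0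
    (fun x => hasDerivAt_const x _) ?_ ht
  intro x hx hxR
  have hx' := Ico_subset_Icc_self hx
  have hn : ‖p x‖ = R := (sq_eq_sq₀ (norm_nonneg _) hR0.le).1 hxR
  have hpp : ⟪p x, p x⟫ = R ^ 2 := by rw [real_inner_self_eq_norm_sq, hn]
  have h1 := hfr x (hI hx') (q x) (hqK x hx') (p x) (by rw [hpp]; nlinarith)
  rw [hpp, div_le_iff₀ (by positivity), real_inner_comm] at h1
  have h2 := real_inner_le_norm (p x) (f x (q x) (p x))
  have h3 := real_inner_le_norm (p x) (g x (q x) (p x))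
  rw [hn] at h2 h3
  have h4 := mul_le_mul_of_nonneg_left (hA x (q x) (p x)) hR0.le
  have h5 := mul_le_mul_of_nonneg_left (hB x (q x) (p x)) hR0.le
  have h6 := mul_lt_mul_of_pos_left hRk hR0
  rw [inner_add_right, inner_add_right]
  nlinarith
end
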